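/- arXiv:1403.6385 — 4 statements merged into one kernel-verified Lean document; each statement's English description precedes it below -/
import Mathlib

section
/- Assume the additive-noise setting, let α, q ∈ (0,∞), ε ∈ ( (α−1/2)⁺/(1+2α), 2α/(1+2α) ), set p = (1+2α)/(ε(1+2α)+1), let c ∈ [p,∞), c̃ ∈ [0,∞), assume that α − c̃·x^c ≤ x·μ(x) ≤ c̃(1+x²) for all x ∈ (0,∞), and assume E[ (X_0)^{ max{c−1,1} · max{ p, q, (q−p)(1+2α+p)/(1+2α−p) } } ] < ∞. Then ‖ sup_{s,t∈[0,T], s≠t} |(X_t − W_t) − (X_s − W_s)| / |t−s|^{2α/(1+2α)−ε} ‖_{L^q(Ω;ℝ)} ≤ ‖ (∫_0^T |μ(X_r)|^p dr)^{1/p} ‖_{L^q(Ω;ℝ)} < ∞. -/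
open MeasureTheory ProbabilityTheory Filter Set
open scoped ENNReal NNReal


lemma mvt_ball {φ φ1 : ℝ → ℝ} (h : ∀ x, HasDerivAt φ (φ1 x) x) {K z η : ℝ}
    (hb : ∀ x, |x - z| ≤ η → |φ1 x - φ1 z| ≤ K) {a b : ℝ} (ha : |a - z| ≤ η) (hb' : |b - z| ≤ η) :
    |φ b - φ a - φ1 z * (b - a)| ≤ K * |b - a| := by
  have := Convex.norm_image_sub_le_of_norm_hasDerivWithin_le (𝕜 := ℝ) (s := Metric.closedBall z η)
    (f := fun x => φ x - φ1 z * x) (f' := fun x => φ1 x - φ1 z * 1) (C := K) (x := a) (y := b)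
    (fun x _ => ((h x).sub ((hasDerivAt_id x).const_mul (φ1 z))).hasDerivWithinAt)
    (fun x hx => by
      have : |x - z| ≤ η := by simpa [Real.dist_eq] using hx
      simpa using hb x this)
    (convex_closedBall z η) (by simpa [Real.dist_eq] using ha) (by simpa [Real.dist_eq] using hb')
  simp only [Real.norm_eq_abs] at this
  convert this using 2
  ring

lemma lip_of_deriv {φ φ1 : ℝ → ℝ} (h : ∀ x, HasDerivAt φ (φ1 x) x) {K : ℝ}
    (hb : ∀ x, |φ1 x| ≤ K) (a b : ℝ) : |φ b - φ a| ≤ K * |b - a| := by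
  have := Convex.norm_image_sub_le_of_norm_hasDerivWithin_le (𝕜 := ℝ) (s := Set.univ)
    (f := φ) (f' := φ1) (C := K) (x := a) (y := b)
    (fun x _ => (h x).hasDerivWithinAt) (fun x _ => by simpa using hb x) convex_univ trivial trivial
  simpa using this

lemma taylor3 {φ φ1 φ2 φ3 : ℝ → ℝ} (h1 : ∀ x, HasDerivAt φ (φ1 x) x)
    (h2 : ∀ x, HasDerivAt φ1 (φ2 x) x) (h3 : ∀ x, HasDerivAt φ2 (φ3 x) x) {K : ℝ}
    (hb : ∀ x, |φ3 x| ≤ K) (x h : ℝ) :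
    φ (x + h) - φ x ≤ φ1 x * h + 1 / 2 * φ2 x * h ^ 2 + K * |h| ^ 3 := by
  have hK : 0 ≤ K := (abs_nonneg _).trans (hb 0)
  have e2 : ∀ y, |y - x| ≤ |h| → |φ2 y - φ2 x| ≤ K * |h| := fun y hy =>
    (lip_of_deriv h3 hb x y).trans (mul_le_mul_of_nonneg_left hy hK)
  have hx : |x - x| ≤ |h| := by simp
  have e1 : ∀ y, |y - x| ≤ |h| → |(φ1 y - φ2 x * (y - x)) - (φ1 x - φ2 x * (x - x))| ≤ K * |h| ^ 2 := by
    intro y hy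
    have := mvt_ball h2 e2 hx hy
    calc _ = |φ1 y - φ1 x - φ2 x * (y - x)| := by congr 1; ring
      _ ≤ K * |h| * |y - x| := this
      _ ≤ K * |h| * |h| := by gcongr
      _ = _ := by ring
  have hd : ∀ y, HasDerivAt (fun y => φ y - φ2 x * ((y - x) ^ 2 / 2)) (φ1 y - φ2 x * (y - x)) y := by
    intro y
    have := (h1 y).sub (((((hasDerivAt_id y).sub_const x).pow 2).div_const 2).const_mul (φ2 x))
    refine this.congr_deriv ?_
    simp
  have := mvt_ball hd e1 hx (b := x + h) (by simp)
  have := le_of_abs_le this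
  simp at this
  have e3 : |h| ^ 3 = h ^ 2 * |h| := by rw [pow_succ, sq_abs]
  rw [e3]
  linarith

/-- One step bound. -/
lemma one_step {φ φ1 φ2 φ3 g μ : ℝ → ℝ} (h1 : ∀ x, HasDerivAt φ (φ1 x) x)
    (h2 : ∀ x, HasDerivAt φ1 (φ2 x) x) (h3 : ∀ x, HasDerivAt φ2 (φ3 x) x) {K : ℝ}
    (hb2 : ∀ x, |φ2 x| ≤ K) (hb3 : ∀ x, |φ3 x| ≤ K) (hg : Continuous g)
    (hgen : ∀ x, 0 ≤ x → φ1 x * μ x + 1 / 2 * φ2 x + φ x * g x ≤ 0)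
    {x w : ℝ → ℝ} (hx : Continuous x) (hx0 : ∀ t, 0 ≤ x t)
    {s t η : ℝ} (hst : s ≤ t) (hintg : IntervalIntegrable (fun r => μ (x r)) volume s t)
    (hsde : x t - x s = (∫ r in s..t, μ (x r)) + (w t - w s))
    (ho1 : ∀ r ∈ Set.Icc s t, |x r - x s| ≤ η)
    (ho2 : |w t - w s| ≤ η)
    (ho3 : ∀ r ∈ Set.Icc s t,
      |(1 / 2 * φ2 (x r) + φ (x r) * g (x r)) - (1 / 2 * φ2 (x s) + φ (x s) * g (x s))| ≤ η) :
    φ (x t) - φ (x s) + φ (x s) * g (x s) * (t - s) ≤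
      φ1 (x s) * (w t - w s) + 1 / 2 * φ2 (x s) * ((w t - w s) ^ 2 - (t - s))
      + K * |w t - w s| ^ 3 + η * (2 * K * (∫ r in s..t, |μ (x r)|) + (t - s)) := by
  have hη : 0 ≤ η := (abs_nonneg _).trans ho2
  have hK : 0 ≤ K := (abs_nonneg _).trans (hb2 0)
  have c1 : Continuous φ1 := continuous_iff_continuousAt.2 fun y => (h2 y).continuousAt
  have c2 : Continuous φ2 := continuous_iff_continuousAt.2 fun y => (h3 y).continuousAt
  have c0 : Continuous φ := continuous_iff_continuousAt.2 fun y => (h1 y).continuousAt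
  set d := ∫ r in s..t, μ (x r) with hd
  have hdle : |d| ≤ ∫ r in s..t, |μ (x r)| := intervalIntegral.abs_integral_le_integral_abs hst
  -- A
  have hA : φ (x t) - φ (x t - d) ≤ φ1 (x s) * d + K * η * ∫ r in s..t, |μ (x r)| := by
    have := mvt_ball h1 (K := K * η) (z := x s) (η := η)
      (fun y hy => (lip_of_deriv h2 hb2 _ _).trans (by gcongr)) (a := x t - d) (b := x t)
      (by rw [show x t - d - x s = w t - w s by linarith]; exact ho2)
      (ho1 t ⟨hst, le_rfl⟩)
    have := le_of_abs_le this
    simp only [sub_sub_cancel] at this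
    have h' : K * η * |d| ≤ K * η * ∫ r in s..t, |μ (x r)| := by gcongr
    linarith
  have hI1 : IntervalIntegrable (fun r => φ1 (x r) * μ (x r)) volume s t :=
    hintg.continuousOn_mul (c1.comp hx).continuousOn
  have hA2 : φ1 (x s) * d ≤ (∫ r in s..t, φ1 (x r) * μ (x r)) + K * η * ∫ r in s..t, |μ (x r)| := by
    rw [hd, ← intervalIntegral.integral_const_mul, ← intervalIntegral.integral_const_mul,
      ← intervalIntegral.integral_add hI1 (hintg.abs.const_mul _)]
    refine intervalIntegral.integral_mono_on hst (hintg.const_mul _)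
      (hI1.add (hintg.abs.const_mul _)) fun r hr => ?_
    have e : |φ1 (x s) - φ1 (x r)| ≤ K * η := by
      refine (lip_of_deriv h2 hb2 _ _).trans ?_
      rw [abs_sub_comm]
      have := ho1 r hr
      gcongr
    have : (φ1 (x s) - φ1 (x r)) * μ (x r) ≤ K * η * |μ (x r)| := by
      refine (le_abs_self _).trans ?_
      rw [abs_mul]; gcongr
    linarith
  have hB := taylor3 h1 h2 h3 hb3 (x s) (w t - w s)
  rw [show x s + (w t - w s) = x t - d by linarith] at hB
  have cψ : Continuous fun r => 1 / 2 * φ2 (x r) + φ (x r) * g (x r) := by fun_prop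
  have hC : (∫ r in s..t, φ1 (x r) * μ (x r)) + (1 / 2 * φ2 (x s) + φ (x s) * g (x s)) * (t - s)
      ≤ η * (t - s) := by
    have e1 : ∀ c : ℝ, c * (t - s) = ∫ r in s..t, c := fun c => by simp [mul_comm]
    rw [e1, e1, ← intervalIntegral.integral_add hI1 (by simp)]
    refine intervalIntegral.integral_mono_on hst (hI1.add (by simp)) (by simp) fun r hr => ?_
    have := neg_le_of_abs_le (ho3 r hr)
    have := hgen _ (hx0 r)
    linarith
  linarith


/-- absolute moments of the standard normal law -/
noncomputable def gmom (k : ℕ) : ℝ := ∫ x, |x| ^ k ∂(gaussianReal 0 1)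

lemma gmom_nonneg (k : ℕ) : 0 ≤ gmom k := integral_nonneg fun x => by positivity

lemma gauss_abs_moment (Δ : ℝ) (hΔ : 0 ≤ Δ) (k : ℕ) :
    ∫ x, |x| ^ k ∂(gaussianReal 0 Δ.toNNReal) = (√Δ) ^ k * gmom k := by
  have h := gaussianReal_map_const_mul (μ := 0) (v := 1) (√Δ)
  have e : (NNReal.mk (√Δ ^ 2) (sq_nonneg _) * 1 : ℝ≥0) = Δ.toNNReal := by
    ext
    simp [Real.sq_sqrt hΔ, hΔ]
  rw [e, mul_zero] at h
  rw [← h, integral_map (by fun_prop) (by fun_prop), gmom, ← integral_const_mul]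
  congr with x
  rw [abs_mul, mul_pow, abs_of_nonneg (Real.sqrt_nonneg _)]

section
variable {Ω : Type*} [m0 : MeasurableSpace Ω] {P : Measure Ω} [IsProbabilityMeasure P]

lemma law_memLp {U : Ω → ℝ} {Δ : ℝ} (hU : Measurable U)
    (hlaw : Measure.map U P = gaussianReal 0 Δ.toNNReal) (k : ℝ≥0) : MemLp U k P := by
  have := memLp_id_gaussianReal (μ := 0) (v := Δ.toNNReal) k
  rw [← hlaw] at this
  exact (memLp_map_measure_iff (by fun_prop) hU.aemeasurable).1 this

lemma law_int_pow {U : Ω → ℝ} {Δ : ℝ} (hU : Measurable U)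
    (hlaw : Measure.map U P = gaussianReal 0 Δ.toNNReal) (k : ℕ) :
    Integrable (fun ω => |U ω| ^ k) P := by
  have := (law_memLp hU hlaw k).integrable_norm_pow'
  simpa using this

lemma law_int_pow' {U : Ω → ℝ} {Δ : ℝ} (hU : Measurable U)
    (hlaw : Measure.map U P = gaussianReal 0 Δ.toNNReal) (k : ℕ) :
    Integrable (fun ω => U ω ^ k) P := by
  refine (law_int_pow hU hlaw k).mono (by fun_prop) (by simp)

lemma law_abs_moment {U : Ω → ℝ} {Δ : ℝ} (hΔ : 0 ≤ Δ) (hU : Measurable U)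
    (hlaw : Measure.map U P = gaussianReal 0 Δ.toNNReal) (k : ℕ) :
    ∫ ω, |U ω| ^ k ∂P = (√Δ) ^ k * gmom k := by
  rw [← gauss_abs_moment Δ hΔ, ← hlaw, integral_map hU.aemeasurable (by fun_prop)]

lemma law_mean {U : Ω → ℝ} {Δ : ℝ} (hU : Measurable U)
    (hlaw : Measure.map U P = gaussianReal 0 Δ.toNNReal) : ∫ ω, U ω ∂P = 0 := by
  rw [← integral_id_gaussianReal (μ := 0) (v := Δ.toNNReal), ← hlaw,
    integral_map hU.aemeasurable (by fun_prop)]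

lemma law_var {U : Ω → ℝ} {Δ : ℝ} (hΔ : 0 ≤ Δ) (hU : Measurable U)
    (hlaw : Measure.map U P = gaussianReal 0 Δ.toNNReal) : ∫ ω, U ω ^ 2 ∂P = Δ := by
  have h := variance_id_gaussianReal (μ := 0) (v := Δ.toNNReal)
  rw [variance_eq_integral (by fun_prop)] at h
  simp only [id, integral_id_gaussianReal, sub_zero, Real.coe_toNNReal Δ hΔ] at h
  rw [← hlaw, integral_map hU.aemeasurable (by fun_prop)] at h
  exact h

lemma law_cent {U : Ω → ℝ} {Δ : ℝ} (hΔ : 0 ≤ Δ) (hU : Measurable U)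
    (hlaw : Measure.map U P = gaussianReal 0 Δ.toNNReal) :
    ∫ ω, (U ω ^ 2 - Δ) ∂P = 0 := by
  rw [integral_sub (law_int_pow' hU hlaw 2) (integrable_const _), law_var hΔ hU hlaw]
  simp

lemma law_fourth {U : Ω → ℝ} {Δ : ℝ} (hΔ : 0 ≤ Δ) (hU : Measurable U)
    (hlaw : Measure.map U P = gaussianReal 0 Δ.toNNReal) :
    ∫ ω, (U ω ^ 2 - Δ) ^ 2 ∂P ≤ Δ ^ 2 * gmom 4 := by
  have e : ∀ ω, (U ω ^ 2 - Δ) ^ 2 = U ω ^ 4 - 2 * Δ * U ω ^ 2 + Δ ^ 2 := fun ω => by ring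
  have h4 := law_abs_moment hΔ hU hlaw 4
  have e4 : ∀ ω, |U ω| ^ 4 = U ω ^ 4 := fun ω => by
    rw [show (4:ℕ) = 2 * 2 from rfl, pow_mul, sq_abs, pow_mul]
  simp_rw [e4] at h4
  simp_rw [e]
  have i4 := law_int_pow' hU hlaw 4
  have i2 := (law_int_pow' hU hlaw 2).const_mul (2 * Δ)
  have i42 : Integrable (fun ω => U ω ^ 4 - 2 * Δ * U ω ^ 2) P := i4.sub i2
  rw [integral_add i42 (integrable_const _), integral_sub i4 i2, integral_const_mul,
    law_var hΔ hU hlaw, h4]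
  have : √Δ ^ 4 = Δ ^ 2 := by rw [show (4:ℕ) = 2 * 2 from rfl, pow_mul, Real.sq_sqrt hΔ]
  rw [this]
  simp
  nlinarith [sq_nonneg Δ]

lemma indep_zero {𝓖 : MeasurableSpace Ω} (h𝓖 : 𝓖 ≤ m0) {U : Ω → ℝ} (hU : Measurable[m0] U)
    (hind : Indep (MeasurableSpace.comap U inferInstance) 𝓖 P) {h : Ω → ℝ}
    (hh : Measurable[𝓖] h) {ψ : ℝ → ℝ} (hψ : Measurable ψ) :
    ∫ ω, h ω * ψ (U ω) ∂P = (∫ ω, h ω ∂P) * ∫ ω, ψ (U ω) ∂P := by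
  have : IndepFun h (fun ω => ψ (U ω)) P := by
    have h1 : IndepFun (fun ω => ψ (U ω)) h P := by
      rw [IndepFun_iff_Indep]
      refine indep_of_indep_of_le_left (indep_of_indep_of_le_right hind ?_) ?_
      · exact hh.comap_le
      · have : Measurable[MeasurableSpace.comap U inferInstance] (fun ω => ψ (U ω)) :=
          hψ.comp (comap_measurable U)
        exact this.comap_le
    exact h1.symm
  exact this.integral_fun_mul_eq_mul_integral (hh.mono h𝓖 le_rfl).aestronglyMeasurable
    (@Measurable.comp _ _ _ m0 _ _ _ _ hψ hU).aestronglyMeasurable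

theorem disc_mart {N : ℕ} (𝓖 : ℕ → MeasurableSpace Ω) (hmono : ∀ i, 𝓖 i ≤ 𝓖 (i + 1))
    (hle : ∀ i, 𝓖 i ≤ m0) {Δ C : ℝ} (hΔ : 0 ≤ Δ) (U a b : ℕ → Ω → ℝ)
    (hlaw : ∀ i < N, Measure.map (U i) P = gaussianReal 0 Δ.toNNReal)
    (hind : ∀ i < N, Indep (MeasurableSpace.comap (U i) inferInstance) (𝓖 i) P)
    (hU : ∀ i < N, Measurable[𝓖 (i + 1)] (U i))
    (ha : ∀ i < N, Measurable[𝓖 i] (a i)) (hb : ∀ i < N, Measurable[𝓖 i] (b i))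
    (haC : ∀ i < N, ∀ ω, |a i ω| ≤ C) (hbC : ∀ i < N, ∀ ω, |b i ω| ≤ C) (k : ℕ) (hk : k ≤ N) :
    Measurable[𝓖 k] (fun ω => ∑ i ∈ Finset.range k, (a i ω * U i ω + b i ω * (U i ω ^ 2 - Δ))) ∧
    MemLp (fun ω => ∑ i ∈ Finset.range k, (a i ω * U i ω + b i ω * (U i ω ^ 2 - Δ))) 2 P ∧
    ∫ ω, ∑ i ∈ Finset.range k, (a i ω * U i ω + b i ω * (U i ω ^ 2 - Δ)) ∂P = 0 ∧
    ∫ ω, (∑ i ∈ Finset.range k, (a i ω * U i ω + b i ω * (U i ω ^ 2 - Δ))) ^ 2 ∂P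
      ≤ k * (2 * C ^ 2 * (Δ + Δ ^ 2 * gmom 4)) := by
  induction k with
  | zero => simp
  | succ k ih =>
    obtain ⟨m, l2, z, sq⟩ := ih (by omega)
    have hkN : k < N := by omega
    set M : Ω → ℝ := fun ω => ∑ i ∈ Finset.range k, (a i ω * U i ω + b i ω * (U i ω ^ 2 - Δ)) with hM
    set D : Ω → ℝ := fun ω => a k ω * U k ω + b k ω * (U k ω ^ 2 - Δ) with hD
    have eS : (fun ω => ∑ i ∈ Finset.range (k + 1), (a i ω * U i ω + b i ω * (U i ω ^ 2 - Δ)))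
        = fun ω => M ω + D ω := by
      funext ω; rw [Finset.sum_range_succ]
    have hUm : Measurable (U k) := (hU k hkN).mono (hle _) le_rfl
    have ham : Measurable (a k) := (ha k hkN).mono (hle _) le_rfl
    have hbm : Measurable (b k) := (hb k hkN).mono (hle _) le_rfl
    have hDm : Measurable[𝓖 (k + 1)] D := by
      have h1 := (ha k hkN).mono (hmono k) le_rfl
      have h2 := (hb k hkN).mono (hmono k) le_rfl
      have h3 := hU k hkN
      exact (h1.mul h3).add (h2.mul ((h3.pow_const 2).sub_const Δ))
    have lU : MemLp (U k) 2 P := by simpa using law_memLp hUm (hlaw k hkN) 2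
    have lV : MemLp (fun ω => U k ω ^ 2 - Δ) 2 P := by
      rw [memLp_two_iff_integrable_sq (by fun_prop)]
      have e : ∀ ω, (U k ω ^ 2 - Δ) ^ 2 = U k ω ^ 4 - 2 * Δ * U k ω ^ 2 + Δ ^ 2 := fun ω => by ring
      simp_rw [e]
      exact ((law_int_pow' hUm (hlaw k hkN) 4).sub
        ((law_int_pow' hUm (hlaw k hkN) 2).const_mul (2 * Δ))).add (integrable_const _)
    have laU : MemLp (fun ω => a k ω * U k ω) 2 P :=
      MemLp.of_le_mul (c := C) lU (by fun_prop) (ae_of_all _ fun ω => by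
        rw [norm_mul]; exact mul_le_mul_of_nonneg_right (haC k hkN ω) (norm_nonneg _))
    have lbV : MemLp (fun ω => b k ω * (U k ω ^ 2 - Δ)) 2 P :=
      MemLp.of_le_mul (c := C) lV (by fun_prop) (ae_of_all _ fun ω => by
        rw [norm_mul]; exact mul_le_mul_of_nonneg_right (hbC k hkN ω) (norm_nonneg _))
    have lD : MemLp D 2 P := laU.add lbV
    have iaU : Integrable (fun ω => a k ω * U k ω) P := laU.integrable (by norm_num)
    have ibV : Integrable (fun ω => b k ω * (U k ω ^ 2 - Δ)) P := lbV.integrable (by norm_num)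
    have z1 : ∀ h : Ω → ℝ, Measurable[𝓖 k] h → ∫ ω, h ω * U k ω ∂P = 0 := fun h hh => by
      have := indep_zero (hle k) hUm (hind k hkN) hh (ψ := fun x => x) measurable_id
      rw [this, law_mean hUm (hlaw k hkN), mul_zero]
    have z2 : ∀ h : Ω → ℝ, Measurable[𝓖 k] h → ∫ ω, h ω * (U k ω ^ 2 - Δ) ∂P = 0 := fun h hh => by
      have := indep_zero (hle k) hUm (hind k hkN) hh (ψ := fun x => x ^ 2 - Δ) (by fun_prop)
      rw [this, law_cent hΔ hUm (hlaw k hkN), mul_zero]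
    have zD : ∫ ω, D ω ∂P = 0 := by
      rw [hD, integral_add iaU ibV, z1 _ (ha k hkN), z2 _ (hb k hkN), add_zero]
    have zMD : ∫ ω, M ω * D ω ∂P = 0 := by
      have e : ∀ ω, M ω * D ω = (M ω * a k ω) * U k ω + (M ω * b k ω) * (U k ω ^ 2 - Δ) := by
        intro ω; simp only [hD]; ring
      simp_rw [e]
      rw [integral_add, z1 (fun ω => M ω * a k ω) (m.mul (ha k hkN)),
        z2 (fun ω => M ω * b k ω) (m.mul (hb k hkN)), add_zero]
      · simp_rw [mul_assoc]; exact l2.integrable_mul laU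
      · simp_rw [mul_assoc]; exact l2.integrable_mul lbV
    have sqD : ∫ ω, D ω ^ 2 ∂P ≤ 2 * C ^ 2 * (Δ + Δ ^ 2 * gmom 4) := by
      have hpt : ∀ ω, D ω ^ 2 ≤ 2 * C ^ 2 * U k ω ^ 2 + 2 * C ^ 2 * (U k ω ^ 2 - Δ) ^ 2 := by
        intro ω
        have h1 : a k ω ^ 2 ≤ C ^ 2 := sq_le_sq' (neg_le_of_abs_le (haC k hkN ω)) (le_of_abs_le (haC k hkN ω))
        have h2 : b k ω ^ 2 ≤ C ^ 2 := sq_le_sq' (neg_le_of_abs_le (hbC k hkN ω)) (le_of_abs_le (hbC k hkN ω))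
        have h3 := mul_le_mul_of_nonneg_right h1 (sq_nonneg (U k ω))
        have h4 := mul_le_mul_of_nonneg_right h2 (sq_nonneg (U k ω ^ 2 - Δ))
        simp only [hD]
        nlinarith [sq_nonneg (a k ω * U k ω - b k ω * (U k ω ^ 2 - Δ))]
      have i1 := lU.integrable_sq.const_mul (2 * C ^ 2)
      have i2 := lV.integrable_sq.const_mul (2 * C ^ 2)
      refine (integral_mono lD.integrable_sq (i1.add i2) hpt).trans ?_
      have := integral_add i1 i2
      simp only [Pi.add_apply] at this ⊢
      rw [this, integral_const_mul, integral_const_mul, law_var hΔ hUm (hlaw k hkN)]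
      have := law_fourth hΔ hUm (hlaw k hkN)
      have := mul_le_mul_of_nonneg_left this (by positivity : 0 ≤ 2 * C ^ 2)
      linarith
    have eS' : ∀ ω, ∑ i ∈ Finset.range (k + 1), (a i ω * U i ω + b i ω * (U i ω ^ 2 - Δ)) = M ω + D ω :=
      fun ω => congrFun eS ω
    rw [eS]
    simp_rw [eS']
    refine ⟨(m.mono (hmono k) le_rfl).add hDm, l2.add lD, ?_, ?_⟩
    · rw [integral_add (l2.integrable (by norm_num)) (lD.integrable (by norm_num)), zD, add_zero]
      exact z
    · have e : ∀ ω, (M ω + D ω) ^ 2 = M ω ^ 2 + 2 * (M ω * D ω) + D ω ^ 2 := fun ω => by ring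
      simp_rw [e]
      have iMD : Integrable (fun ω => 2 * (M ω * D ω)) P := (l2.integrable_mul lD).const_mul 2
      have iS : Integrable (fun ω => M ω ^ 2 + 2 * (M ω * D ω)) P := l2.integrable_sq.add iMD
      rw [integral_add iS lD.integrable_sq,
        integral_add l2.integrable_sq iMD, integral_const_mul, zMD]
      push_cast
      linarith
end


/-- discrete exponential weight -/
noncomputable def EE (g x : ℝ → ℝ) (Δ : ℝ) (i : ℕ) : ℝ :=
  Real.exp (∑ j ∈ Finset.range i, g (x (j * Δ)) * Δ)

lemma EE_pos (g x : ℝ → ℝ) (Δ : ℝ) (i : ℕ) : 0 < EE g x Δ i := Real.exp_pos _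

lemma EE_le {g x : ℝ → ℝ} {Δ K T : ℝ} (hΔ : 0 ≤ Δ) (hK : 0 ≤ K) (hg : ∀ y, g y ≤ K) {i : ℕ}
    (hi : i * Δ ≤ T) : EE g x Δ i ≤ Real.exp (K * T) := by
  refine Real.exp_le_exp.2 ?_
  calc _ ≤ ∑ j ∈ Finset.range i, K * Δ := Finset.sum_le_sum fun j _ => by gcongr; exact hg _
    _ = K * (i * Δ) := by simp; ring
    _ ≤ _ := by gcongr

lemma path_bound {φ φ1 φ2 φ3 g μ : ℝ → ℝ} (h1 : ∀ x, HasDerivAt φ (φ1 x) x)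
    (h2 : ∀ x, HasDerivAt φ1 (φ2 x) x) (h3 : ∀ x, HasDerivAt φ2 (φ3 x) x) {K : ℝ}
    (hφ : ∀ x, 0 ≤ φ x)
    (hb2 : ∀ x, |φ2 x| ≤ K) (hb3 : ∀ x, |φ3 x| ≤ K) (hg : Continuous g) (hgK : ∀ x, g x ≤ K)
    (hgen : ∀ x, 0 ≤ x → φ1 x * μ x + 1 / 2 * φ2 x + φ x * g x ≤ 0)
    {x w : ℝ → ℝ} (hx : Continuous x) (hx0 : ∀ t, 0 ≤ x t)
    {T Δ η : ℝ} {N : ℕ} (hΔ : 0 ≤ Δ) (hNΔ : N * Δ = T)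
    (hintg : IntervalIntegrable (fun r => μ (x r)) volume 0 T)
    (hsde : ∀ t ∈ Set.Icc 0 T, x t = x 0 + (∫ r in (0:ℝ)..t, μ (x r)) + w t)
    (ho1 : ∀ s ∈ Set.Icc 0 T, ∀ r ∈ Set.Icc 0 T, |r - s| ≤ Δ → |x r - x s| ≤ η)
    (ho2 : ∀ s ∈ Set.Icc 0 T, ∀ r ∈ Set.Icc 0 T, |r - s| ≤ Δ → |w r - w s| ≤ η)
    (ho3 : ∀ s ∈ Set.Icc 0 T, ∀ r ∈ Set.Icc 0 T, |r - s| ≤ Δ →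
      |(1 / 2 * φ2 (x r) + φ (x r) * g (x r)) - (1 / 2 * φ2 (x s) + φ (x s) * g (x s))| ≤ η)
    (k : ℕ) (hk : k ≤ N) :
    φ (x (k * Δ)) * EE g x Δ k - φ (x 0) ≤
      ∑ i ∈ Finset.range k, ((EE g x Δ (i + 1) * φ1 (x (i * Δ))) * (w (↑(i + 1) * Δ) - w (i * Δ))
        + (EE g x Δ (i + 1) * (1 / 2 * φ2 (x (i * Δ)))) * ((w (↑(i + 1) * Δ) - w (i * Δ)) ^ 2 - Δ))
      + Real.exp (K * T) * K * ∑ i ∈ Finset.range k, |w (↑(i + 1) * Δ) - w (i * Δ)| ^ 3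
      + Real.exp (K * T) * (η * (2 * K * (∫ r in (0:ℝ)..(k * Δ), |μ (x r)|) + k * Δ)) := by
  have hK : 0 ≤ K := (abs_nonneg _).trans (hb2 0)
  induction k with
  | zero => simp [EE]
  | succ k ih =>
    specialize ih (by omega)
    have hT : ∀ j : ℕ, j ≤ N → (j:ℝ) * Δ ∈ Set.Icc 0 T := fun j hj => by
      refine ⟨by positivity, ?_⟩
      rw [← hNΔ]
      have : (j:ℝ) ≤ N := by exact_mod_cast hj
      gcongr
    have hs := hT k (by omega)
    have ht := hT (k + 1) hk
    have hdiff : ((k + 1 : ℕ) : ℝ) * Δ - k * Δ = Δ := by push_cast; ring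
    set s := (k : ℝ) * Δ with hsdef
    set t := ((k + 1 : ℕ) : ℝ) * Δ with htdef
    have hst : s ≤ t := by linarith
    have hintg' : ∀ a ∈ Set.Icc 0 T, ∀ b ∈ Set.Icc 0 T, IntervalIntegrable (fun r => μ (x r)) volume a b := by
      intro a ha b hb
      have h0T : (0:ℝ) ≤ T := ha.1.trans ha.2
      refine hintg.mono_set ?_
      rw [Set.uIcc_of_le h0T]
      exact Set.uIcc_subset_Icc ha hb
    have h00 : (0:ℝ) ∈ Set.Icc 0 T := ⟨le_rfl, hs.1.trans hs.2⟩
    have i1 := hintg' 0 h00 s hs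
    have i2 := hintg' s hs t ht
    have hη : 0 ≤ η := by
      have := ho2 s hs s hs (by simpa using hΔ)
      exact (abs_nonneg _).trans this
    have hstep := one_step h1 h2 h3 hb2 hb3 hg hgen hx hx0 (w := w) (η := η) hst i2
      (by
        rw [hsde t ht, hsde s hs, ← intervalIntegral.integral_add_adjacent_intervals i1 i2]; ring)
      (fun r hr => ho1 s hs r ⟨hs.1.trans hr.1, hr.2.trans ht.2⟩ (by
        rw [abs_of_nonneg (by linarith [hr.1])]; linarith [hr.2]))
      (ho2 s hs t ht (by rw [hdiff, abs_of_nonneg hΔ]))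
      (fun r hr => ho3 s hs r ⟨hs.1.trans hr.1, hr.2.trans ht.2⟩ (by
        rw [abs_of_nonneg (by linarith [hr.1])]; linarith [hr.2]))
    rw [hdiff] at hstep
    have hEpos := EE_pos g x Δ (k + 1)
    have hEle : EE g x Δ (k + 1) ≤ Real.exp (K * T) := EE_le hΔ hK hgK ht.2
    have hEE : EE g x Δ (k + 1) - EE g x Δ k ≤ EE g x Δ (k + 1) * (g (x s) * Δ) := by
      have e : EE g x Δ (k + 1) = EE g x Δ k * Real.exp (g (x s) * Δ) := by
        rw [EE, EE, Finset.sum_range_succ, Real.exp_add]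
      have e' : EE g x Δ k = EE g x Δ (k + 1) * Real.exp (-(g (x s) * Δ)) := by
        rw [e, mul_assoc, ← Real.exp_add]; simp
      have := Real.add_one_le_exp (-(g (x s) * Δ))
      have := mul_le_mul_of_nonneg_left this hEpos.le
      rw [← e'] at this
      linarith
    have hmul := mul_le_mul_of_nonneg_left hstep hEpos.le
    have hEE' := mul_le_mul_of_nonneg_left hEE (hφ (x s))
    rw [Finset.sum_range_succ, Finset.sum_range_succ]
    have i1' : IntervalIntegrable (fun r => |μ (x r)|) volume 0 s := i1.abs
    have i2' : IntervalIntegrable (fun r => |μ (x r)|) volume s t := i2.abs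
    rw [← intervalIntegral.integral_add_adjacent_intervals i1' i2']
    have hJ : 0 ≤ ∫ r in s..t, |μ (x r)| :=
      intervalIntegral.integral_nonneg hst fun _ _ => abs_nonneg _
    have r1 : EE g x Δ (k + 1) * (K * |w t - w s| ^ 3) ≤ Real.exp (K * T) * (K * |w t - w s| ^ 3) := by
      gcongr
    have r2 : EE g x Δ (k + 1) * (η * (2 * K * (∫ r in s..t, |μ (x r)|) + Δ))
        ≤ Real.exp (K * T) * (η * (2 * K * (∫ r in s..t, |μ (x r)|) + Δ)) := by
      gcongr
    have ht' : t = s + Δ := by linarith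
    have e3 : Real.exp (K * T) * (η * (2 * K * ((∫ r in (0:ℝ)..s, |μ (x r)|) + ∫ r in s..t, |μ (x r)|) + t))
      = Real.exp (K * T) * (η * (2 * K * (∫ r in (0:ℝ)..s, |μ (x r)|) + s))
       + Real.exp (K * T) * (η * (2 * K * (∫ r in s..t, |μ (x r)|) + Δ)) := by
      rw [ht']; ring
    rw [e3]
    have e4 : EE g x Δ (k + 1) * (φ (x t) - φ (x s) + φ (x s) * g (x s) * Δ) =
      φ (x t) * EE g x Δ (k + 1) - φ (x s) * EE g x Δ (k + 1)
        + φ (x s) * (EE g x Δ (k + 1) * (g (x s) * Δ)) := by ring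
    rw [e4] at hmul
    linarith

/-- Riemann sums along a uniform grid. -/
lemma riemann_err {h : ℝ → ℝ} (hh : Continuous h) {T Δ η : ℝ} {N : ℕ} (hΔ : 0 ≤ Δ)
    (hNΔ : N * Δ = T)
    (ho : ∀ s ∈ Set.Icc 0 T, ∀ r ∈ Set.Icc 0 T, |r - s| ≤ Δ → |h r - h s| ≤ η) :
    |(∫ r in (0:ℝ)..T, h r) - ∑ i ∈ Finset.range N, h (i * Δ) * Δ| ≤ η * T := by
  have e : ∫ r in (0:ℝ)..T, h r = ∑ i ∈ Finset.range N, ∫ r in ((i:ℝ) * Δ)..(((i + 1 : ℕ):ℝ) * Δ), h r := by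
    rw [intervalIntegral.sum_integral_adjacent_intervals (a := fun i : ℕ => (i:ℝ) * Δ)
      (fun k _ => hh.intervalIntegrable _ _)]
    simp [hNΔ]
  rw [e, ← Finset.sum_sub_distrib]
  refine (Finset.abs_sum_le_sum_abs _ _).trans ?_
  calc _ ≤ ∑ i ∈ Finset.range N, η * Δ := ?_
    _ = η * T := by rw [← hNΔ]; simp; ring
  refine Finset.sum_le_sum fun i hi => ?_
  have hi : i < N := Finset.mem_range.1 hi
  have hd : ((i + 1 : ℕ) : ℝ) * Δ - i * Δ = Δ := by push_cast; ring
  have e2 : h (i * Δ) * Δ = ∫ r in ((i:ℝ) * Δ)..(((i + 1 : ℕ):ℝ) * Δ), h (i * Δ) := by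
    rw [intervalIntegral.integral_const, hd]; simp [mul_comm]
  rw [e2, ← intervalIntegral.integral_sub (hh.intervalIntegrable _ _) (by simp)]
  have := intervalIntegral.norm_integral_le_of_norm_le_const (a := (i:ℝ) * Δ) (b := ((i + 1 : ℕ):ℝ) * Δ)
    (f := fun r => h r - h (i * Δ)) (C := η) (fun r hr => by
      rw [Set.uIoc_of_le (by linarith)] at hr
      have hiN : ((i + 1 : ℕ) : ℝ) * Δ ≤ T := by
        rw [← hNΔ]
        have : ((i + 1 : ℕ) : ℝ) ≤ N := by exact_mod_cast hi
        gcongr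
      have h0 : 0 ≤ (i:ℝ) * Δ := by positivity
      refine ho _ ⟨h0, by linarith⟩ r ⟨by linarith [hr.1], by linarith [hr.2]⟩ ?_
      rw [abs_of_nonneg (by linarith [hr.1])]
      linarith [hr.2])
  rw [hd, abs_of_nonneg hΔ] at this
  simpa using this

lemma unif_mod {h : ℝ → ℝ} (hh : Continuous h) (T : ℝ) {η : ℝ} (hη : 0 < η) :
    ∀ᶠ N : ℕ in atTop, ∀ s ∈ Set.Icc 0 T, ∀ r ∈ Set.Icc 0 T, |r - s| ≤ T / N → |h r - h s| ≤ η := by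
  have hu := (isCompact_Icc (a := (0:ℝ)) (b := T)).uniformContinuousOn_of_continuous hh.continuousOn
  rw [Metric.uniformContinuousOn_iff] at hu
  obtain ⟨δ, hδ, H⟩ := hu η hη
  have : Tendsto (fun N : ℕ => T / (N:ℝ)) atTop (nhds 0) := tendsto_const_div_atTop_nhds_zero_nat T
  filter_upwards [this.eventually (gt_mem_nhds hδ)] with N hN s hs r hr hrs
  have := H r hr s hs (by rw [Real.dist_eq]; linarith)
  rw [Real.dist_eq] at this
  exact this.le


/-- The additive noise setting with paths extended continuously to all real times. -/
structure BSetup {Ω : Type*} [m0 : MeasurableSpace Ω] (P : Measure Ω) (T : ℝ)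
    (F : ℝ → MeasurableSpace Ω) (μ : ℝ → ℝ) (W X : ℝ → Ω → ℝ) : Prop where
  T0 : 0 ≤ T
  mono : ∀ s t : ℝ, s ≤ t → F s ≤ F t
  le : ∀ t : ℝ, F t ≤ m0
  mumeas : Measurable μ
  Wadapt : ∀ t ∈ Set.Icc (0:ℝ) T, Measurable[F t] (W t)
  Wcont : ∀ ω, Continuous (fun t => W t ω)
  law : ∀ s t : ℝ, 0 ≤ s → s ≤ t → t ≤ T →
      Measure.map (fun ω => W t ω - W s ω) P = gaussianReal 0 (Real.toNNReal (t - s))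
  indep : ∀ s t : ℝ, 0 ≤ s → s ≤ t → t ≤ T →
      Indep (MeasurableSpace.comap (fun ω => W t ω - W s ω) inferInstance) (F s) P
  Xnonneg : ∀ t ω, 0 ≤ X t ω
  Xadapt : ∀ t ∈ Set.Icc (0:ℝ) T, Measurable[F t] (X t)
  Xcont : ∀ ω, Continuous (fun t => X t ω)
  Xmeas : ∀ t, Measurable (X t)
  Xint : ∀ᵐ ω ∂P, IntervalIntegrable (fun s => μ (X s ω)) volume 0 T
  sde : ∀ᵐ ω ∂P, ∀ t ∈ Set.Icc (0:ℝ) T, X t ω = X 0 ω + (∫ s in (0:ℝ)..t, μ (X s ω)) + W t ω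

section
variable {Ω : Type*} [m0 : MeasurableSpace Ω] {P : Measure Ω} [IsProbabilityMeasure P]
  {T : ℝ} {F : ℝ → MeasurableSpace Ω} {μ : ℝ → ℝ} {W X : ℝ → Ω → ℝ}

lemma BSetup.restrict (S : BSetup P T F μ W X) {t : ℝ} (ht : t ∈ Set.Icc 0 T) :
    BSetup P t F μ W X where
  T0 := ht.1
  mono := S.mono
  le := S.le
  mumeas := S.mumeas
  Wadapt := fun s hs => S.Wadapt s ⟨hs.1, hs.2.trans ht.2⟩
  Wcont := S.Wcont
  law := fun a b h1 h2 h3 => S.law a b h1 h2 (h3.trans ht.2)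
  indep := fun a b h1 h2 h3 => S.indep a b h1 h2 (h3.trans ht.2)
  Xnonneg := S.Xnonneg
  Xadapt := fun s hs => S.Xadapt s ⟨hs.1, hs.2.trans ht.2⟩
  Xcont := S.Xcont
  Xmeas := S.Xmeas
  Xint := by
    filter_upwards [S.Xint] with ω h
    refine h.mono_set ?_
    rw [Set.uIcc_of_le ht.1, Set.uIcc_of_le S.T0]
    exact Set.Icc_subset_Icc le_rfl ht.2
  sde := by
    filter_upwards [S.sde] with ω h s hs using h s ⟨hs.1, hs.2.trans ht.2⟩

theorem ito_super (S : BSetup P T F μ W X)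
    {φ φ1 φ2 φ3 g : ℝ → ℝ} (h1 : ∀ x, HasDerivAt φ (φ1 x) x)
    (h2 : ∀ x, HasDerivAt φ1 (φ2 x) x) (h3 : ∀ x, HasDerivAt φ2 (φ3 x) x) {K : ℝ}
    (hφ : ∀ x, 0 ≤ φ x) (hb0 : ∀ x, φ x ≤ K) (hb1 : ∀ x, |φ1 x| ≤ K)
    (hb2 : ∀ x, |φ2 x| ≤ K) (hb3 : ∀ x, |φ3 x| ≤ K) (hg : Continuous g) (hgK : ∀ x, g x ≤ K)
    (hgen : ∀ x, 0 ≤ x → φ1 x * μ x + 1 / 2 * φ2 x + φ x * g x ≤ 0) :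
    Integrable (fun ω => φ (X T ω) * Real.exp (∫ r in (0:ℝ)..T, g (X r ω))) P ∧
    ∫ ω, φ (X T ω) * Real.exp (∫ r in (0:ℝ)..T, g (X r ω)) ∂P ≤ ∫ ω, φ (X 0 ω) ∂P := by
  have hT := S.T0
  have hK : 0 ≤ K := (abs_nonneg _).trans (hb2 0)
  have c1 : Continuous φ1 := continuous_iff_continuousAt.2 fun y => (h2 y).continuousAt
  have c2 : Continuous φ2 := continuous_iff_continuousAt.2 fun y => (h3 y).continuousAt
  have c0 : Continuous φ := continuous_iff_continuousAt.2 fun y => (h1 y).continuousAt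
  have m1 := c1.measurable
  have m2 := c2.measurable
  have m0' := c0.measurable
  have mg := hg.measurable
  set B := Real.exp (K * T) with hB
  have hB0 : 0 < B := Real.exp_pos _
  let D : ℕ → ℝ := fun N => T / N
  have hD0 : ∀ N, 0 ≤ D N := fun N => by positivity
  let E : ℕ → ℕ → Ω → ℝ := fun N i ω => EE g (fun r => X r ω) (D N) i
  let U : ℕ → ℕ → Ω → ℝ := fun N i ω => W (↑(i + 1) * D N) ω - W (i * D N) ω
  let a : ℕ → ℕ → Ω → ℝ := fun N i ω => E N (i + 1) ω * φ1 (X (i * D N) ω)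
  let b : ℕ → ℕ → Ω → ℝ := fun N i ω => E N (i + 1) ω * (1 / 2 * φ2 (X (i * D N) ω))
  let M : ℕ → Ω → ℝ := fun N ω =>
    ∑ i ∈ Finset.range N, (a N i ω * U N i ω + b N i ω * (U N i ω ^ 2 - D N))
  let Q : ℕ → Ω → ℝ := fun N ω => ∑ i ∈ Finset.range N, |U N i ω| ^ 3
  let Z : ℕ → Ω → ℝ := fun N ω => φ (X T ω) * E N N ω
  let Zl : Ω → ℝ := fun ω => φ (X T ω) * Real.exp (∫ r in (0:ℝ)..T, g (X r ω))
  let Z0 : Ω → ℝ := fun ω => φ (X 0 ω)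
  have hND : ∀ N : ℕ, 1 ≤ N → N * D N = T := fun N hN => by
    have : (N:ℝ) ≠ 0 := by positivity
    simp only [D]; field_simp
  have hmem : ∀ N : ℕ, 1 ≤ N → ∀ i ≤ N, (i:ℝ) * D N ∈ Set.Icc 0 T := fun N hN i hi => by
    refine ⟨mul_nonneg (by positivity) (hD0 N), ?_⟩
    rw [← hND N hN]
    have : (i:ℝ) ≤ N := by exact_mod_cast hi
    have := hD0 N
    gcongr
  have hdiff : ∀ N i : ℕ, ((i + 1 : ℕ) : ℝ) * D N - i * D N = D N := fun N i => by push_cast; ring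
  have hmonoD : ∀ N i : ℕ, (i:ℝ) * D N ≤ ((i + 1 : ℕ) : ℝ) * D N := fun N i => by
    linarith [hD0 N, hdiff N i]
  -- measurability
  have mE : ∀ N : ℕ, 1 ≤ N → ∀ i < N, Measurable[F (i * D N)] (E N (i + 1)) := by
    intro N hN i hi
    refine Real.measurable_exp.comp ?_
    refine Finset.measurable_fun_sum (m := F (i * D N)) _ fun j hj => ?_
    have hj : j ≤ i := by have := Finset.mem_range.1 hj; omega
    have hjX := S.Xadapt _ (hmem N hN j (by omega))
    have hji : (j:ℝ) * D N ≤ i * D N := by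
      have : (j:ℝ) ≤ i := by exact_mod_cast hj
      have := hD0 N
      gcongr
    exact (mg.comp (hjX.mono (S.mono _ _ hji) le_rfl)).mul_const _
  have mE' : ∀ N i, Measurable (E N i) := by
    intro N i
    refine Real.measurable_exp.comp ?_
    exact Finset.measurable_fun_sum _ fun j hj => (mg.comp (S.Xmeas _)).mul_const _
  have hE0 : ∀ N i ω, 0 < E N i ω := fun N i ω => EE_pos _ _ _ _
  have hEB : ∀ N : ℕ, 1 ≤ N → ∀ i ≤ N, ∀ ω, E N i ω ≤ B := fun N hN i hi ω =>
    EE_le (hD0 N) hK hgK (hmem N hN i hi).2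
  have hmart := fun (N : ℕ) (hN : 1 ≤ N) => disc_mart (P := P) (N := N) (fun i => F (i * D N))
    (fun i => S.mono _ _ (hmonoD N i)) (fun i => S.le _) (hD0 N) (C := B * K) (U N) (a N) (b N)
    (fun i hi => by
      have := S.law (i * D N) (((i + 1 : ℕ):ℝ) * D N) (hmem N hN i hi.le).1 (hmonoD N i)
        (hmem N hN (i + 1) hi).2
      rw [hdiff] at this
      exact this)
    (fun i hi => S.indep _ _ (hmem N hN i hi.le).1 (hmonoD N i) (hmem N hN (i + 1) hi).2)
    (fun i hi => (S.Wadapt _ (hmem N hN (i + 1) hi)).sub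
      ((S.Wadapt _ (hmem N hN i hi.le)).mono (S.mono _ _ (hmonoD N i)) le_rfl))
    (fun i hi => (mE N hN i hi).mul (m1.comp (S.Xadapt _ (hmem N hN i hi.le))))
    (fun i hi => (mE N hN i hi).mul ((m2.comp (S.Xadapt _ (hmem N hN i hi.le))).const_mul _))
    (fun i hi ω => by
      simp only [a]
      rw [abs_mul, abs_of_pos (hE0 _ _ _)]
      exact mul_le_mul (hEB N hN (i + 1) hi ω) (hb1 _) (abs_nonneg _) hB0.le)
    (fun i hi ω => by
      simp only [b]
      rw [abs_mul, abs_of_pos (hE0 _ _ _)]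
      refine mul_le_mul (hEB N hN (i + 1) hi ω) ?_ (abs_nonneg _) hB0.le
      rw [abs_mul, abs_of_pos (by norm_num : (0:ℝ) < 1 / 2)]
      linarith [hb2 (X (i * D N) ω), abs_nonneg (φ2 (X (i * D N) ω))]) N le_rfl
  let L : ℝ := 2 * (B * K) ^ 2 * (T + T ^ 2 * gmom 4)
  have hML : ∀ N : ℕ, 1 ≤ N → ∫ ω, M N ω ^ 2 ∂P ≤ L := fun N hN => by
    refine (hmart N hN).2.2.2.trans ?_
    have h4 := gmom_nonneg 4
    have hDT : D N ≤ T := by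
      have := (hmem N hN 1 hN).2
      simpa using this
    have e : (N:ℝ) * (2 * (B * K) ^ 2 * (D N + D N ^ 2 * gmom 4)) =
      2 * (B * K) ^ 2 * ((N * D N) + (N * D N) * D N * gmom 4) := by ring
    rw [e, hND N hN]
    have : T * D N ≤ T ^ 2 := by rw [sq]; gcongr
    simp only [L]
    gcongr
  -- measurability of increments
  have mU : ∀ N : ℕ, 1 ≤ N → ∀ i < N, Measurable (U N i) := fun N hN i hi =>
    ((S.Wadapt _ (hmem N hN (i + 1) hi)).mono (S.le _) le_rfl).sub
      ((S.Wadapt _ (hmem N hN i hi.le)).mono (S.le _) le_rfl)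
  have lawU : ∀ N : ℕ, 1 ≤ N → ∀ i < N, Measure.map (U N i) P = gaussianReal 0 (D N).toNNReal :=
    fun N hN i hi => by
      have := S.law (i * D N) (((i + 1 : ℕ):ℝ) * D N) (hmem N hN i hi.le).1 (hmonoD N i)
        (hmem N hN (i + 1) hi).2
      rw [hdiff] at this
      exact this
  have iQ : ∀ N : ℕ, 1 ≤ N → Integrable (Q N) P := fun N hN =>
    integrable_finsetSum _ fun i hi =>
      law_int_pow (mU N hN i (Finset.mem_range.1 hi)) (lawU N hN i (Finset.mem_range.1 hi)) 3
  have eQ : ∀ N : ℕ, 1 ≤ N → ∫ ω, Q N ω ∂P = T * √(D N) * gmom 3 := fun N hN => by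
    simp only [Q]
    rw [integral_finsetSum _ fun i hi =>
      law_int_pow (mU N hN i (Finset.mem_range.1 hi)) (lawU N hN i (Finset.mem_range.1 hi)) 3]
    rw [Finset.sum_congr rfl fun i hi => law_abs_moment (hD0 N) (mU N hN i (Finset.mem_range.1 hi))
      (lawU N hN i (Finset.mem_range.1 hi)) 3]
    rw [Finset.sum_const, Finset.card_range, nsmul_eq_mul, pow_succ, Real.sq_sqrt (hD0 N), ← hND N hN]
    ring
  have mQ : ∀ N : ℕ, 1 ≤ N → Measurable (Q N) := fun N hN =>
    Finset.measurable_fun_sum _ fun i hi =>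
      ((continuous_abs.measurable.comp (mU N hN i (Finset.mem_range.1 hi))).pow_const 3)
  have mZ : ∀ N, Measurable (Z N) := fun N => (m0'.comp (S.Xmeas T)).mul (mE' N N)
  have mZ0 : Measurable Z0 := m0'.comp (S.Xmeas 0)
  have bZ : ∀ N : ℕ, 1 ≤ N → ∀ ω, |Z N ω| ≤ K * B := fun N hN ω => by
    simp only [Z]
    rw [abs_of_nonneg (mul_nonneg (hφ _) (hE0 _ _ _).le)]
    exact mul_le_mul (hb0 _) (hEB N hN N le_rfl ω) (hE0 _ _ _).le hK
  have bZ0 : ∀ ω, |Z0 ω| ≤ K := fun ω => by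
    simp only [Z0]; rw [abs_of_nonneg (hφ _)]; exact hb0 _
  have iZ : ∀ N : ℕ, 1 ≤ N → Integrable (Z N) P := fun N hN =>
    Integrable.of_bound (mZ N).aestronglyMeasurable (K * B) (ae_of_all _ (bZ N hN))
  have iZ0 : Integrable Z0 P := Integrable.of_bound mZ0.aestronglyMeasurable K (ae_of_all _ bZ0)
  have lM : ∀ N : ℕ, 1 ≤ N → MemLp (M N) 2 P := fun N hN => (hmart N hN).2.1
  have mM : ∀ N : ℕ, 1 ≤ N → Measurable (M N) := fun N hN => (hmart N hN).1.mono (S.le _) le_rfl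
  have zM : ∀ N : ℕ, 1 ≤ N → ∫ ω, M N ω ∂P = 0 := fun N hN => (hmart N hN).2.2.1
  let V : ℕ → Ω → ℝ := fun N ω => Z N ω - Z0 ω - M N ω - B * K * Q N ω
  -- pathwise limits
  have hZlim : ∀ ω, Tendsto (fun N => Z N ω) atTop (nhds (Zl ω)) := by
    intro ω
    refine Tendsto.const_mul _ ((Real.continuous_exp.tendsto _).comp ?_)
    rw [Metric.tendsto_atTop']
    intro e he
    have hev := unif_mod (hg.comp (S.Xcont ω)) T (η := e / (2 * (T + 1))) (by positivity)
    obtain ⟨N0, hN0⟩ := eventually_atTop.1 (hev.and (eventually_ge_atTop 1))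
    refine ⟨N0, fun N hN => ?_⟩
    obtain ⟨hh, hN1⟩ := hN0 N hN.le
    have := riemann_err (hg.comp (S.Xcont ω)) (hD0 N) (hND N hN1) hh
    rw [Real.dist_eq, abs_sub_comm]
    refine lt_of_le_of_lt this ?_
    rw [div_mul_eq_mul_div, div_lt_iff₀ (by positivity)]
    nlinarith
  have hVlim : ∀ᵐ ω ∂P, ∀ e > 0, ∀ᶠ N in atTop, V N ω ≤ e := by
    filter_upwards [S.Xint, S.sde] with ω hi hs e he
    set J := 2 * K * (∫ r in (0:ℝ)..T, |μ (X r ω)|) + T with hJ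
    have hJ0 : 0 ≤ J := by
      have : 0 ≤ ∫ r in (0:ℝ)..T, |μ (X r ω)| :=
        intervalIntegral.integral_nonneg hT fun _ _ => abs_nonneg _
      positivity
    set η := e / (B * (J + 1)) with hη
    have hη0 : 0 < η := by positivity
    have hX := S.Xcont ω
    have cψ : Continuous fun r => 1 / 2 * φ2 (X r ω) + φ (X r ω) * g (X r ω) := by fun_prop
    filter_upwards [unif_mod hX T hη0, unif_mod (S.Wcont ω) T hη0, unif_mod cψ T hη0,
      eventually_ge_atTop 1] with N o1 o2 o3 hN
    have := path_bound h1 h2 h3 hφ hb2 hb3 hg hgK hgen hX (fun t => S.Xnonneg t ω)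
      (w := fun t => W t ω) (hD0 N) (hND N hN) hi hs o1 o2 o3 N le_rfl
    rw [hND N hN] at this
    have hBη : B * (η * J) ≤ e := by
      have : B * (η * J) = e * (J / (J + 1)) := by rw [hη]; field_simp
      rw [this]
      have : J / (J + 1) ≤ 1 := by rw [div_le_one (by positivity)]; linarith
      nlinarith
    simp only [V, Z, Z0, M, Q, a, b, U, E]
    linarith
  have hVp : ∀ R : ℝ, 0 < R →
      Tendsto (fun N => ∫ ω, min (max (V N ω) 0) R ∂P) atTop (nhds 0) := by
    intro R hR
    rw [show nhds (0:ℝ) = nhds (∫ ω : Ω, (0:ℝ) ∂P) by simp]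
    refine tendsto_integral_filter_of_dominated_convergence (fun _ => R) ?_ ?_ (integrable_const _) ?_
    · filter_upwards [eventually_ge_atTop 1] with N hN
      have := mM N hN
      have := mQ N hN
      have := mZ N
      exact Measurable.aestronglyMeasurable (by fun_prop)
    · refine Eventually.of_forall fun N => ae_of_all _ fun ω => ?_
      rw [Real.norm_eq_abs, abs_of_nonneg (le_min (le_max_right _ _) hR.le)]
      exact min_le_right _ _
    · filter_upwards [hVlim] with ω hω
      rw [Metric.tendsto_atTop']
      intro e he
      obtain ⟨N0, hN0⟩ := eventually_atTop.1 (hω (e / 2) (by positivity))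
      refine ⟨N0, fun N hN => ?_⟩
      rw [Real.dist_eq, sub_zero, abs_of_nonneg (le_min (le_max_right _ _) hR.le)]
      refine lt_of_le_of_lt (min_le_left _ _) ?_
      exact max_lt (by linarith [hN0 N hN.le]) he
  have hQlim : Tendsto (fun N => B * K * (T * √(D N) * gmom 3)) atTop (nhds 0) := by
    have h0 : Tendsto D atTop (nhds 0) := tendsto_const_div_atTop_nhds_zero_nat T
    have := (((Real.continuous_sqrt.tendsto 0).comp h0).const_mul T).mul_const (gmom 3)
    have := this.const_mul (B * K)
    simpa using this
  have mZl : AEStronglyMeasurable Zl P :=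
    aestronglyMeasurable_of_tendsto_ae atTop (fun N => (mZ N).aestronglyMeasurable)
      (ae_of_all _ hZlim)
  have bZl : ∀ ω, |Zl ω| ≤ K * B := fun ω => by
    refine le_of_tendsto ((hZlim ω).abs) ?_
    filter_upwards [eventually_ge_atTop 1] with N hN using bZ N hN ω
  refine ⟨Integrable.of_bound mZl (K * B) (ae_of_all _ bZl), ?_⟩
  have hIlim : Tendsto (fun N => ∫ ω, Z N ω ∂P) atTop (nhds (∫ ω, Zl ω ∂P)) := by
    refine tendsto_integral_filter_of_dominated_convergence (fun _ => K * B) ?_ ?_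
      (integrable_const _) (ae_of_all _ hZlim)
    · exact Eventually.of_forall fun N => (mZ N).aestronglyMeasurable
    · filter_upwards [eventually_ge_atTop 1] with N hN using ae_of_all _ (bZ N hN)
  let L' : ℝ := 2 * (K * B + K) ^ 2 + 2 * L
  have key : ∀ R : ℝ, 0 < R → ∫ ω, Zl ω ∂P - ∫ ω, Z0 ω ∂P ≤ L' / R := by
    intro R hR
    have hlim : Tendsto (fun N => B * K * (T * √(D N) * gmom 3)
        + ∫ ω, min (max (V N ω) 0) R ∂P + L' / R) atTop (nhds (0 + 0 + L' / R)) :=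
      (hQlim.add (hVp R hR)).add_const _
    rw [zero_add, zero_add] at hlim
    refine le_of_tendsto_of_tendsto (hIlim.sub_const _) hlim ?_
    filter_upwards [eventually_ge_atTop 1] with N hN
    have iM := (lM N hN).integrable (by norm_num : (1:ℝ≥0∞) ≤ 2)
    have iM2 := (lM N hN).integrable_sq
    have iV : Integrable (fun ω => min (max (V N ω) 0) R) P := by
      refine Integrable.of_bound (C := R) ?_ (ae_of_all _ fun ω => ?_)
      · have := mM N hN
        have := mQ N hN
        have := mZ N
        exact Measurable.aestronglyMeasurable (by fun_prop)
      · rw [Real.norm_eq_abs, abs_of_nonneg (le_min (le_max_right _ _) hR.le)]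
        exact min_le_right _ _
    have hpt : ∀ ω, Z N ω - Z0 ω - M N ω ≤
        B * K * Q N ω + min (max (V N ω) 0) R + (2 * (K * B + K) ^ 2 + 2 * M N ω ^ 2) / R := by
      intro ω
      have hQ0 : 0 ≤ B * K * Q N ω := by
        have : 0 ≤ Q N ω := Finset.sum_nonneg fun i _ => by positivity
        positivity
      set w := Z N ω - Z0 ω - M N ω with hw
      have hVw : V N ω = w - B * K * Q N ω := rfl
      have hw2 : w ^ 2 ≤ 2 * (K * B + K) ^ 2 + 2 * M N ω ^ 2 := by
        have hz : |Z N ω - Z0 ω| ≤ K * B + K :=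
          (abs_sub _ _).trans (add_le_add (bZ N hN ω) (bZ0 ω))
        have hz2 : (Z N ω - Z0 ω) ^ 2 ≤ (K * B + K) ^ 2 := sq_le_sq' (neg_le_of_abs_le hz) (le_of_abs_le hz)
        nlinarith [sq_nonneg (Z N ω - Z0 ω + M N ω)]
      rcases le_or_gt (V N ω) R with h | h
      · have : V N ω ≤ min (max (V N ω) 0) R := le_min (le_max_left _ _) h
        have : 0 ≤ (2 * (K * B + K) ^ 2 + 2 * M N ω ^ 2) / R := by positivity
        linarith
      · have h0 : R ≤ min (max (V N ω) 0) R := le_min (h.le.trans (le_max_left _ _)) le_rfl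
        have hwR : R < w := by linarith
        have : w ≤ (2 * (K * B + K) ^ 2 + 2 * M N ω ^ 2) / R := by
          rw [le_div_iff₀ hR]; nlinarith
        linarith
    have iL : Integrable (fun ω => Z N ω - Z0 ω - M N ω) P := ((iZ N hN).sub iZ0).sub iM
    have iA : Integrable (fun ω => B * K * Q N ω) P := (iQ N hN).const_mul _
    have iAV : Integrable (fun ω => B * K * Q N ω + min (max (V N ω) 0) R) P := iA.add iV
    have iC : Integrable (fun ω => (2 * (K * B + K) ^ 2 + 2 * M N ω ^ 2) / R) P :=
      ((integrable_const _).add (iM2.const_mul 2)).div_const R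
    have hI := integral_mono iL (iAV.add iC) hpt
    have e1 : ∫ ω, (Z N ω - Z0 ω - M N ω) ∂P = ∫ ω, Z N ω ∂P - ∫ ω, Z0 ω ∂P := by
      have i0 : Integrable (fun ω => Z N ω - Z0 ω) P := (iZ N hN).sub iZ0
      rw [integral_sub i0 iM, integral_sub (iZ N hN) iZ0, zM N hN, sub_zero]
    have e2 : ∫ ω, (2 * (K * B + K) ^ 2 + 2 * M N ω ^ 2) / R ∂P ≤ L' / R := by
      rw [integral_div, integral_add (integrable_const _) (iM2.const_mul 2),
        integral_const_mul 2 (fun ω => M N ω ^ 2)]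
      have := hML N hN
      rw [integral_const, probReal_univ, one_smul]
      refine div_le_div_of_nonneg_right ?_ hR.le
      simp only [L']
      linarith
    have e3 := integral_add iAV iC
    have e4 := integral_add iA iV
    rw [integral_const_mul, eQ N hN] at e4
    simp only [Pi.add_apply] at hI
    rw [e1, e3, e4] at hI
    linarith
  have : ∫ ω, Zl ω ∂P - ∫ ω, Z0 ω ∂P ≤ 0 := by
    have hl : Tendsto (fun R : ℝ => L' / R) atTop (nhds 0) := tendsto_const_nhds.div_atTop tendsto_id
    refine ge_of_tendsto hl ?_
    filter_upwards [eventually_gt_atTop 0] with R hR using key R hR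
  linarith
end


section
variable {Ω : Type*} [m0 : MeasurableSpace Ω] {P : Measure Ω} [IsProbabilityMeasure P]
  {T : ℝ} {F : ℝ → MeasurableSpace Ω} {μ : ℝ → ℝ} {W X : ℝ → Ω → ℝ}

theorem ito_exp (S : BSetup P T F μ W X)
    {f f1 f2 f3 g : ℝ → ℝ} (h1 : ∀ x, HasDerivAt f (f1 x) x)
    (h2 : ∀ x, HasDerivAt f1 (f2 x) x) (h3 : ∀ x, HasDerivAt f2 (f3 x) x) {K : ℝ}
    (hb0 : ∀ x, 0 ≤ f x) (hb1 : ∀ x, |f1 x| ≤ K)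
    (hb2 : ∀ x, |f2 x| ≤ K) (hb3 : ∀ x, |f3 x| ≤ K) (hg : Continuous g) (hgK : ∀ x, g x ≤ K)
    (hgen : ∀ x, 0 ≤ x → -f1 x * μ x + 1 / 2 * (f1 x ^ 2 - f2 x) + g x ≤ 0) :
    ∫⁻ ω, ENNReal.ofReal (Real.exp (-f (X T ω) + ∫ r in (0:ℝ)..T, g (X r ω))) ∂P ≤
      ∫⁻ ω, ENNReal.ofReal (Real.exp (-f (X 0 ω))) ∂P := by
  have hK : 0 ≤ K := (abs_nonneg _).trans (hb2 0)
  set K' := 1 + 3 * K + 3 * K ^ 2 + K ^ 3 with hK'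
  have e1 : ∀ x, HasDerivAt (fun x => Real.exp (-f x)) (-f1 x * Real.exp (-f x)) x := fun x => by
    refine (h1 x).neg.exp.congr_deriv ?_
    simp [mul_comm]
  have e2 : ∀ x, HasDerivAt (fun x => -f1 x * Real.exp (-f x))
      ((f1 x ^ 2 - f2 x) * Real.exp (-f x)) x := fun x => by
    refine ((h2 x).neg.mul (e1 x)).congr_deriv ?_
    simp
    ring
  have e3 : ∀ x, HasDerivAt (fun x => (f1 x ^ 2 - f2 x) * Real.exp (-f x))
      ((2 * f1 x * f2 x - f3 x) * Real.exp (-f x)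
        + (f1 x ^ 2 - f2 x) * (-f1 x * Real.exp (-f x))) x := fun x => by
    refine ((((h2 x).pow 2).sub (h3 x)).mul (e1 x)).congr_deriv ?_
    simp
  have hE : ∀ x, Real.exp (-f x) ≤ 1 := fun x => by simpa using hb0 x
  have hE0 : ∀ x, 0 < Real.exp (-f x) := fun x => Real.exp_pos _
  have bmul : ∀ x u C : ℝ, |u| ≤ C → |u * Real.exp (-f x)| ≤ C := fun x u C h => by
    rw [abs_mul, abs_of_pos (hE0 x)]
    calc |u| * Real.exp (-f x) ≤ |u| * 1 := by gcongr; exact hE x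
      _ ≤ C := by simpa using h
  have q1 : ∀ x, |f1 x ^ 2 - f2 x| ≤ K ^ 2 + K := fun x => by
    refine (abs_sub _ _).trans (add_le_add ?_ (hb2 x))
    rw [abs_pow]
    exact pow_le_pow_left₀ (abs_nonneg _) (hb1 x) 2
  have K2 : 0 ≤ K ^ 2 := by positivity
  have K3 : 0 ≤ K ^ 3 := by positivity
  obtain ⟨hi, hle⟩ := ito_super S (φ := fun x => Real.exp (-f x)) (g := g) (K := K') e1 e2 e3
    (fun x => (hE0 x).le) (fun x => (hE x).trans (by linarith))
    (fun x => bmul x _ _ (by rw [abs_neg]; linarith [hb1 x]))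
    (fun x => bmul x _ _ (by linarith [q1 x]))
    (fun x => by
      have : (2 * f1 x * f2 x - f3 x) * Real.exp (-f x)
        + (f1 x ^ 2 - f2 x) * (-f1 x * Real.exp (-f x)) =
        ((2 * f1 x * f2 x - f3 x) + (f1 x ^ 2 - f2 x) * (-f1 x)) * Real.exp (-f x) := by ring
      rw [this]
      refine bmul x _ _ ?_
      have t1 : |2 * f1 x * f2 x| ≤ 2 * K ^ 2 := by
        rw [abs_mul, abs_mul, abs_of_pos (by norm_num : (0:ℝ) < 2), sq, ← mul_assoc]
        have := hb1 x; have := hb2 x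
        gcongr
      have t2 : |(f1 x ^ 2 - f2 x) * (-f1 x)| ≤ (K ^ 2 + K) * K := by
        rw [abs_mul, abs_neg]
        have := hb1 x; have := q1 x
        gcongr
      have t3 := abs_add_le (2 * f1 x * f2 x - f3 x) ((f1 x ^ 2 - f2 x) * (-f1 x))
      have t4 := abs_sub (2 * f1 x * f2 x) (f3 x)
      have := hb3 x
      have : (K ^ 2 + K) * K = K ^ 3 + K ^ 2 := by ring
      linarith)
    hg (fun x => (hgK x).trans (by linarith))
    (fun x hx => by
      have := mul_le_mul_of_nonneg_left (hgen x hx) (hE0 x).le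
      rw [mul_zero] at this
      linarith)
  simp_rw [← Real.exp_add] at hi hle
  have c0 : Continuous f := continuous_iff_continuousAt.2 fun y => (h1 y).continuousAt
  have i0 : Integrable (fun ω => Real.exp (-f (X 0 ω))) P := by
    refine Integrable.of_bound (C := 1) ?_ (ae_of_all _ fun ω => ?_)
    · have := S.Xmeas 0
      have := c0.measurable
      exact Measurable.aestronglyMeasurable (by fun_prop)
    · rw [Real.norm_eq_abs, abs_of_pos (hE0 _)]; exact hE _
  rw [← ofReal_integral_eq_lintegral_ofReal hi (ae_of_all _ fun ω => (Real.exp_pos _).le),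
    ← ofReal_integral_eq_lintegral_ofReal i0 (ae_of_all _ fun ω => (Real.exp_pos _).le)]
  exact ENNReal.ofReal_le_ofReal hle

lemma logder {b : ℝ} (hb : 1 ≤ b) (x : ℝ) :
    HasDerivAt (fun x => Real.log (b + x ^ 2)) (2 * x / (b + x ^ 2)) x ∧
    HasDerivAt (fun x => 2 * x / (b + x ^ 2)) (2 / (b + x ^ 2) - 4 * x ^ 2 / (b + x ^ 2) ^ 2) x ∧
    HasDerivAt (fun x => 2 / (b + x ^ 2) - 4 * x ^ 2 / (b + x ^ 2) ^ 2)
      (-12 * x / (b + x ^ 2) ^ 2 + 16 * x ^ 3 / (b + x ^ 2) ^ 3) x := by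
  have hv : b + x ^ 2 ≠ 0 := by positivity
  have hd : HasDerivAt (fun x : ℝ => b + x ^ 2) (2 * x) x := by
    refine ((hasDerivAt_pow 2 x).const_add b).congr_deriv ?_
    simp
  have hd2 : HasDerivAt (fun x : ℝ => 2 * x) 2 x := by
    refine ((hasDerivAt_id x).const_mul 2).congr_deriv ?_
    simp
  have hd4 : HasDerivAt (fun x : ℝ => 4 * x ^ 2) (8 * x) x := by
    refine ((hasDerivAt_pow 2 x).const_mul 4).congr_deriv ?_
    simp; ring
  have hdd : HasDerivAt (fun x : ℝ => (b + x ^ 2) ^ 2) (4 * x * (b + x ^ 2)) x := by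
    refine (hd.pow 2).congr_deriv ?_
    simp; ring
  refine ⟨hd.log hv, ?_, ?_⟩
  · refine (hd2.div hd hv).congr_deriv ?_
    field_simp
    ring
  · refine (((hasDerivAt_const x (2:ℝ)).div hd hv).sub (hd4.div hdd (by positivity))).congr_deriv ?_
    field_simp
    ring

lemma logbd {b : ℝ} (hb : 1 ≤ b) (x : ℝ) :
    |2 * x / (b + x ^ 2)| ≤ 28 ∧ |2 / (b + x ^ 2) - 4 * x ^ 2 / (b + x ^ 2) ^ 2| ≤ 28 ∧
      |-12 * x / (b + x ^ 2) ^ 2 + 16 * x ^ 3 / (b + x ^ 2) ^ 3| ≤ 28 := by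
  set v := b + x ^ 2 with hv
  have hv1 : 1 ≤ v := by nlinarith [sq_nonneg x]
  have hx2 : x ^ 2 ≤ v := by linarith
  have hxv : |x| ≤ v := by
    have := sq_abs x
    nlinarith [sq_nonneg (|x| - 1)]
  have hv0 : 0 < v := by linarith
  have a1 : |x / v| ≤ 1 := by
    rw [abs_div, abs_of_pos hv0, div_le_one hv0]; exact hxv
  have a2 : |x ^ 2 / v| ≤ 1 := by
    rw [abs_div, abs_of_pos hv0, div_le_one hv0, abs_of_nonneg (sq_nonneg x)]; exact hx2
  have a3 : |1 / v| ≤ 1 := by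
    rw [abs_div, abs_of_pos hv0, div_le_one hv0, abs_one]; exact hv1
  have a12 : |x / v * (1 / v)| ≤ 1 := by
    rw [abs_mul]; exact mul_le_one₀ a1 (abs_nonneg _) a3
  have a22 : |x ^ 2 / v * (1 / v)| ≤ 1 := by
    rw [abs_mul]; exact mul_le_one₀ a2 (abs_nonneg _) a3
  have a32 : |x ^ 2 / v * (x / v * (1 / v))| ≤ 1 := by
    rw [abs_mul]; exact mul_le_one₀ a2 (abs_nonneg _) a12
  refine ⟨?_, ?_, ?_⟩
  · rw [show 2 * x / v = 2 * (x / v) by ring]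
    rw [abs_le] at *; constructor <;> linarith
  · rw [show 2 / v - 4 * x ^ 2 / v ^ 2 = 2 * (1 / v) - 4 * (x ^ 2 / v * (1 / v)) by field_simp]
    rw [abs_le] at *; constructor <;> linarith
  · rw [show -12 * x / v ^ 2 + 16 * x ^ 3 / v ^ 3 =
      -12 * (x / v * (1 / v)) + 16 * (x ^ 2 / v * (x / v * (1 / v))) by field_simp]
    rw [abs_le] at *; constructor <;> linarith

theorem moment_b (S : BSetup P T F μ W X) {ct a b : ℝ} (hct : 0 ≤ ct) (ha : 0 ≤ a) (hb : 1 ≤ b)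
    (hdrift : ∀ x : ℝ, 0 < x → x * μ x ≤ ct * (1 + x ^ 2)) :
    ∫⁻ ω, ENNReal.ofReal (((1 + X T ω ^ 2) * (b / (b + X T ω ^ 2))) ^ a) ∂P ≤
      ENNReal.ofReal (Real.exp ((2 * a * ct + 2000 * (a ^ 2 + a)) * T)) *
      ∫⁻ ω, ENNReal.ofReal ((1 + X 0 ω ^ 2) ^ a) ∂P := by
  set C := 2 * a * ct + 2000 * (a ^ 2 + a) with hC
  have hC0 : 0 ≤ C := by positivity
  have key := ito_exp S (f := fun x => a * (Real.log (b + x ^ 2) - Real.log (1 + x ^ 2)))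
    (f1 := fun x => a * (2 * x / (b + x ^ 2) - 2 * x / (1 + x ^ 2)))
    (f2 := fun x => a * ((2 / (b + x ^ 2) - 4 * x ^ 2 / (b + x ^ 2) ^ 2)
      - (2 / (1 + x ^ 2) - 4 * x ^ 2 / (1 + x ^ 2) ^ 2)))
    (f3 := fun x => a * ((-12 * x / (b + x ^ 2) ^ 2 + 16 * x ^ 3 / (b + x ^ 2) ^ 3)
      - (-12 * x / (1 + x ^ 2) ^ 2 + 16 * x ^ 3 / (1 + x ^ 2) ^ 3)))
    (g := fun _ => -C) (K := a * 56)
    (fun x => ((logder hb x).1.sub (logder le_rfl x).1).const_mul a)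
    (fun x => ((logder hb x).2.1.sub (logder le_rfl x).2.1).const_mul a)
    (fun x => ((logder hb x).2.2.sub (logder le_rfl x).2.2).const_mul a)
    (fun x => mul_nonneg ha (sub_nonneg.2 (Real.log_le_log (by positivity) (by linarith))))
    (fun x => by
      rw [abs_mul, abs_of_nonneg ha]; gcongr
      exact (abs_sub _ _).trans (by linarith [(logbd hb x).1, (logbd le_rfl x).1]))
    (fun x => by
      rw [abs_mul, abs_of_nonneg ha]; gcongr
      exact (abs_sub _ _).trans (by linarith [(logbd hb x).2.1, (logbd le_rfl x).2.1]))
    (fun x => by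
      rw [abs_mul, abs_of_nonneg ha]; gcongr
      exact (abs_sub _ _).trans (by linarith [(logbd hb x).2.2, (logbd le_rfl x).2.2]))
    continuous_const (fun x => by linarith [mul_nonneg ha (by norm_num : (0:ℝ) ≤ 56)])
    (fun x hx => by
      have n1 : |2 * x / (b + x ^ 2) - 2 * x / (1 + x ^ 2)| ≤ 56 :=
        (abs_sub _ _).trans (by linarith [(logbd hb x).1, (logbd le_rfl x).1])
      have n2 : |(2 / (b + x ^ 2) - 4 * x ^ 2 / (b + x ^ 2) ^ 2)
          - (2 / (1 + x ^ 2) - 4 * x ^ 2 / (1 + x ^ 2) ^ 2)| ≤ 56 :=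
        (abs_sub _ _).trans (by linarith [(logbd hb x).2.1, (logbd le_rfl x).2.1])
      have d : -(a * (2 * x / (b + x ^ 2) - 2 * x / (1 + x ^ 2))) * μ x ≤ 2 * a * ct := by
        rcases hx.eq_or_lt with h | h
        · subst h; simp; positivity
        · have hD := hdrift x h
          have p1 : 0 < 1 + x ^ 2 := by positivity
          have p2 : 0 < b + x ^ 2 := by positivity
          have hr : 0 ≤ 1 / (1 + x ^ 2) - 1 / (b + x ^ 2) := by
            rw [sub_nonneg]; exact one_div_le_one_div_of_le p1 (by linarith)
          have e : -(a * (2 * x / (b + x ^ 2) - 2 * x / (1 + x ^ 2))) * μ x =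
            2 * a * ((1 / (1 + x ^ 2) - 1 / (b + x ^ 2)) * (x * μ x)) := by ring
          rw [e]
          refine mul_le_mul_of_nonneg_left ?_ (by positivity)
          calc _ ≤ (1 / (1 + x ^ 2) - 1 / (b + x ^ 2)) * (ct * (1 + x ^ 2)) := by gcongr
            _ ≤ (1 / (1 + x ^ 2)) * (ct * (1 + x ^ 2)) := by
              gcongr
              have : 0 ≤ 1 / (b + x ^ 2) := by positivity
              linarith
            _ = ct := by field_simp
      have s1 : (a * (2 * x / (b + x ^ 2) - 2 * x / (1 + x ^ 2))) ^ 2 ≤ a ^ 2 * 3136 := by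
        rw [mul_pow]
        gcongr
        rw [← sq_abs]
        calc _ ≤ (56:ℝ) ^ 2 := pow_le_pow_left₀ (abs_nonneg _) n1 2
          _ = 3136 := by norm_num
      have s2 := mul_le_mul_of_nonneg_left (neg_le_of_abs_le n2) ha
      have : 0 ≤ a ^ 2 := by positivity
      linarith)
  have hb0 : 0 < b := by linarith
  have id1 : ∀ x : ℝ, Real.exp (-(a * (Real.log (b + x ^ 2) - Real.log (1 + x ^ 2))))
      = ((1 + x ^ 2) / (b + x ^ 2)) ^ a := fun x => by
    rw [Real.rpow_def_of_pos (by positivity), Real.log_div (by positivity) (by positivity)]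
    congr 1; ring
  have id2 : ∀ x : ℝ, ((1 + x ^ 2) * (b / (b + x ^ 2))) ^ a = b ^ a * ((1 + x ^ 2) / (b + x ^ 2)) ^ a :=
    fun x => by
      rw [← Real.mul_rpow (by positivity) (by positivity)]
      congr 1; ring
  have id3 : ∀ x : ℝ, ((1 + x ^ 2) * (b / (b + x ^ 2))) ^ a ≤ (1 + x ^ 2) ^ a := fun x => by
    refine Real.rpow_le_rpow (by positivity) ?_ ha
    have : b / (b + x ^ 2) ≤ 1 := by rw [div_le_one (by positivity)]; nlinarith [sq_nonneg x]
    calc _ ≤ (1 + x ^ 2) * 1 := by gcongr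
      _ = _ := mul_one _
  simp only [intervalIntegral.integral_const, sub_zero, smul_eq_mul, Real.exp_add, id1] at key
  have hba : 0 ≤ b ^ a := by positivity
  have hm := S.Xmeas T
  calc _ = ENNReal.ofReal (b ^ a * Real.exp (C * T)) * ∫⁻ ω, ENNReal.ofReal
        (((1 + X T ω ^ 2) / (b + X T ω ^ 2)) ^ a * Real.exp (T * -C)) ∂P := by
        rw [← lintegral_const_mul' _ _ ENNReal.ofReal_ne_top]
        congr with ω
        rw [← ENNReal.ofReal_mul (by positivity), id2]
        congr 1
        have : Real.exp (C * T) * Real.exp (T * -C) = 1 := by rw [← Real.exp_add]; ring_nf; simp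
        linear_combination (- b ^ a * ((1 + X T ω ^ 2) / (b + X T ω ^ 2)) ^ a) * this
    _ ≤ ENNReal.ofReal (b ^ a * Real.exp (C * T)) * ∫⁻ ω, ENNReal.ofReal
        (((1 + X 0 ω ^ 2) / (b + X 0 ω ^ 2)) ^ a) ∂P := by gcongr
    _ = ENNReal.ofReal (Real.exp (C * T)) * ∫⁻ ω, ENNReal.ofReal
        (((1 + X 0 ω ^ 2) * (b / (b + X 0 ω ^ 2))) ^ a) ∂P := by
        rw [mul_comm (b ^ a), ENNReal.ofReal_mul (by positivity), mul_assoc,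
          ← lintegral_const_mul' _ _ ENNReal.ofReal_ne_top]
        congr with ω
        rw [← ENNReal.ofReal_mul (by positivity), id2]
    _ ≤ _ := mul_le_mul' le_rfl (lintegral_mono fun ω => ENNReal.ofReal_le_ofReal (id3 _))

theorem moment_bound (S : BSetup P T F μ W X) {ct a : ℝ} (hct : 0 ≤ ct) (ha : 0 ≤ a)
    (hdrift : ∀ x : ℝ, 0 < x → x * μ x ≤ ct * (1 + x ^ 2)) :
    ∫⁻ ω, ENNReal.ofReal ((1 + X T ω ^ 2) ^ a) ∂P ≤
      ENNReal.ofReal (Real.exp ((2 * a * ct + 2000 * (a ^ 2 + a)) * T)) *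
      ∫⁻ ω, ENNReal.ofReal ((1 + X 0 ω ^ 2) ^ a) ∂P := by
  have hm := S.Xmeas T
  have hlim : ∀ x : ℝ, Tendsto (fun n : ℕ => ENNReal.ofReal
      (((1 + x ^ 2) * (((n:ℝ) + 1) / (((n:ℝ) + 1) + x ^ 2))) ^ a)) atTop
      (nhds (ENNReal.ofReal ((1 + x ^ 2) ^ a))) := by
    intro x
    refine ENNReal.tendsto_ofReal ?_
    have h1 : Tendsto (fun n : ℕ => ((n:ℝ) + 1) / (((n:ℝ) + 1) + x ^ 2)) atTop (nhds 1) := by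
      have h2 : Tendsto (fun n : ℕ => x ^ 2 / (((n:ℝ) + 1) + x ^ 2)) atTop (nhds 0) :=
        tendsto_const_nhds.div_atTop
          (tendsto_atTop_add_const_right _ _ (tendsto_atTop_add_const_right _ _ tendsto_natCast_atTop_atTop))
      have h3 : (fun n : ℕ => ((n:ℝ) + 1) / (((n:ℝ) + 1) + x ^ 2)) =
          fun n : ℕ => 1 - x ^ 2 / (((n:ℝ) + 1) + x ^ 2) := by
        funext n
        have : ((n:ℝ) + 1) + x ^ 2 ≠ 0 := by positivity
        field_simp
        ring
      rw [h3]
      simpa using h2.const_sub 1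
    have h4 := (h1.const_mul (1 + x ^ 2)).rpow_const (p := a) (Or.inr ha)
    simpa using h4
  calc _ = ∫⁻ ω, liminf (fun n : ℕ => ENNReal.ofReal
      (((1 + X T ω ^ 2) * (((n:ℝ) + 1) / (((n:ℝ) + 1) + X T ω ^ 2))) ^ a)) atTop ∂P := by
        congr with ω
        exact (hlim _).liminf_eq.symm
    _ ≤ liminf (fun n : ℕ => ∫⁻ ω, ENNReal.ofReal
      (((1 + X T ω ^ 2) * (((n:ℝ) + 1) / (((n:ℝ) + 1) + X T ω ^ 2))) ^ a) ∂P) atTop :=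
        lintegral_liminf_le fun n => by fun_prop
    _ ≤ _ := by
        refine liminf_le_of_le ?_ ?_
        · isBoundedDefault
        · intro c hc
          obtain ⟨n, hn⟩ := hc.exists
          exact hn.trans (moment_b S hct ha (by simp) hdrift)
end


section
variable {Ω : Type*} [m0 : MeasurableSpace Ω] {P : Measure Ω} [IsProbabilityMeasure P]
  {T : ℝ} {F : ℝ → MeasurableSpace Ω} {μ : ℝ → ℝ} {W X : ℝ → Ω → ℝ}

lemma abspow_bd {δ x e : ℝ} (hδ : 0 < δ) (hδ1 : δ ≤ 1) (k : ℕ) (h1 : (k:ℝ) / 2 + e ≤ 0)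
    (h2 : -2 ≤ (k:ℝ) / 2 + e) : |x| ^ k * (x ^ 2 + δ) ^ e ≤ δ ^ (-2 : ℝ) := by
  have hu : 0 < x ^ 2 + δ := by positivity
  have hx : |x| ≤ (x ^ 2 + δ) ^ ((1:ℝ) / 2) := by
    rw [← Real.sqrt_eq_rpow]
    exact Real.abs_le_sqrt (by linarith)
  calc |x| ^ k * (x ^ 2 + δ) ^ e ≤ ((x ^ 2 + δ) ^ ((1:ℝ) / 2)) ^ k * (x ^ 2 + δ) ^ e := by gcongr
    _ = (x ^ 2 + δ) ^ ((k:ℝ) / 2 + e) := by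
        rw [← Real.rpow_natCast, ← Real.rpow_mul hu.le, ← Real.rpow_add hu]
        congr 1; ring
    _ ≤ δ ^ ((k:ℝ) / 2 + e) :=
        Real.rpow_le_rpow_of_nonpos hδ (by nlinarith [sq_nonneg x]) h1
    _ ≤ δ ^ (-2 : ℝ) := Real.rpow_le_rpow_of_exponent_ge hδ hδ1 h2

lemma upow_der {δ : ℝ} (hδ : 0 < δ) (e x : ℝ) :
    HasDerivAt (fun x : ℝ => (x ^ 2 + δ) ^ e) (2 * e * x * (x ^ 2 + δ) ^ (e - 1)) x := by
  have h : HasDerivAt (fun x : ℝ => x ^ 2 + δ) (2 * x) x := by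
    simpa using ((hasDerivAt_id x).pow 2).add_const δ
  refine (h.rpow_const (p := e) (Or.inl (by positivity))).congr_deriv ?_
  ring

theorem neg_exp (S : BSetup P T F μ W X) {p α ct c L δ : ℝ} (hp1 : 1 < p) (hp2 : p < 2)
    (hL : 0 < L) (hL1 : L ≤ 1) (hLα : L ≤ α - (p - 1) / 2) (hc : p ≤ c) (hct : 0 ≤ ct)
    (hδ : 0 < δ) (hδ1 : δ ≤ 1)
    (hdrift : ∀ x : ℝ, 0 < x → α - ct * x ^ c ≤ x * μ x) :
    ∫⁻ ω, ENNReal.ofReal (Real.exp (-(L / (2 - p) * (X T ω ^ 2 + δ) ^ ((2 - p) / 2))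
      + ∫ r in (0:ℝ)..T, (L ^ 2 / 2 * (X r ω ^ 2 + δ) ^ (-p / 2) - L ^ 2 / 2
        - L * ct * |X r ω| ^ (c - p)))) ∂P ≤ 1 := by
  have hup : ∀ x : ℝ, 0 < x ^ 2 + δ := fun x => by positivity
  set D := δ ^ (-2 : ℝ) with hD
  have hD0 : 0 < D := by positivity
  have key := ito_exp S (f := fun x => L / (2 - p) * (x ^ 2 + δ) ^ ((2 - p) / 2))
    (f1 := fun x => L * (x * (x ^ 2 + δ) ^ (-p / 2)))
    (f2 := fun x => L * ((x ^ 2 + δ) ^ (-p / 2) - p * (x ^ 2 * (x ^ 2 + δ) ^ (-p / 2 - 1))))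
    (f3 := fun x => L * (-3 * p * (x * (x ^ 2 + δ) ^ (-p / 2 - 1))
      + p * (p + 2) * (x ^ 3 * (x ^ 2 + δ) ^ (-p / 2 - 2))))
    (g := fun x => L ^ 2 / 2 * (x ^ 2 + δ) ^ (-p / 2) - L ^ 2 / 2 - L * ct * |x| ^ (c - p))
    (K := 14 * D) ?_ ?_ ?_ ?_ ?_ ?_ ?_ ?_ ?_ ?_
  · refine key.trans ?_
    calc _ ≤ ∫⁻ ω, 1 ∂P := by
          refine lintegral_mono fun ω => ?_
          rw [← ENNReal.ofReal_one]
          refine ENNReal.ofReal_le_ofReal (Real.exp_le_one_iff.2 ?_)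
          have : 0 ≤ L / (2 - p) := div_nonneg hL.le (by linarith)
          have := Real.rpow_nonneg (hup (X 0 ω)).le ((2 - p) / 2)
          simp only [neg_nonpos]
          positivity
      _ = 1 := by simp
  · intro x
    refine ((upow_der hδ ((2 - p) / 2) x).const_mul (L / (2 - p))).congr_deriv ?_
    have : 2 - p ≠ 0 := by linarith
    rw [show (2 - p) / 2 - 1 = -p / 2 by ring]
    field_simp
  · intro x
    refine (((hasDerivAt_id x).mul (upow_der hδ (-p / 2) x)).const_mul L).congr_deriv ?_
    simp only [id, Pi.mul_apply, Pi.pow_apply, Pi.sub_apply]; push_cast; ring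
  · intro x
    have h1 := upow_der hδ (-p / 2) x
    have h2 := upow_der hδ (-p / 2 - 1) x
    refine ((h1.sub ((((hasDerivAt_id x).pow 2).mul h2).const_mul p)).const_mul L).congr_deriv ?_
    rw [show -p / 2 - 1 - 1 = -p / 2 - 2 by ring]
    simp only [id, Pi.mul_apply, Pi.pow_apply, Pi.sub_apply]; push_cast; ring
  · intro x
    have : 0 ≤ L / (2 - p) := div_nonneg hL.le (by linarith)
    have := Real.rpow_nonneg (hup x).le ((2 - p) / 2)
    positivity
  · intro x
    have := abspow_bd (x := x) (e := -p / 2) hδ hδ1 1 (by push_cast; linarith) (by push_cast; linarith)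
    have h0 := (hup x).le
    rw [abs_mul, abs_mul, abs_of_pos hL, abs_of_nonneg (Real.rpow_nonneg h0 _)]
    rw [pow_one] at this
    have h3 : 0 ≤ |x| * (x ^ 2 + δ) ^ (-p / 2) := mul_nonneg (abs_nonneg _) (Real.rpow_nonneg h0 _)
    calc _ ≤ 1 * D := by gcongr
      _ ≤ _ := by linarith
  · intro x
    have h0 := (hup x).le
    have b0 := abspow_bd (x := x) (e := -p / 2) hδ hδ1 0 (by push_cast; linarith) (by push_cast; linarith)
    have b2 := abspow_bd (x := x) (e := -p / 2 - 1) hδ hδ1 2 (by push_cast; linarith) (by push_cast; linarith)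
    rw [pow_zero, one_mul] at b0
    rw [sq_abs] at b2
    have n0 := Real.rpow_nonneg h0 (-p / 2)
    have n2 : 0 ≤ x ^ 2 * (x ^ 2 + δ) ^ (-p / 2 - 1) := mul_nonneg (sq_nonneg _) (Real.rpow_nonneg h0 _)
    have h : |(x ^ 2 + δ) ^ (-p / 2) - p * (x ^ 2 * (x ^ 2 + δ) ^ (-p / 2 - 1))| ≤ 14 * D := by
      rw [abs_le]; constructor <;> nlinarith
    rw [abs_mul, abs_of_pos hL]
    calc _ ≤ 1 * (14 * D) := by gcongr
      _ = _ := one_mul _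
  · intro x
    have h0 := (hup x).le
    have b1 := abspow_bd (x := x) (e := -p / 2 - 1) hδ hδ1 1 (by push_cast; linarith) (by push_cast; linarith)
    have b3 := abspow_bd (x := x) (e := -p / 2 - 2) hδ hδ1 3 (by push_cast; linarith) (by push_cast; linarith)
    have a1 : |x * (x ^ 2 + δ) ^ (-p / 2 - 1)| ≤ D := by
      rw [abs_mul, abs_of_nonneg (Real.rpow_nonneg h0 _)]; rwa [pow_one] at b1
    have a3 : |x ^ 3 * (x ^ 2 + δ) ^ (-p / 2 - 2)| ≤ D := by
      rw [abs_mul, abs_of_nonneg (Real.rpow_nonneg h0 _), abs_pow]; exact b3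
    have h : |-3 * p * (x * (x ^ 2 + δ) ^ (-p / 2 - 1))
      + p * (p + 2) * (x ^ 3 * (x ^ 2 + δ) ^ (-p / 2 - 2))| ≤ 14 * D := by
      refine (abs_add_le _ _).trans ?_
      rw [abs_mul, abs_mul (p * (p + 2)), abs_of_pos (show 0 < p * (p + 2) by positivity),
        show |-3 * p| = 3 * p by rw [abs_mul, abs_of_pos (by linarith : 0 < p)]; norm_num]
      calc _ ≤ (3 * 2) * D + (2 * (2 + 2)) * D := by gcongr
        _ = _ := by ring
    rw [abs_mul, abs_of_pos hL]
    calc _ ≤ 1 * (14 * D) := by gcongr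
      _ = _ := one_mul _
  · refine ((continuous_const.mul ?_).sub continuous_const).sub (continuous_const.mul ?_)
    · exact (by fun_prop : Continuous fun x : ℝ => x ^ 2 + δ).rpow_const fun x => Or.inl (hup x).ne'
    · exact continuous_abs.rpow_const fun x => Or.inr (by linarith)
  · intro x
    have b0 := abspow_bd (x := x) (e := -p / 2) hδ hδ1 0 (by push_cast; linarith) (by push_cast; linarith)
    rw [pow_zero, one_mul] at b0
    have n0 := Real.rpow_nonneg (hup x).le (-p / 2)
    have n1 := Real.rpow_nonneg (abs_nonneg x) (c - p)
    have : 0 ≤ L * ct * |x| ^ (c - p) := by positivity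
    have hLL : L ^ 2 / 2 ≤ 1 := by nlinarith
    have : L ^ 2 / 2 * (x ^ 2 + δ) ^ (-p / 2) ≤ 1 * D := by gcongr
    have : 0 ≤ L ^ 2 := by positivity
    linarith
  · intro x hx
    set u := x ^ 2 + δ with hu
    have hu0 : 0 < u := hup x
    set A := u ^ (-p / 2) with hA
    have hA0 : 0 < A := Real.rpow_pos_of_pos hu0 _
    have hq : u ^ (-p / 2 - 1) = A / u := by rw [Real.rpow_sub_one hu0.ne']
    have n1 := Real.rpow_nonneg (abs_nonneg x) (c - p)
    have hLc : 0 ≤ L * ct * |x| ^ (c - p) := by positivity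
    rcases hx.eq_or_lt with rfl | hx
    · simp only [zero_mul, mul_zero, neg_zero]
      have : L ^ 2 ≤ L := by nlinarith
      have h5 : L ^ 2 * A ≤ L * A := by gcongr
      have h6 : (0:ℝ) ^ 2 = 0 := by norm_num
      rw [h6, zero_mul, mul_zero, sub_zero]
      have h7 := sq_nonneg L
      clear_value A
      generalize |(0:ℝ)| ^ (c - p) = z at *
      have h8 : L ^ 2 / 2 * A = (L ^ 2 * A) / 2 := by ring
      rw [h8]
      linarith
    · have hd := hdrift x hx
      have hxu : x ^ 2 * (A / u) ≤ A := by
        rw [mul_div_assoc', div_le_iff₀ hu0]; nlinarith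
      have h1 : x ^ 2 * A ^ 2 ≤ A + 1 := by
        have e1 : x ^ 2 * A ^ 2 ≤ u * A ^ 2 := by gcongr; linarith
        have e2 : u * A ^ 2 = u ^ (1 - p) := by
          rw [hA, ← Real.rpow_natCast, ← Real.rpow_mul hu0.le]
          nth_rewrite 1 [← Real.rpow_one u]
          rw [← Real.rpow_add hu0]
          congr 1; push_cast; ring
        rcases le_total u 1 with h | h
        · have := Real.rpow_le_rpow_of_exponent_ge hu0 h (show -p / 2 ≤ 1 - p by linarith)
          linarith
        · have := Real.rpow_le_one_of_one_le_of_nonpos h (show 1 - p ≤ 0 by linarith)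
          linarith
      have h2 : x ^ c * A ≤ |x| ^ (c - p) := by
        rw [abs_of_pos hx]
        have : A ≤ x ^ (-p) := by
          calc A ≤ (x ^ 2) ^ (-p / 2) :=
                Real.rpow_le_rpow_of_nonpos (by positivity) (by linarith) (by linarith)
            _ = x ^ (-p) := by
                rw [← Real.rpow_natCast, ← Real.rpow_mul hx.le]; congr 1; push_cast; ring
        calc _ ≤ x ^ c * x ^ (-p) := by gcongr
          _ = _ := by rw [← Real.rpow_add hx]; rfl
      rw [hq]
      have m1 : L * A * (α - ct * x ^ c) ≤ L * A * (x * μ x) := by gcongr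
      have m2 : L * ct * (x ^ c * A) ≤ L * ct * |x| ^ (c - p) := by gcongr
      have m3 : L ^ 2 * (x ^ 2 * A ^ 2) ≤ L ^ 2 * (A + 1) := by gcongr
      have m4 : L * p * (x ^ 2 * (A / u)) ≤ L * p * A := by gcongr
      have m5 : L * A * L ≤ L * A * (α - (p - 1) / 2) := by gcongr
      ring_nf at m1 m2 m3 m4 m5 ⊢
      linarith
end


lemma add_rpow_le4 (a b : ℝ≥0∞) {s : ℝ} (hs : 0 ≤ s) : (a + b) ^ s ≤ 2 ^ s * (a ^ s + b ^ s) := by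
  have : a + b ≤ 2 * max a b := by
    rw [two_mul]; exact add_le_add (le_max_left _ _) (le_max_right _ _)
  calc _ ≤ (2 * max a b) ^ s := by gcongr
    _ = 2 ^ s * (max a b) ^ s := ENNReal.mul_rpow_of_nonneg _ _ hs
    _ ≤ _ := by
      gcongr
      rcases le_total a b with h | h
      · rw [max_eq_right h]; exact le_add_self
      · rw [max_eq_left h]; exact le_self_add

lemma add4_rpow_le (a b c d : ℝ≥0∞) {s : ℝ} (hs : 0 ≤ s) :
    (a + b + c + d) ^ s ≤ (2 ^ s * 2 ^ s) * (a ^ s + b ^ s + c ^ s + d ^ s) := by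
  rw [add_assoc (a + b)]
  calc _ ≤ 2 ^ s * ((a + b) ^ s + (c + d) ^ s) := add_rpow_le4 _ _ hs
    _ ≤ 2 ^ s * (2 ^ s * (a ^ s + b ^ s) + 2 ^ s * (c ^ s + d ^ s)) := by
      gcongr <;> exact add_rpow_le4 _ _ hs
    _ = _ := by ring

lemma jensen_pow {ν : Measure ℝ} [IsFiniteMeasure ν] {h : ℝ → ℝ≥0∞} (hh : Measurable h) {s : ℝ} (hs : 1 ≤ s) :
    (∫⁻ r, h r ∂ν) ^ s ≤ (ν Set.univ) ^ (s - 1) * ∫⁻ r, h r ^ s ∂ν := by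
  rcases hs.eq_or_lt with rfl | hs1
  · simp
  have hs0 : 0 < s := by linarith
  have hc : s.HolderConjugate (s / (s - 1)) := Real.HolderConjugate.conjExponent hs1
  have := ENNReal.lintegral_mul_le_Lp_mul_Lq ν hc (f := h) (g := fun _ => 1) hh.aemeasurable aemeasurable_const
  simp only [Pi.mul_apply, mul_one, ENNReal.one_rpow, lintegral_const, one_mul] at this
  calc _ ≤ ((∫⁻ r, h r ^ s ∂ν) ^ (1 / s) * (ν Set.univ) ^ (1 / (s / (s - 1)))) ^ s := by gcongr
    _ = _ := by
      rw [ENNReal.mul_rpow_of_nonneg _ _ hs0.le, ← ENNReal.rpow_mul, ← ENNReal.rpow_mul, mul_comm]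
      have e1 : 1 / s * s = 1 := by field_simp
      have e2 : 1 / (s / (s - 1)) * s = s - 1 := by
        have : s - 1 ≠ 0 := by linarith
        field_simp
      rw [e1, e2, ENNReal.rpow_one]

lemma ofReal_rpow_exp {s : ℝ} (hs : 1 ≤ s) (ξ : ℝ) :
    ENNReal.ofReal ξ ^ s ≤ ENNReal.ofReal (s ^ s) * ENNReal.ofReal (Real.exp ξ) := by
  have hs0 : 0 < s := by linarith
  rcases le_total ξ 0 with h | h
  · rw [ENNReal.ofReal_of_nonpos h, ENNReal.zero_rpow_of_pos hs0]; exact zero_le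
  · rw [ENNReal.ofReal_rpow_of_nonneg h hs0.le, ← ENNReal.ofReal_mul (by positivity)]
    refine ENNReal.ofReal_le_ofReal ?_
    have h1 : ξ ≤ s * Real.exp (ξ / s) := by
      have := Real.add_one_le_exp (ξ / s)
      calc ξ = s * (ξ / s) := by field_simp
        _ ≤ _ := by gcongr; linarith
    calc ξ ^ s ≤ (s * Real.exp (ξ / s)) ^ s := by gcongr
      _ = _ := by
        rw [Real.mul_rpow hs0.le (Real.exp_pos _).le, ← Real.exp_mul]
        congr 2; field_simp

lemma path_neg {p ct c L T s m : ℝ} (hT : 0 ≤ T) (hp1 : 1 < p) (hp2 : p < 2)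
    (hL : 0 < L) (hc : p ≤ c) (hct : 0 ≤ ct) (hs : 1 ≤ s) (hm1 : (2 - p) * s ≤ m)
    (hm2 : (c - p) * s ≤ m) :
    ∃ C : ℝ≥0∞, C ≠ ⊤ ∧ ∀ δ : ℝ, 0 < δ → δ ≤ 1 → ∀ x : ℝ → ℝ, Continuous x →
    (∫⁻ r in Set.Ioc 0 T, ENNReal.ofReal ((x r ^ 2 + δ) ^ (-p / 2))) ^ s ≤
      C * (ENNReal.ofReal ((1 + x T ^ 2) ^ (m / 2)) + 1
        + (∫⁻ r in Set.Ioc 0 T, ENNReal.ofReal ((1 + x r ^ 2) ^ (m / 2)))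
        + ENNReal.ofReal (Real.exp (-(L / (2 - p) * (x T ^ 2 + δ) ^ ((2 - p) / 2))
          + ∫ r in (0:ℝ)..T, (L ^ 2 / 2 * (x r ^ 2 + δ) ^ (-p / 2) - L ^ 2 / 2
          - L * ct * |x r| ^ (c - p))))) := by
  have hs0 : 0 ≤ s := by linarith
  have hp2' : 0 < 2 - p := by linarith
  set K1 := ENNReal.ofReal (2 / L ^ 2) with hK1
  set k1 := ENNReal.ofReal (s ^ s)
  set k2 := ENNReal.ofReal (L / (2 - p)) ^ s
  set k3 := ENNReal.ofReal (L ^ 2 / 2 * T) ^ s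
  set k4 := ENNReal.ofReal (L * ct) ^ s * ENNReal.ofReal T ^ (s - 1)
  refine ⟨K1 ^ s * (2 ^ s * 2 ^ s) * (k1 + k2 + k3 + k4), ?_, ?_⟩
  · have hh : ∀ y : ℝ, ∀ z : ℝ, 0 ≤ z → ENNReal.ofReal y ^ z ≠ ⊤ := fun y z hz =>
      ENNReal.rpow_ne_top_of_nonneg hz ENNReal.ofReal_ne_top
    have h2 : (2 : ℝ≥0∞) ^ s ≠ ⊤ := ENNReal.rpow_ne_top_of_nonneg hs0 (by simp)
    refine ENNReal.mul_ne_top (ENNReal.mul_ne_top (hh _ _ hs0) (ENNReal.mul_ne_top h2 h2)) ?_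
    simp only [ENNReal.add_ne_top]
    exact ⟨⟨⟨ENNReal.ofReal_ne_top, hh _ _ hs0⟩, hh _ _ hs0⟩, ENNReal.mul_ne_top (hh _ _ hs0) (hh _ _ (by linarith))⟩
  intro δ hδ hδ1 x hx
  have hup : ∀ r, 0 < x r ^ 2 + δ := fun r => by positivity
  have cA : Continuous fun r => (x r ^ 2 + δ) ^ (-p / 2) :=
    (by fun_prop : Continuous fun r => x r ^ 2 + δ).rpow_const fun r => Or.inl (hup r).ne'
  have cB : Continuous fun r => |x r| ^ (c - p) :=
    (by fun_prop : Continuous fun r => |x r|).rpow_const fun x => Or.inr (by linarith)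
  set A := ∫ r in (0:ℝ)..T, (x r ^ 2 + δ) ^ (-p / 2) with hA
  set B := ∫ r in (0:ℝ)..T, |x r| ^ (c - p) with hB
  have toL : ∀ h : ℝ → ℝ, Continuous h → (∀ r, 0 ≤ h r) →
      ∫⁻ r in Set.Ioc 0 T, ENNReal.ofReal (h r) = ENNReal.ofReal (∫ r in (0:ℝ)..T, h r) := by
    intro h hc h0
    rw [intervalIntegral.integral_of_le hT, ofReal_integral_eq_lintegral_ofReal]
    · exact (hc.intervalIntegrable 0 T).1
    · exact Eventually.of_forall h0
  rw [toL _ cA fun r => Real.rpow_nonneg (hup r).le _, ← hA]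
  have hsplit : (∫ r in (0:ℝ)..T, (L ^ 2 / 2 * (x r ^ 2 + δ) ^ (-p / 2) - L ^ 2 / 2
          - L * ct * |x r| ^ (c - p))) = L ^ 2 / 2 * A - L ^ 2 / 2 * T - L * ct * B := by
    rw [intervalIntegral.integral_sub, intervalIntegral.integral_sub,
      intervalIntegral.integral_const_mul, intervalIntegral.integral_const_mul]
    · simp; ring
    all_goals apply Continuous.intervalIntegrable; fun_prop
  rw [hsplit]
  set ξ := -(L / (2 - p) * (x T ^ 2 + δ) ^ ((2 - p) / 2)) + (L ^ 2 / 2 * A - L ^ 2 / 2 * T - L * ct * B) with hξ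
  set G := (x T ^ 2 + δ) ^ ((2 - p) / 2) with hG
  have eA : A = 2 / L ^ 2 * (ξ + L / (2 - p) * G + L ^ 2 / 2 * T + L * ct * B) := by
    rw [hξ]; field_simp; ring
  set H := fun r => ENNReal.ofReal ((1 + x r ^ 2) ^ (m / 2)) with hH
  set J := ∫⁻ r in Set.Ioc 0 T, H r
  have one : ∀ r, 1 ≤ 1 + x r ^ 2 := fun r => by nlinarith [sq_nonneg (x r)]
  have bG : ENNReal.ofReal G ^ s ≤ H T := by
    have hG0 : 0 ≤ G := Real.rpow_nonneg (hup _).le _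
    rw [ENNReal.ofReal_rpow_of_nonneg hG0 hs0]
    refine ENNReal.ofReal_le_ofReal ?_
    rw [hG, ← Real.rpow_mul (hup _).le]
    calc _ ≤ (1 + x T ^ 2) ^ ((2 - p) / 2 * s) :=
          Real.rpow_le_rpow (hup _).le (by linarith) (by positivity)
      _ ≤ _ := Real.rpow_le_rpow_of_exponent_le (one T) (by linarith)
  have bB : ENNReal.ofReal B ^ s ≤ ENNReal.ofReal T ^ (s - 1) * J := by
    rw [hB, ← toL _ cB fun r => by positivity]
    have := jensen_pow (ν := volume.restrict (Set.Ioc 0 T))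
      (h := fun r => ENNReal.ofReal (|x r| ^ (c - p))) (by fun_prop) hs
    refine this.trans ?_
    simp only [MeasurableSet.univ, Measure.restrict_apply, univ_inter, Real.volume_Ioc, sub_zero]
    refine mul_le_mul' le_rfl (lintegral_mono fun r => ?_)
    rw [ENNReal.ofReal_rpow_of_nonneg (by positivity) hs0]
    refine ENNReal.ofReal_le_ofReal ?_
    rw [← Real.rpow_mul (abs_nonneg _)]
    have h2 : |x r| ≤ (1 + x r ^ 2) ^ ((1:ℝ) / 2) := by
      rw [← Real.sqrt_eq_rpow]
      exact Real.abs_le_sqrt (by linarith)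
    calc _ ≤ ((1 + x r ^ 2) ^ ((1:ℝ) / 2)) ^ ((c - p) * s) :=
          Real.rpow_le_rpow (abs_nonneg _) h2 (mul_nonneg (by linarith) hs0)
      _ = (1 + x r ^ 2) ^ ((1:ℝ) / 2 * ((c - p) * s)) := by
        rw [← Real.rpow_mul (by positivity)]
      _ ≤ _ := Real.rpow_le_rpow_of_exponent_le (one r) (by linarith)
  have hA1 : ENNReal.ofReal A ≤ K1 * (ENNReal.ofReal ξ + ENNReal.ofReal (L / (2 - p)) * ENNReal.ofReal G
      + ENNReal.ofReal (L ^ 2 / 2 * T) + ENNReal.ofReal (L * ct) * ENNReal.ofReal B) := by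
    rw [← ENNReal.ofReal_mul (p := L / (2 - p)) (by positivity),
      ← ENNReal.ofReal_mul (p := L * ct) (by positivity), eA, ENNReal.ofReal_mul (by positivity)]
    refine mul_le_mul' le_rfl ?_
    refine ENNReal.ofReal_add_le.trans ?_
    gcongr
    refine ENNReal.ofReal_add_le.trans ?_
    gcongr
    exact ENNReal.ofReal_add_le
  calc ENNReal.ofReal A ^ s ≤ (K1 * (ENNReal.ofReal ξ + ENNReal.ofReal (L / (2 - p)) * ENNReal.ofReal G
      + ENNReal.ofReal (L ^ 2 / 2 * T) + ENNReal.ofReal (L * ct) * ENNReal.ofReal B)) ^ s := by gcongr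
    _ ≤ K1 ^ s * ((2 ^ s * 2 ^ s) * (ENNReal.ofReal ξ ^ s + (ENNReal.ofReal (L / (2 - p)) * ENNReal.ofReal G) ^ s
      + ENNReal.ofReal (L ^ 2 / 2 * T) ^ s + (ENNReal.ofReal (L * ct) * ENNReal.ofReal B) ^ s)) := by
        rw [ENNReal.mul_rpow_of_nonneg _ _ hs0]
        exact mul_le_mul' le_rfl (add4_rpow_le _ _ _ _ hs0)
    _ ≤ K1 ^ s * ((2 ^ s * 2 ^ s) * (k1 * ENNReal.ofReal (Real.exp ξ) + k2 * H T
      + k3 + k4 * J)) := by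
        rw [ENNReal.mul_rpow_of_nonneg _ _ hs0, ENNReal.mul_rpow_of_nonneg _ _ hs0]
        refine mul_le_mul' le_rfl (mul_le_mul' le_rfl (add_le_add (add_le_add (add_le_add ?_ ?_) le_rfl) ?_))
        · exact ofReal_rpow_exp hs ξ
        · exact mul_le_mul' le_rfl bG
        · rw [mul_assoc]; exact mul_le_mul' le_rfl bB
    _ ≤ K1 ^ s * ((2 ^ s * 2 ^ s) * ((k1 + k2 + k3 + k4) * (H T + 1 + J + ENNReal.ofReal (Real.exp ξ)))) := by
        refine mul_le_mul' le_rfl (mul_le_mul' le_rfl ?_)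
        set E := ENNReal.ofReal (Real.exp ξ)
        calc _ ≤ k1 * (H T + 1 + J + E) + k2 * (H T + 1 + J + E) + k3 * (H T + 1 + J + E)
              + k4 * (H T + 1 + J + E) := by
              refine add_le_add (add_le_add (add_le_add ?_ ?_) ?_) ?_
              · exact mul_le_mul' le_rfl le_add_self
              · refine mul_le_mul' le_rfl ?_
                rw [add_assoc, add_assoc]; exact le_self_add
              · conv_lhs => rw [← mul_one k3]
                refine mul_le_mul' le_rfl ?_
                rw [add_assoc, add_right_comm, ]; exact le_add_self
              · refine mul_le_mul' le_rfl ?_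
                exact le_add_self.trans le_self_add
          _ = _ := by ring
    _ = _ := by rw [mul_assoc, mul_assoc, mul_assoc, mul_assoc]


section
variable {Ω : Type*} [m0 : MeasurableSpace Ω] {P : Measure Ω} [IsProbabilityMeasure P]
  {T : ℝ} {F : ℝ → MeasurableSpace Ω} {μ : ℝ → ℝ} {W X : ℝ → Ω → ℝ}

lemma BSetup.joint (S : BSetup P T F μ W X) : Measurable (Function.uncurry X) :=
  measurable_uncurry_of_continuous_of_measurable S.Xcont S.Xmeas

lemma BSetup.unifmom (S : BSetup P T F μ W X) {ct m : ℝ} (hct : 0 ≤ ct) (hm : 0 ≤ m)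
    (hdrift : ∀ x : ℝ, 0 < x → x * μ x ≤ ct * (1 + x ^ 2))
    (hM : ∫⁻ ω, ENNReal.ofReal ((1 + X 0 ω ^ 2) ^ (m / 2)) ∂P < ⊤) :
    ∃ M : ℝ≥0∞, M ≠ ⊤ ∧ (∀ t ∈ Set.Icc 0 T,
      ∫⁻ ω, ENNReal.ofReal ((1 + X t ω ^ 2) ^ (m / 2)) ∂P ≤ M) ∧
      ∫⁻ ω, (∫⁻ r in Set.Ioc 0 T, ENNReal.ofReal ((1 + X r ω ^ 2) ^ (m / 2))) ∂P
        ≤ ENNReal.ofReal T * M := by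
  set a := m / 2 with ha
  have ha0 : 0 ≤ a := by positivity
  have hJ := S.joint
  set M := ENNReal.ofReal (Real.exp ((2 * a * ct + 2000 * (a ^ 2 + a)) * T)) *
      ∫⁻ ω, ENNReal.ofReal ((1 + X 0 ω ^ 2) ^ a) ∂P with hMdef
  have hb : ∀ t ∈ Set.Icc 0 T, ∫⁻ ω, ENNReal.ofReal ((1 + X t ω ^ 2) ^ a) ∂P ≤ M := by
    intro t ht
    refine (moment_bound (S.restrict ht) hct ha0 hdrift).trans ?_
    refine mul_le_mul' (ENNReal.ofReal_le_ofReal (Real.exp_le_exp.2 ?_)) le_rfl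
    exact mul_le_mul_of_nonneg_left ht.2 (by positivity)
  refine ⟨M, ENNReal.mul_ne_top ENNReal.ofReal_ne_top hM.ne, hb, ?_⟩
  rw [lintegral_lintegral_swap]
  · calc _ ≤ ∫⁻ r in Set.Ioc 0 T, M := by
          refine setLIntegral_mono measurable_const fun r hr => hb r ⟨hr.1.le, hr.2⟩
      _ = _ := by simp [mul_comm]
  · refine Measurable.aemeasurable ?_
    have h1 : Measurable fun z : Ω × ℝ => X z.2 z.1 := hJ.comp measurable_swap
    change Measurable fun z : Ω × ℝ => ENNReal.ofReal ((1 + X z.2 z.1 ^ 2) ^ a)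
    fun_prop

lemma Xpath_meas (S : BSetup P T F μ W X) (g : ℝ → ℝ≥0∞) (hg : Measurable g) :
    Measurable fun ω => ∫⁻ r in Set.Ioc 0 T, g (X r ω) := by
  have h1 : Measurable fun z : Ω × ℝ => g (X z.2 z.1) := hg.comp (S.joint.comp measurable_swap)
  exact h1.lintegral_prod_right'

theorem neg_moment_unif (S : BSetup P T F μ W X) {p α ct c L s m : ℝ} (hp1 : 1 < p) (hp2 : p < 2)
    (hL : 0 < L) (hL1 : L ≤ 1) (hLα : L ≤ α - (p - 1) / 2) (hc : p ≤ c) (hct : 0 ≤ ct)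
    (hs : 1 ≤ s) (hm1 : (2 - p) * s ≤ m) (hm2 : (c - p) * s ≤ m)
    (hdrift : ∀ x : ℝ, 0 < x → α - ct * x ^ c ≤ x * μ x ∧ x * μ x ≤ ct * (1 + x ^ 2))
    (hM : ∫⁻ ω, ENNReal.ofReal ((1 + X 0 ω ^ 2) ^ (m / 2)) ∂P < ⊤) :
    ∃ C : ℝ≥0∞, C ≠ ⊤ ∧ ∀ δ : ℝ, 0 < δ → δ ≤ 1 →
    ∫⁻ ω, (∫⁻ r in Set.Ioc 0 T, ENNReal.ofReal ((X r ω ^ 2 + δ) ^ (-p / 2))) ^ s ∂P ≤ C := by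
  have hm : 0 ≤ m := le_trans (mul_nonneg (by linarith) (by linarith)) hm1
  obtain ⟨M, hMt, hMb, hMi⟩ := S.unifmom hct hm (fun x hx => (hdrift x hx).2) hM
  obtain ⟨C, hC, hb⟩ := path_neg S.T0 hp1 hp2 hL hc hct hs hm1 hm2
  refine ⟨C * (M + 1 + ENNReal.ofReal T * M + 1), ?_, ?_⟩
  · refine ENNReal.mul_ne_top hC ?_
    simp only [ENNReal.add_ne_top]
    exact ⟨⟨⟨hMt, by simp⟩, ENNReal.mul_ne_top ENNReal.ofReal_ne_top hMt⟩, by simp⟩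
  intro δ hδ hδ1
  refine (lintegral_mono fun ω => hb δ hδ hδ1 (fun r => X r ω) (S.Xcont ω)).trans ?_
  have hmT := S.Xmeas T
  have hmJ := Xpath_meas S (fun x => ENNReal.ofReal ((1 + x ^ 2) ^ (m / 2))) (by fun_prop)
  rw [lintegral_const_mul' _ _ hC, lintegral_add_left, lintegral_add_left, lintegral_add_left]
  · refine mul_le_mul' le_rfl (add_le_add (add_le_add (add_le_add ?_ ?_) ?_) ?_)
    · exact hMb T ⟨S.T0, le_rfl⟩
    · simp
    · exact hMi
    · exact neg_exp S hp1 hp2 hL hL1 hLα hc hct hδ hδ1 fun x hx => (hdrift x hx).1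
  · fun_prop
  · fun_prop
  · exact Measurable.add (by fun_prop) hmJ

lemma neg_lim {p : ℝ} {x : ℝ} (hx : 0 ≤ x) :
    Tendsto (fun n : ℕ => ENNReal.ofReal ((x ^ 2 + 1 / ((n:ℝ) + 1)) ^ (-p / 2))) atTop
      (nhds (ENNReal.ofReal x ^ (-p))) := by
  have h1 : ENNReal.ofReal x ^ (-p) = ENNReal.ofReal (x ^ 2 + 0) ^ (-p / 2) := by
    rw [add_zero, ENNReal.ofReal_pow hx, ← ENNReal.rpow_natCast, ← ENNReal.rpow_mul]
    congr 1; push_cast; ring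
  have h2 : (fun n : ℕ => ENNReal.ofReal ((x ^ 2 + 1 / ((n:ℝ) + 1)) ^ (-p / 2))) =
      fun n : ℕ => ENNReal.ofReal (x ^ 2 + 1 / ((n:ℝ) + 1)) ^ (-p / 2) := by
    funext n; rw [ENNReal.ofReal_rpow_of_pos (by positivity)]
  rw [h1, h2]
  exact (ENNReal.continuous_rpow_const.tendsto _).comp
    (ENNReal.tendsto_ofReal (tendsto_one_div_add_atTop_nhds_zero_nat.const_add _))

theorem neg_moment (S : BSetup P T F μ W X) {p α ct c L s m : ℝ} (hp1 : 1 < p) (hp2 : p < 2)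
    (hL : 0 < L) (hL1 : L ≤ 1) (hLα : L ≤ α - (p - 1) / 2) (hc : p ≤ c) (hct : 0 ≤ ct)
    (hs : 1 ≤ s) (hm1 : (2 - p) * s ≤ m) (hm2 : (c - p) * s ≤ m)
    (hdrift : ∀ x : ℝ, 0 < x → α - ct * x ^ c ≤ x * μ x ∧ x * μ x ≤ ct * (1 + x ^ 2))
    (hM : ∫⁻ ω, ENNReal.ofReal ((1 + X 0 ω ^ 2) ^ (m / 2)) ∂P < ⊤) :
    ∫⁻ ω, (∫⁻ r in Set.Ioc 0 T, ENNReal.ofReal (X r ω) ^ (-p)) ^ s ∂P < ⊤ := by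
  obtain ⟨C, hC, hb⟩ := neg_moment_unif S hp1 hp2 hL hL1 hLα hc hct hs hm1 hm2 hdrift hM
  refine lt_of_le_of_lt ?_ hC.lt_top
  have mono1 : ∀ x : ℝ, Monotone fun n : ℕ =>
      ENNReal.ofReal ((x ^ 2 + 1 / ((n:ℝ) + 1)) ^ (-p / 2)) := by
    intro x n k hnk
    refine ENNReal.ofReal_le_ofReal (Real.rpow_le_rpow_of_nonpos (by positivity) ?_ (by linarith))
    have : (n:ℝ) ≤ k := by exact_mod_cast hnk
    gcongr
  have inner : ∀ ω, Tendsto (fun n : ℕ => ∫⁻ r in Set.Ioc 0 T,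
      ENNReal.ofReal ((X r ω ^ 2 + 1 / ((n:ℝ) + 1)) ^ (-p / 2))) atTop
      (nhds (∫⁻ r in Set.Ioc 0 T, ENNReal.ofReal (X r ω) ^ (-p))) := by
    intro ω
    have := (S.Xcont ω).measurable
    refine lintegral_tendsto_of_tendsto_of_monotone (fun n => ?_) ?_ ?_
    · exact Measurable.aemeasurable (by fun_prop)
    · exact Eventually.of_forall fun r => mono1 _
    · exact Eventually.of_forall fun r => neg_lim (S.Xnonneg _ _)
  have outer : Tendsto (fun n : ℕ => ∫⁻ ω, (∫⁻ r in Set.Ioc 0 T,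
      ENNReal.ofReal ((X r ω ^ 2 + 1 / ((n:ℝ) + 1)) ^ (-p / 2))) ^ s ∂P) atTop
      (nhds (∫⁻ ω, (∫⁻ r in Set.Ioc 0 T, ENNReal.ofReal (X r ω) ^ (-p)) ^ s ∂P)) := by
    refine lintegral_tendsto_of_tendsto_of_monotone (fun n => ?_) ?_ ?_
    · have := Xpath_meas S (fun x => ENNReal.ofReal ((x ^ 2 + 1 / ((n:ℝ) + 1)) ^ (-p / 2))) (by fun_prop)
      exact Measurable.aemeasurable (by fun_prop)
    · refine Eventually.of_forall fun ω n k hnk => ?_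
      refine ENNReal.rpow_le_rpow (lintegral_mono fun r => mono1 _ hnk) (by linarith)
    · exact Eventually.of_forall fun ω => (ENNReal.continuous_rpow_const.tendsto _).comp (inner ω)
  refine le_of_tendsto' outer fun n => hb _ (by positivity) ?_
  rw [div_le_one (by positivity)]
  have : (0:ℝ) ≤ n := by positivity
  linarith

lemma mu_bound {μ : ℝ → ℝ} {p α ct c k x : ℝ} (hp1 : 1 < p) (hα : 0 < α) (hc : p ≤ c) (hct : 0 ≤ ct)
    (hk1 : c - 1 ≤ k) (hk2 : 1 ≤ k)
    (hdrift : ∀ x : ℝ, 0 < x → α - ct * x ^ c ≤ x * μ x ∧ x * μ x ≤ ct * (1 + x ^ 2)) (hx : 0 ≤ x) :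
    ENNReal.ofReal (|μ x| ^ p) ≤ (ENNReal.ofReal (2 * ct + 1) ^ p * 2 ^ p) *
      (ENNReal.ofReal x ^ (-p) + ENNReal.ofReal ((1 + x ^ 2) ^ (k / 2)) ^ p) := by
  have hp0 : 0 < p := by linarith
  have key : ENNReal.ofReal |μ x| ≤ ENNReal.ofReal (2 * ct + 1) *
      ((ENNReal.ofReal x)⁻¹ + ENNReal.ofReal ((1 + x ^ 2) ^ (k / 2))) := by
    rcases hx.eq_or_lt with rfl | hx
    · simp only [ENNReal.ofReal_zero, ENNReal.inv_zero, top_add]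
      rw [ENNReal.mul_top]
      · exact le_top
      · simp; linarith
    · rw [← ENNReal.ofReal_inv_of_pos hx, ← ENNReal.ofReal_add (by positivity) (by positivity),
        ← ENNReal.ofReal_mul (by positivity)]
      refine ENNReal.ofReal_le_ofReal ?_
      obtain ⟨h1, h2⟩ := hdrift x hx
      have one : 1 ≤ 1 + x ^ 2 := by nlinarith [sq_nonneg x]
      have hx2 : x ≤ (1 + x ^ 2) ^ ((1:ℝ) / 2) := by
        rw [← Real.sqrt_eq_rpow]
        exact Real.le_sqrt_of_sq_le (by linarith)
      set Q := (1 + x ^ 2) ^ (k / 2) with hQ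
      have hQ0 : 0 < Q := by positivity
      have b1 : x ≤ Q := hx2.trans (Real.rpow_le_rpow_of_exponent_le one (by linarith))
      have b2 : x ^ (c - 1) ≤ Q := by
        calc _ ≤ ((1 + x ^ 2) ^ ((1:ℝ) / 2)) ^ (c - 1) :=
              Real.rpow_le_rpow hx.le hx2 (by linarith)
          _ = (1 + x ^ 2) ^ ((1:ℝ) / 2 * (c - 1)) := by rw [← Real.rpow_mul (by positivity)]
          _ ≤ _ := Real.rpow_le_rpow_of_exponent_le one (by linarith)
      have e1 : μ x ≤ ct * x⁻¹ + ct * x := by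
        have : μ x = x⁻¹ * (x * μ x) := by field_simp
        rw [this]
        calc _ ≤ x⁻¹ * (ct * (1 + x ^ 2)) := by gcongr
          _ = _ := by field_simp
      have e2 : -(ct * x ^ (c - 1)) ≤ μ x := by
        have : μ x = x⁻¹ * (x * μ x) := by field_simp
        rw [this]
        calc _ = x⁻¹ * (0 - ct * x ^ c) := by
              rw [Real.rpow_sub_one hx.ne']; field_simp; ring
          _ ≤ x⁻¹ * (α - ct * x ^ c) := by gcongr
          _ ≤ _ := by gcongr
      have f1 : ct * x ≤ ct * Q := by gcongr
      have f2 : ct * x ^ (c - 1) ≤ ct * Q := by gcongr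
      have f3 : 0 ≤ ct * x⁻¹ := by positivity
      have f4 : 0 < x⁻¹ := by positivity
      have f5 : 0 ≤ ct * Q := by positivity
      rw [abs_le]
      constructor <;> nlinarith
  calc _ = ENNReal.ofReal |μ x| ^ p := by rw [ENNReal.ofReal_rpow_of_nonneg (abs_nonneg _) hp0.le]
    _ ≤ (ENNReal.ofReal (2 * ct + 1) *
      ((ENNReal.ofReal x)⁻¹ + ENNReal.ofReal ((1 + x ^ 2) ^ (k / 2)))) ^ p := by gcongr
    _ ≤ ENNReal.ofReal (2 * ct + 1) ^ p * (2 ^ p * ((ENNReal.ofReal x)⁻¹ ^ p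
        + ENNReal.ofReal ((1 + x ^ 2) ^ (k / 2)) ^ p)) := by
        rw [ENNReal.mul_rpow_of_nonneg _ _ hp0.le]
        exact mul_le_mul' le_rfl (add_rpow_le4 _ _ hp0.le)
    _ = _ := by rw [ENNReal.inv_rpow, ← ENNReal.rpow_neg, mul_assoc]

theorem final_bound (S : BSetup P T F μ W X) {p α ct c k s : ℝ} (hp1 : 1 < p) (hp2 : p < 2)
    (hα : 0 < α) (hpα : p < 1 + 2 * α) (hc : p ≤ c) (hct : 0 ≤ ct)
    (hk1 : c - 1 ≤ k) (hk2 : 1 ≤ k) (hs : 1 ≤ s)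
    (hdrift : ∀ x : ℝ, 0 < x → α - ct * x ^ c ≤ x * μ x ∧ x * μ x ≤ ct * (1 + x ^ 2))
    (hM : ∫⁻ ω, ENNReal.ofReal ((1 + X 0 ω ^ 2) ^ (p * k * s / 2)) ∂P < ⊤) :
    ∫⁻ ω, (∫⁻ r in Set.Ioc 0 T, ENNReal.ofReal (|μ (X r ω)| ^ p)) ^ s ∂P < ⊤ := by
  have hs0 : 0 ≤ s := by linarith
  have hpk : k ≤ p * k := by nlinarith
  have hA := neg_moment S (L := min 1 (α - (p - 1) / 2)) hp1 hp2
    (lt_min one_pos (by linarith)) (min_le_left _ _) (min_le_right _ _) hc hct hs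
    (m := p * k * s) (by gcongr; linarith) (by gcongr; linarith) hdrift hM
  obtain ⟨M, hMt, hMb, hMi⟩ := S.unifmom hct (m := p * k * s) (by positivity) (fun x hx => (hdrift x hx).2) hM
  set Cc := (ENNReal.ofReal (2 * ct + 1) ^ p * 2 ^ p) with hCc
  have hCt : Cc ≠ ⊤ := ENNReal.mul_ne_top
    (ENNReal.rpow_ne_top_of_nonneg (by linarith) ENNReal.ofReal_ne_top)
    (ENNReal.rpow_ne_top_of_nonneg (by linarith) (by simp))
  have hD : Cc ^ s * 2 ^ s ≠ ⊤ := ENNReal.mul_ne_top (ENNReal.rpow_ne_top_of_nonneg hs0 hCt)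
    (ENNReal.rpow_ne_top_of_nonneg hs0 (by simp))
  have pt : ∀ ω, (∫⁻ r in Set.Ioc 0 T, ENNReal.ofReal (|μ (X r ω)| ^ p)) ^ s ≤
      (Cc ^ s * 2 ^ s) * ((∫⁻ r in Set.Ioc 0 T, ENNReal.ofReal (X r ω) ^ (-p)) ^ s
        + ENNReal.ofReal T ^ (s - 1) *
          ∫⁻ r in Set.Ioc 0 T, ENNReal.ofReal ((1 + X r ω ^ 2) ^ (p * k * s / 2))) := by
    intro ω
    have hXm := (S.Xcont ω).measurable
    have j := jensen_pow (ν := volume.restrict (Set.Ioc 0 T))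
      (h := fun r => ENNReal.ofReal ((1 + X r ω ^ 2) ^ (k / 2)) ^ p) (by fun_prop) hs
    simp only [MeasurableSet.univ, Measure.restrict_apply, univ_inter, Real.volume_Ioc, sub_zero] at j
    have e : ∀ r, (ENNReal.ofReal ((1 + X r ω ^ 2) ^ (k / 2)) ^ p) ^ s =
        ENNReal.ofReal ((1 + X r ω ^ 2) ^ (p * k * s / 2)) := by
      intro r
      rw [← ENNReal.rpow_mul, ENNReal.ofReal_rpow_of_nonneg (by positivity) (by positivity),
        ← Real.rpow_mul (by positivity)]
      congr 2; ring
    simp only [e] at j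
    calc _ ≤ (∫⁻ r in Set.Ioc 0 T, Cc * (ENNReal.ofReal (X r ω) ^ (-p)
            + ENNReal.ofReal ((1 + X r ω ^ 2) ^ (k / 2)) ^ p)) ^ s := by
          refine ENNReal.rpow_le_rpow (lintegral_mono fun r => ?_) hs0
          exact mu_bound hp1 hα hc hct hk1 hk2 hdrift (S.Xnonneg _ _)
      _ = Cc ^ s * ((∫⁻ r in Set.Ioc 0 T, ENNReal.ofReal (X r ω) ^ (-p))
            + ∫⁻ r in Set.Ioc 0 T, ENNReal.ofReal ((1 + X r ω ^ 2) ^ (k / 2)) ^ p) ^ s := by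
          rw [lintegral_const_mul' _ _ hCt, lintegral_add_left (by fun_prop),
            ENNReal.mul_rpow_of_nonneg _ _ hs0]
      _ ≤ Cc ^ s * (2 ^ s * ((∫⁻ r in Set.Ioc 0 T, ENNReal.ofReal (X r ω) ^ (-p)) ^ s
            + (∫⁻ r in Set.Ioc 0 T, ENNReal.ofReal ((1 + X r ω ^ 2) ^ (k / 2)) ^ p) ^ s)) :=
          mul_le_mul' le_rfl (add_rpow_le4 _ _ hs0)
      _ ≤ _ := by
          rw [← mul_assoc]
          exact mul_le_mul' le_rfl (add_le_add le_rfl j)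
  refine (lintegral_mono pt).trans_lt ?_
  have hm := Xpath_meas S (fun x => ENNReal.ofReal x ^ (-p)) (by fun_prop)
  rw [lintegral_const_mul' _ _ hD, lintegral_add_left (by fun_prop), lintegral_const_mul']
  · refine ENNReal.mul_lt_top hD.lt_top (ENNReal.add_lt_top.2 ⟨hA, ENNReal.mul_lt_top ?_ ?_⟩)
    · exact (ENNReal.rpow_ne_top_of_nonneg (by linarith) ENNReal.ofReal_ne_top).lt_top
    · exact hMi.trans_lt (ENNReal.mul_lt_top ENNReal.ofReal_lt_top hMt.lt_top)
  · exact ENNReal.rpow_ne_top_of_nonneg (by linarith) ENNReal.ofReal_ne_top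
end


section
variable {Ω : Type*} [m0 : MeasurableSpace Ω] {P : Measure Ω} [IsProbabilityMeasure P]
  {T : ℝ} {F : ℝ → MeasurableSpace Ω} {μ : ℝ → ℝ} {W X : ℝ → Ω → ℝ}

lemma moment_zero_bd {m N x : ℝ} (hm : 0 ≤ m) (hmN : m ≤ N) (hx : 0 ≤ x) :
    (1 + x ^ 2) ^ (m / 2) ≤ 2 ^ N * (1 + x ^ N) := by
  have hN : 0 ≤ N := hm.trans hmN
  have hxN : 0 ≤ x ^ N := by positivity
  calc (1 + x ^ 2) ^ (m / 2) ≤ ((1 + x) ^ 2) ^ (m / 2) :=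
        Real.rpow_le_rpow (by positivity) (by nlinarith) (by positivity)
    _ = (1 + x) ^ m := by
        rw [← Real.rpow_natCast, ← Real.rpow_mul (by positivity)]; congr 1; push_cast; ring
    _ ≤ (1 + x) ^ N := Real.rpow_le_rpow_of_exponent_le (by linarith) hmN
    _ ≤ _ := by
        rcases le_total x 1 with h | h
        · calc _ ≤ (2:ℝ) ^ N := Real.rpow_le_rpow (by positivity) (by linarith) hN
            _ = 2 ^ N * 1 := (mul_one _).symm
            _ ≤ _ := by gcongr; linarith
        · calc _ ≤ (2 * x) ^ N := Real.rpow_le_rpow (by positivity) (by linarith) hN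
            _ = 2 ^ N * x ^ N := Real.mul_rpow (by norm_num) hx
            _ ≤ _ := by gcongr; linarith

/-- Hoelder estimate on increments of an integral. -/
lemma holder_incr {h : ℝ → ℝ} (hh : Measurable h) {T p γ s t : ℝ} (hp : 1 < p) (hγ : γ = 1 - 1 / p)
    (hst : s < t) (hs : 0 ≤ s) (ht : t ≤ T) :
    ENNReal.ofReal (|∫ r in s..t, h r| / |t - s| ^ γ) ≤
      (∫⁻ r in Set.Ioc 0 T, ENNReal.ofReal (|h r| ^ p)) ^ (1 / p) := by
  have hp0 : 0 < p := by linarith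
  have hts : 0 < t - s := by linarith
  set I := ∫⁻ r in Set.Ioc 0 T, ENNReal.ofReal (|h r| ^ p)
  have h1 : ENNReal.ofReal |∫ r in s..t, h r| ≤ ∫⁻ r in Set.Ioc s t, ENNReal.ofReal |h r| := by
    rw [intervalIntegral.integral_of_le hst.le]
    have := enorm_integral_le_lintegral_enorm (μ := volume.restrict (Set.Ioc s t)) h
    simpa only [Real.enorm_eq_ofReal_abs] using this
  have j := jensen_pow (ν := volume.restrict (Set.Ioc s t))
      (h := fun r => ENNReal.ofReal |h r|) (by fun_prop) hp.le
  simp only [MeasurableSet.univ, Measure.restrict_apply, univ_inter, Real.volume_Ioc] at j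
  have h2 : ∫⁻ r in Set.Ioc s t, ENNReal.ofReal |h r| ^ p ≤ I := by
    simp only [ENNReal.ofReal_rpow_of_nonneg (abs_nonneg _) hp0.le]
    exact lintegral_mono_set (Set.Ioc_subset_Ioc hs ht)
  have h3 : ENNReal.ofReal |∫ r in s..t, h r| ≤ I ^ (1 / p) * ENNReal.ofReal (t - s) ^ γ := by
    calc _ = (ENNReal.ofReal |∫ r in s..t, h r| ^ p) ^ (1 / p) := by
          rw [← ENNReal.rpow_mul, mul_one_div_cancel hp0.ne', ENNReal.rpow_one]
      _ ≤ (ENNReal.ofReal (t - s) ^ (p - 1) * I) ^ (1 / p) := by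
          refine ENNReal.rpow_le_rpow ?_ (by positivity)
          exact (ENNReal.rpow_le_rpow h1 hp0.le).trans (j.trans (mul_le_mul' le_rfl h2))
      _ = _ := by
          rw [ENNReal.mul_rpow_of_nonneg _ _ (by positivity), ← ENNReal.rpow_mul, mul_comm]
          congr 2
          rw [hγ]; field_simp
  rw [abs_of_pos hts, ENNReal.ofReal_div_of_pos (by positivity)]
  refine ENNReal.div_le_of_le_mul ?_
  rwa [← ENNReal.ofReal_rpow_of_pos hts]

theorem core (S : BSetup P T F μ W X) {p α ct c q γ : ℝ} (hp1 : 1 < p) (hp2 : p < 2) (hq : 0 < q)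
    (hα : 0 < α) (hpα : p < 1 + 2 * α) (hc : p ≤ c) (hct : 0 ≤ ct) (hγ : γ = 1 - 1 / p)
    (hdrift : ∀ x : ℝ, 0 < x → α - ct * x ^ c ≤ x * μ x ∧ x * μ x ≤ ct * (1 + x ^ 2)) {N : ℝ}
    (hN : max (c - 1) 1 * max p q ≤ N)
    (hmom : ∫⁻ ω, ENNReal.ofReal ((X 0 ω) ^ N) ∂P < ⊤) :
    (∀ᵐ ω ∂P, ∀ s ∈ Set.Icc (0:ℝ) T, ∀ t ∈ Set.Icc (0:ℝ) T, s ≠ t →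
      ENNReal.ofReal (|(X t ω - W t ω) - (X s ω - W s ω)| / |t - s| ^ γ) ≤
        ENNReal.ofReal ((∫ r in (0:ℝ)..T, |μ (X r ω)| ^ p) ^ (1 / p))) ∧
    ∫⁻ ω, ENNReal.ofReal ((∫ r in (0:ℝ)..T, |μ (X r ω)| ^ p) ^ (1 / p)) ^ q ∂P < ⊤ := by
  have hp0 : 0 < p := by linarith
  set k := max (c - 1) 1 with hk
  have hk2 : 1 ≤ k := le_max_right _ _
  set s := max p q / p with hs
  have hs1 : 1 ≤ s := by rw [hs, le_div_iff₀ hp0, one_mul]; exact le_max_left _ _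
  have hqs : q / p ≤ s := by rw [hs]; gcongr; exact le_max_right _ _
  have hpks : p * k * s = k * max p q := by rw [hs]; field_simp
  have hM : ∫⁻ ω, ENNReal.ofReal ((1 + X 0 ω ^ 2) ^ (p * k * s / 2)) ∂P < ⊤ := by
    have h0 := S.Xmeas 0
    calc _ ≤ ∫⁻ ω, ENNReal.ofReal (2 ^ N) * (1 + ENNReal.ofReal (X 0 ω ^ N)) ∂P := by
          refine lintegral_mono fun ω => ?_
          rw [← ENNReal.ofReal_one, ← ENNReal.ofReal_add zero_le_one
            (Real.rpow_nonneg (S.Xnonneg _ _) _), ← ENNReal.ofReal_mul (by positivity)]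
          refine ENNReal.ofReal_le_ofReal (moment_zero_bd (by positivity) (by linarith) (S.Xnonneg _ _))
      _ < ⊤ := by
          rw [lintegral_const_mul' _ _ ENNReal.ofReal_ne_top, lintegral_add_left measurable_const]
          refine ENNReal.mul_lt_top ENNReal.ofReal_lt_top (ENNReal.add_lt_top.2 ⟨?_, hmom⟩)
          simp
  have hI := final_bound S hp1 hp2 hα hpα hc hct (le_max_left _ _) hk2 hs1 hdrift hM
  have hImeas := Xpath_meas S (fun x => ENNReal.ofReal (|μ x| ^ p))
    (by have := S.mumeas; fun_prop)
  have hfin : ∀ᵐ ω ∂P, (∫⁻ r in Set.Ioc 0 T, ENNReal.ofReal (|μ (X r ω)| ^ p)) < ⊤ := by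
    have := ae_lt_top (by fun_prop) hI.ne
    filter_upwards [this] with ω h
    by_contra hh
    rw [not_lt_top_iff.1 hh, ENNReal.top_rpow_of_pos (by linarith)] at h
    exact lt_irrefl _ h
  have hmeas : ∀ ω, Measurable fun r => μ (X r ω) := fun ω => S.mumeas.comp (S.Xcont ω).measurable
  have hJ : ∀ᵐ ω ∂P, ENNReal.ofReal ((∫ r in (0:ℝ)..T, |μ (X r ω)| ^ p) ^ (1 / p)) =
      (∫⁻ r in Set.Ioc 0 T, ENNReal.ofReal (|μ (X r ω)| ^ p)) ^ (1 / p) := by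
    filter_upwards [hfin] with ω h
    have hm := hmeas ω
    have hn : 0 ≤ ∫ r in (0:ℝ)..T, |μ (X r ω)| ^ p :=
      intervalIntegral.integral_nonneg S.T0 fun r _ => by positivity
    rw [← ENNReal.ofReal_rpow_of_nonneg hn (by positivity)]
    congr 1
    rw [intervalIntegral.integral_of_le S.T0, ofReal_integral_eq_lintegral_ofReal]
    · refine ⟨Measurable.aestronglyMeasurable ((continuous_abs.measurable.comp hm).pow_const p), ?_⟩
      rw [hasFiniteIntegral_iff_ofReal (Eventually.of_forall fun r => by positivity)]
      exact h
    · exact Eventually.of_forall fun r => by positivity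
  constructor
  · filter_upwards [hJ, S.sde, S.Xint] with ω hj hsde hintg
    rw [hj]
    have main : ∀ s ∈ Set.Icc (0:ℝ) T, ∀ t ∈ Set.Icc (0:ℝ) T, s < t →
        ENNReal.ofReal (|(X t ω - W t ω) - (X s ω - W s ω)| / |t - s| ^ γ) ≤
        (∫⁻ r in Set.Ioc 0 T, ENNReal.ofReal (|μ (X r ω)| ^ p)) ^ (1 / p) := by
      intro s hs t ht hst
      have e : (X t ω - W t ω) - (X s ω - W s ω) = ∫ r in s..t, μ (X r ω) := by
        have sub : ∀ u ∈ Set.Icc (0:ℝ) T, IntervalIntegrable (fun r => μ (X r ω)) volume 0 u := by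
          intro u hu
          refine hintg.mono_set ?_
          rw [Set.uIcc_of_le hu.1, Set.uIcc_of_le S.T0]
          exact Set.Icc_subset_Icc le_rfl hu.2
        rw [← intervalIntegral.integral_interval_sub_left (sub t ht) (sub s hs)]
        linarith [hsde s hs, hsde t ht]
      rw [e]
      exact holder_incr (hmeas ω) hp1 hγ hst hs.1 ht.2
    intro s hs t ht hne
    rcases lt_or_gt_of_ne hne with h | h
    · exact main s hs t ht h
    · have := main t ht s hs h
      rwa [abs_sub_comm (X s ω - W s ω), abs_sub_comm s t] at this
  · calc _ = ∫⁻ ω, (∫⁻ r in Set.Ioc 0 T, ENNReal.ofReal (|μ (X r ω)| ^ p)) ^ (q / p) ∂P := by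
          refine lintegral_congr_ae ?_
          filter_upwards [hJ] with ω h
          rw [h, ← ENNReal.rpow_mul]
          congr 1; field_simp
      _ ≤ ∫⁻ ω, (1 + (∫⁻ r in Set.Ioc 0 T, ENNReal.ofReal (|μ (X r ω)| ^ p)) ^ s) ∂P := by
          refine lintegral_mono fun ω => ?_
          set I := ∫⁻ r in Set.Ioc 0 T, ENNReal.ofReal (|μ (X r ω)| ^ p)
          rcases le_total I 1 with h | h
          · exact (ENNReal.rpow_le_one h (by positivity)).trans le_self_add
          · exact (ENNReal.rpow_le_rpow_of_exponent_le h hqs).trans le_add_self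
      _ < ⊤ := by
          rw [lintegral_add_left measurable_const]
          exact ENNReal.add_lt_top.2 ⟨by simp, hI⟩
end

noncomputable section
theorem temporal_Holder_regularity_Bessel_type_pathwise
    {Ω : Type*} [MeasurableSpace Ω] (P : Measure Ω) [IsProbabilityMeasure P]
    (T : ℝ) (hT : 0 ≤ T)
    (F : ℝ → MeasurableSpace Ω)
    (hF_mono : ∀ s t : ℝ, s ≤ t → F s ≤ F t)
    (hF_le : ∀ t : ℝ, F t ≤ (inferInstance : MeasurableSpace Ω))
    (μ : ℝ → ℝ) (hμmeas : Measurable μ)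
    (W X : ℝ → Ω → ℝ)
    (hW0 : ∀ ω, W 0 ω = 0)
    (hWadapt : ∀ t ∈ Set.Icc (0:ℝ) T, @Measurable Ω ℝ (F t) _ (W t))
    (hWcont : ∀ ω, ContinuousOn (fun t => W t ω) (Set.Icc 0 T))
    (hWlaw : ∀ s t : ℝ, 0 ≤ s → s ≤ t → t ≤ T →
      Measure.map (fun ω => W t ω - W s ω) P = gaussianReal 0 (Real.toNNReal (t - s)))
    (hWindep : ∀ s t : ℝ, 0 ≤ s → s ≤ t → t ≤ T →
      Indep (MeasurableSpace.comap (fun ω => W t ω - W s ω) inferInstance) (F s) P)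
    (hXnonneg : ∀ t ω, 0 ≤ X t ω)
    (hXadapt : ∀ t ∈ Set.Icc (0:ℝ) T, @Measurable Ω ℝ (F t) _ (X t))
    (hXcont : ∀ ω, ContinuousOn (fun t => X t ω) (Set.Icc 0 T))
    (hXint : ∀ᵐ ω ∂P, IntervalIntegrable (fun s => |μ (X s ω)|) volume 0 T)
    (hSDE : ∀ t ∈ Set.Icc (0:ℝ) T, ∀ᵐ ω ∂P,
      X t ω = X 0 ω + (∫ s in (0:ℝ)..t, μ (X s ω)) + W t ω)
    (α q ε p ct c : ℝ) (hα : 0 < α) (hq : 0 < q)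
    (hε1 : max (α - 1 / 2) 0 / (1 + 2 * α) < ε) (hε2 : ε < 2 * α / (1 + 2 * α))
    (hp : p = (1 + 2 * α) / (ε * (1 + 2 * α) + 1))
    (hc : p ≤ c) (hct : 0 ≤ ct)
    (hdrift : ∀ x : ℝ, 0 < x → α - ct * x ^ c ≤ x * μ x ∧ x * μ x ≤ ct * (1 + x ^ 2))
    (hmom : ∫⁻ ω, ENNReal.ofReal ((X 0 ω) ^ (max (c - 1) 1 *
        max p (max q ((q - p) * (1 + 2 * α + p) / (1 + 2 * α - p))))) ∂P < ⊤) :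
    (∫⁻ ω, (⨆ s ∈ Set.Icc (0:ℝ) T, ⨆ t ∈ Set.Icc (0:ℝ) T, ⨆ _ : s ≠ t,
          ENNReal.ofReal (|(X t ω - W t ω) - (X s ω - W s ω)|
            / |t - s| ^ (2 * α / (1 + 2 * α) - ε))) ^ q ∂P) ^ (1 / q)
      ≤ eLpNorm (fun ω => (∫ r in (0:ℝ)..T, |μ (X r ω)| ^ p) ^ (1 / p)) (ENNReal.ofReal q) P
    ∧ eLpNorm (fun ω => (∫ r in (0:ℝ)..T, |μ (X r ω)| ^ p) ^ (1 / p)) (ENNReal.ofReal q) P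
        < ⊤ := by
  set D := 1 + 2 * α with hD
  have hD0 : 0 < D := by linarith
  have hε1' : max (α - 1 / 2) 0 < ε * D := (div_lt_iff₀ hD0).1 hε1
  have hε2' : ε * D < 2 * α := (lt_div_iff₀ hD0).1 hε2
  have ha := (le_max_left (α - 1 / 2) 0).trans_lt hε1'
  have hb := (le_max_right (α - 1 / 2) 0).trans_lt hε1'
  have hden : 0 < ε * D + 1 := by linarith
  have hp1 : 1 < p := by rw [hp, lt_div_iff₀ hden]; linarith
  have hp2 : p < 2 := by rw [hp, div_lt_iff₀ hden]; linarith
  have hpα : p < D := by rw [hp, div_lt_iff₀ hden]; nlinarith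
  have hγ : 2 * α / D - ε = 1 - 1 / p := by
    rw [hp, one_div_div]; field_simp; rw [hD]; ring
  set cl : ℝ → ℝ := fun r => max 0 (min r T) with hcl
  have hclc : Continuous cl := by fun_prop
  have hclm : ∀ r, cl r ∈ Set.Icc 0 T := fun r => ⟨le_max_left _ _, max_le hT (min_le_right _ _)⟩
  have hcle : ∀ r ∈ Set.Icc 0 T, cl r = r := fun r hr => by
    simp only [hcl]; rw [min_eq_left hr.2, max_eq_right hr.1]
  have h0m : (0:ℝ) ∈ Set.Icc 0 T := ⟨le_rfl, hT⟩
  have hXtc : ∀ ω, Continuous fun r => X (cl r) ω := fun ω => (hXcont ω).comp_continuous hclc hclm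
  have hWtc : ∀ ω, Continuous fun r => W (cl r) ω := fun ω => (hWcont ω).comp_continuous hclc hclm
  have hXi : ∀ᵐ ω ∂P, IntervalIntegrable (fun s => μ (X (cl s) ω)) volume 0 T := by
    filter_upwards [hXint] with ω h
    have h1 : Measurable fun s => μ (X (cl s) ω) := hμmeas.comp (hXtc ω).measurable
    rw [intervalIntegrable_iff_integrableOn_Ioc_of_le hT] at h ⊢
    have h2 : IntegrableOn (fun s => |μ (X (cl s) ω)|) (Set.Ioc 0 T) volume := by
      refine h.congr_fun (fun s hs => ?_) measurableSet_Ioc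
      simp only [hcle s ⟨hs.1.le, hs.2⟩]
    exact (integrable_norm_iff h1.aestronglyMeasurable).1 h2
  have hcong : ∀ (ω : Ω) (G : ℝ → ℝ) (t : ℝ), t ∈ Set.Icc 0 T →
      ∫ s in (0:ℝ)..t, G (X (cl s) ω) = ∫ s in (0:ℝ)..t, G (X s ω) := by
    intro ω G t ht
    refine intervalIntegral.integral_congr fun s hs => ?_
    rw [Set.uIcc_of_le ht.1] at hs
    simp only [hcle s ⟨hs.1, hs.2.trans ht.2⟩]
  have hsde : ∀ᵐ ω ∂P, ∀ t ∈ Set.Icc (0:ℝ) T, X (cl t) ω =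
      X (cl 0) ω + (∫ s in (0:ℝ)..t, μ (X (cl s) ω)) + W (cl t) ω := by
    obtain ⟨Q, hQc, hQd⟩ := TopologicalSpace.exists_countable_dense (Set.Icc (0:ℝ) T)
    have hall : ∀ᵐ ω ∂P, ∀ t ∈ Q, X (t:ℝ) ω = X 0 ω + (∫ s in (0:ℝ)..(t:ℝ), μ (X s ω)) + W t ω :=
      (ae_ball_iff hQc).2 fun t _ => hSDE t t.2
    filter_upwards [hall, hXi] with ω h hi
    have hprim := intervalIntegral.continuousOn_primitive_interval' hi (a := 0) (by simp)
    rw [Set.uIcc_of_le hT] at hprim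
    have hE := Continuous.ext_on hQd
      (f := fun t : Set.Icc (0:ℝ) T => X (cl t) ω)
      (g := fun t : Set.Icc (0:ℝ) T => X (cl 0) ω + (∫ s in (0:ℝ)..(t:ℝ), μ (X (cl s) ω)) + W (cl t) ω)
      ((hXtc ω).comp continuous_subtype_val)
      ((continuous_const.add (continuousOn_iff_continuous_restrict.1 hprim)).add
        ((hWtc ω).comp continuous_subtype_val))
      (fun t ht => by
        simp only [hcle t t.2, hcle 0 h0m, hcong ω μ t t.2]
        exact h t ht)
    intro t ht
    exact congrFun hE ⟨t, ht⟩
  have S : BSetup P T F μ (fun r ω => W (cl r) ω) (fun r ω => X (cl r) ω) :=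
    { T0 := hT
      mono := hF_mono
      le := hF_le
      mumeas := hμmeas
      Wadapt := fun t ht => by simpa only [hcle t ht] using hWadapt t ht
      Wcont := hWtc
      law := fun s t h1 h2 h3 => by
        simpa only [hcle t ⟨h1.trans h2, h3⟩, hcle s ⟨h1, h2.trans h3⟩] using hWlaw s t h1 h2 h3
      indep := fun s t h1 h2 h3 => by
        simpa only [hcle t ⟨h1.trans h2, h3⟩, hcle s ⟨h1, h2.trans h3⟩] using hWindep s t h1 h2 h3
      Xnonneg := fun t ω => hXnonneg _ _
      Xadapt := fun t ht => by simpa only [hcle t ht] using hXadapt t ht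
      Xcont := hXtc
      Xmeas := fun t => (hXadapt _ (hclm t)).mono (hF_le _) le_rfl
      Xint := hXi
      sde := hsde }
  have hN : max (c - 1) 1 * max p q ≤ max (c - 1) 1 *
        max p (max q ((q - p) * (D + p) / (D - p))) := by
    have : 0 ≤ max (c - 1) 1 := zero_le_one.trans (le_max_right _ _)
    gcongr
    exact le_max_left _ _
  obtain ⟨c1, c2⟩ := core S hp1 hp2 hq hα hpα hc hct hγ hdrift hN
    (by simpa only [hcle 0 h0m] using hmom)
  have hcT : ∀ ω, ∫ r in (0:ℝ)..T, |μ (X (cl r) ω)| ^ p = ∫ r in (0:ℝ)..T, |μ (X r ω)| ^ p :=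
    fun ω => hcong ω (fun x => |μ x| ^ p) T ⟨hT, le_rfl⟩
  simp only [hcT] at c1 c2
  have hJ0 : ∀ ω, 0 ≤ (∫ r in (0:ℝ)..T, |μ (X r ω)| ^ p) ^ (1 / p) := fun ω =>
    Real.rpow_nonneg (intervalIntegral.integral_nonneg hT fun r _ => by positivity) _
  have hnorm : eLpNorm (fun ω => (∫ r in (0:ℝ)..T, |μ (X r ω)| ^ p) ^ (1 / p)) (ENNReal.ofReal q) P
      = (∫⁻ ω, ENNReal.ofReal ((∫ r in (0:ℝ)..T, |μ (X r ω)| ^ p) ^ (1 / p)) ^ q ∂P) ^ (1 / q) := by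
    rw [eLpNorm_eq_lintegral_rpow_enorm_toReal (by simpa using hq) ENNReal.ofReal_ne_top,
      ENNReal.toReal_ofReal hq.le]
    simp only [Real.enorm_of_nonneg (hJ0 _)]
  rw [hnorm]
  refine ⟨?_, ENNReal.rpow_lt_top_of_nonneg (by positivity) c2.ne⟩
  refine ENNReal.rpow_le_rpow (lintegral_mono_ae ?_) (by positivity)
  filter_upwards [c1] with ω h
  refine ENNReal.rpow_le_rpow ?_ hq.le
  refine iSup₂_le fun s hs => iSup₂_le fun t ht => iSup_le fun hne => ?_
  have := h s hs t ht hne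
  rwa [hcle s hs, hcle t ht] at this

end
end

section
/- Let T ∈ [0,∞), c ∈ (0,∞), let f : [0,∞) → ℝ be Borel measurable, let (Ω, 𝓕, ℙ) be a probability space, let X : [0,T]×Ω → [0,∞) be a stochastic process (each X_t measurable), and assume that sup_{t∈[0,T]} ℙ[X_t = 0] = 0 and that |f(x)−f(y)| ≤ c|x−y|·( 1/x + 1/y + 1/(xy) + x^c + y^c ) for all x, y ∈ (0,∞). Then for all θ, δ, q ∈ (0,∞) and γ ∈ (0,1] it holds that sup_{s,t∈[0,T], s≠t} ‖ f(X_t) − f(X_s) ‖_{L^q(Ω;ℝ)} / |t−s|^{γθ} ≤ c · 7^{max{1, 1/(q(1+δ))}} · ( sup_{s,t∈[0,T], s≠t} ‖ X_t − X_s ‖_{L^{qγ(1/δ+1)}(Ω;ℝ)} / |t−s|^θ )^γ · sup_{u∈[0,T]} [ 1 + ‖ 1/X_u ‖_{L^{q(1+γ)(1+δ)}(Ω;ℝ)}^{1+γ} + ‖ X_u ‖_{L^{q(1+δ)(max{1/γ, c+1} − γ)}(Ω;ℝ)}^{max{1/γ, c+1} − γ} ]. -/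
open MeasureTheory ProbabilityTheory Filter Set
open scoped ENNReal NNReal

noncomputable section

lemma aux_last {P Q α β : ℝ} (hQ : 0 < Q) (hQP : Q ≤ P) (hα : 0 ≤ α) (hα2 : α ≤ 1/2)
    (hβ : 0 ≤ β) (hαβ : α + β ≤ 1) : P ^ α * Q ^ β ≤ 1 + P / 4 + Q := by
  have hP : 0 < P := lt_of_lt_of_le hQ hQP
  have hs : P ^ (1/2:ℝ) * P ^ (1/2:ℝ) = P := by rw [← Real.rpow_add hP]; norm_num
  have ht : Q ^ (1/2:ℝ) * Q ^ (1/2:ℝ) = Q := by rw [← Real.rpow_add hQ]; norm_num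
  rcases le_total 1 Q with h1 | h1
  · have h2 : Q ^ β ≤ Q ^ ((1/2 - α) + 1/2) := Real.rpow_le_rpow_of_exponent_le h1 (by linarith)
    have h3 : Q ^ (1/2 - α) ≤ P ^ (1/2 - α) := Real.rpow_le_rpow hQ.le hQP (by linarith)
    have h4 : P ^ α * P ^ (1/2 - α) = P ^ (1/2:ℝ) := by rw [← Real.rpow_add hP]; ring_nf
    rw [Real.rpow_add hQ] at h2
    have : P ^ α * Q ^ β ≤ P ^ (1/2:ℝ) * Q ^ (1/2:ℝ) := by
      rw [← h4, mul_assoc]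
      gcongr
      exact h2.trans (by gcongr)
    nlinarith [sq_nonneg (P ^ (1/2:ℝ) / 2 - Q ^ (1/2:ℝ))]
  · have h2 : Q ^ β ≤ 1 := Real.rpow_le_one hQ.le h1 hβ
    have h3 : P ^ α * Q ^ β ≤ P ^ α * 1 := by gcongr
    rcases le_total 1 P with h4 | h4
    · have := Real.rpow_le_rpow_of_exponent_le h4 hα2
      nlinarith [sq_nonneg (P ^ (1/2:ℝ) / 2 - 1)]
    · have := Real.rpow_le_one hP.le h4 hα
      linarith

lemma rpow_le_one_add {y a b : ℝ} (hy : 0 < y) (ha : 0 ≤ a) (hab : a ≤ b) : y ^ a ≤ 1 + y ^ b := by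
  have := Real.rpow_pos_of_pos hy b
  rcases le_total 1 y with h | h
  · have := Real.rpow_le_rpow_of_exponent_le h hab; linarith
  · have := Real.rpow_le_one hy.le h ha; linarith

lemma pointwise_wlog {x y c γ : ℝ} (hx : 0 < x) (hxy : x ≤ y) (hc : 0 < c) (hγ : 0 < γ)
    (hγ1 : γ ≤ 1) :
    y ^ (1 - γ) * (1 / x + 1 / y + 1 / (x * y) + x ^ c + y ^ c) ≤
      3 + (9/4 - γ / (1 + γ)) * (x ^ (-(1 + γ)) + y ^ (-(1 + γ)))
        + (5/4 + γ / (1 + γ)) * (x ^ (max (1 / γ) (c + 1) - γ) + y ^ (max (1 / γ) (c + 1) - γ)) := by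
  have hy : 0 < y := hx.trans_le hxy
  set p := max (1 / γ) (c + 1) - γ with hp
  set η := γ / (1 + γ) with hη
  have hη0 : 0 ≤ η := by positivity
  have hη1 : η ≤ 1/2 := by rw [hη, div_le_div_iff₀ (by positivity) (by positivity)]; linarith
  have hηγ : 1 - η = 1 / (1 + γ) := by rw [hη]; field_simp; ring
  have hp1 : 1 / γ - γ ≤ p := by rw [hp]; linarith [le_max_left (1/γ) (c+1)]
  have hp2 : c + 1 - γ ≤ p := by rw [hp]; linarith [le_max_right (1/γ) (c+1)]
  have hg2 : 2 * (1 - γ) ≤ 1 / γ - γ := by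
    rw [le_sub_iff_add_le, le_div_iff₀ hγ]; nlinarith [sq_nonneg (γ - 1)]
  have hp0 : 0 < p := by linarith
  have hA : y ^ (-(1 + γ)) ≤ x ^ (-(1 + γ)) :=
    Real.rpow_le_rpow_of_nonpos hx hxy (by linarith)
  have hA0 : 0 < y ^ (-(1 + γ)) := Real.rpow_pos_of_pos hy _
  have hB : x ^ p ≤ y ^ p := Real.rpow_le_rpow hx.le hxy hp0.le
  have hB0 : 0 < x ^ p := Real.rpow_pos_of_pos hx _
  -- term 1
  have t1 : y ^ (1 - γ) * (1 / x) ≤ (1 - η) * x ^ (-(1 + γ)) + η * (1 + y ^ p) := by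
    have h := Real.geom_mean_le_arith_mean2_weighted (w₁ := 1 - η) (w₂ := η)
      (p₁ := x ^ (-(1 + γ))) (p₂ := y ^ (1 / γ - γ)) (by linarith) hη0 (by positivity)
      (by positivity) (by ring)
    rw [← Real.rpow_mul hx.le, ← Real.rpow_mul hy.le] at h
    have e1 : -(1 + γ) * (1 - η) = -1 := by rw [hηγ]; field_simp
    have e2 : (1 / γ - γ) * η = 1 - γ := by rw [hη]; field_simp; ring
    rw [e1, e2, Real.rpow_neg_one] at h
    have h2 : y ^ (1 / γ - γ) ≤ 1 + y ^ p := rpow_le_one_add hy (by linarith) hp1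
    have := mul_le_mul_of_nonneg_left h2 hη0
    rw [one_div, mul_comm]; linarith
  have e3 : y ^ (1 - γ) * (1 / y) = y ^ (-γ) := by
    rw [one_div, ← Real.rpow_neg_one, ← Real.rpow_add hy]; ring_nf
  have t2 : y ^ (1 - γ) * (1 / y) ≤ (1 - η) + η * y ^ (-(1 + γ)) := by
    have h := Real.geom_mean_le_arith_mean2_weighted (w₁ := 1 - η) (w₂ := η)
      (p₁ := 1) (p₂ := y ^ (-(1 + γ))) (by linarith) hη0 (by positivity)
      (by positivity) (by ring)
    rw [← Real.rpow_mul hy.le, Real.one_rpow] at h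
    have e2 : -(1 + γ) * η = -γ := by rw [hη]; field_simp
    rw [e2] at h
    rw [e3]; linarith
  have t3 : y ^ (1 - γ) * (1 / (x * y)) ≤ x ^ (-(1 + γ)) := by
    have e : y ^ (1 - γ) * (1 / (x * y)) = y ^ (-γ) * x ^ (-1 : ℝ) := by
      rw [← e3, Real.rpow_neg_one]; field_simp
    have h : y ^ (-γ) ≤ x ^ (-γ) := Real.rpow_le_rpow_of_nonpos hx hxy (by linarith)
    have e' : x ^ (-(1 + γ)) = x ^ (-γ) * x ^ (-1 : ℝ) := by
      rw [← Real.rpow_add hx]; ring_nf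
    rw [e, e']; gcongr
  have t4 : y ^ (1 - γ) * x ^ c ≤ 1 + y ^ p / 4 + x ^ p := by
    have h := aux_last (P := y ^ p) (Q := x ^ p) (α := (1 - γ) / p) (β := c / p) hB0 hB
      (div_nonneg (by linarith) hp0.le) (by rw [div_le_iff₀ hp0]; linarith) (by positivity)
      (by rw [← add_div, div_le_iff₀ hp0]; linarith)
    rwa [← Real.rpow_mul hx.le, ← Real.rpow_mul hy.le, mul_div_cancel₀ _ hp0.ne',
      mul_div_cancel₀ _ hp0.ne'] at h
  have t5 : y ^ (1 - γ) * y ^ c ≤ 1 + y ^ p := by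
    rw [← Real.rpow_add hy]
    exact rpow_le_one_add hy (by linarith) (by linarith)
  have : 0 ≤ η * x ^ p := by positivity
  have k1 : 0 ≤ (1/2 - η) * (x ^ (-(1 + γ))) := mul_nonneg (by linarith) (by positivity)
  have k2 : 0 ≤ (9/4 - 2 * η) * (y ^ (-(1 + γ))) := mul_nonneg (by linarith) (by positivity)
  have k3 : 0 ≤ (1/2 - η) * (x ^ (-(1 + γ)) - y ^ (-(1 + γ))) :=
    mul_nonneg (by linarith) (by linarith)
  nlinarith

lemma pointwise_real {x y c γ : ℝ} (hx : 0 < x) (hy : 0 < y) (hc : 0 < c) (hγ : 0 < γ)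
    (hγ1 : γ ≤ 1) :
    |x - y| * (1 / x + 1 / y + 1 / (x * y) + x ^ c + y ^ c) ≤
      |x - y| ^ γ * (3 + (9/4 - γ / (1 + γ)) * (x ^ (-(1 + γ)) + y ^ (-(1 + γ)))
        + (5/4 + γ / (1 + γ)) * (x ^ (max (1 / γ) (c + 1) - γ) + y ^ (max (1 / γ) (c + 1) - γ))) := by
  wlog hxy : x ≤ y generalizing x y
  · have := this hy hx (le_of_not_ge hxy)
    rw [abs_sub_comm]
    convert this using 2 <;> ring
  rcases hxy.eq_or_lt with h | h
  · subst h; simp [Real.zero_rpow hγ.ne']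
  have hd : 0 < |x - y| := abs_pos.2 (sub_ne_zero.2 h.ne)
  have e : |x - y| = |x - y| ^ γ * |x - y| ^ (1 - γ) := by
    rw [← Real.rpow_add hd]; simp
  have hle : |x - y| ≤ y := by rw [abs_sub_comm, abs_of_pos (by linarith)]; linarith
  have h2 : |x - y| ^ (1 - γ) ≤ y ^ (1 - γ) := Real.rpow_le_rpow hd.le hle (by linarith)
  calc _ = |x - y| ^ γ * (|x - y| ^ (1 - γ) * (1 / x + 1 / y + 1 / (x * y) + x ^ c + y ^ c)) := by
        rw [← mul_assoc, ← e]
    _ ≤ |x - y| ^ γ * (y ^ (1 - γ) * (1 / x + 1 / y + 1 / (x * y) + x ^ c + y ^ c)) := by gcongr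
    _ ≤ _ := by gcongr; exact pointwise_wlog hx hxy hc hγ hγ1

lemma quasi_minkowski {Ω : Type*} [MeasurableSpace Ω] (P : Measure Ω) {r : ℝ} (hr : 0 < r)
    (Z : Fin 5 → Ω → ℝ≥0∞) (hZ : ∀ i, Measurable (Z i)) :
    (∫⁻ ω, (∑ i, Z i ω) ^ r ∂P) ^ (1 / r) ≤
      (7 : ℝ≥0∞) ^ (max 1 (1 / r) - 1) * ∑ i, (∫⁻ ω, Z i ω ^ r ∂P) ^ (1 / r) := by
  have hgen : ∀ (s : Finset (Fin 5)), Measurable (fun ω => ∑ i ∈ s, Z i ω) := fun s =>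
    Finset.measurable_fun_sum s (fun i _ => hZ i)
  rcases le_total 1 r with h | h
  · have hm : max 1 (1 / r) = 1 := max_eq_left (by rw [div_le_one hr]; exact h)
    rw [hm, sub_self, ENNReal.rpow_zero, one_mul]
    have : ∀ s : Finset (Fin 5), (∫⁻ ω, (∑ i ∈ s, Z i ω) ^ r ∂P) ^ (1 / r) ≤
        ∑ i ∈ s, (∫⁻ ω, Z i ω ^ r ∂P) ^ (1 / r) := by
      intro s
      induction s using Finset.induction_on with
      | empty => simp [hr]
      | insert a s ha ih =>
        simp only [Finset.sum_insert ha]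
        refine (ENNReal.lintegral_Lp_add_le (hZ a).aemeasurable (hgen s).aemeasurable h).trans ?_
        gcongr
    exact this Finset.univ
  · have h1 : 1 ≤ 1 / r := by rw [le_div_iff₀ hr]; linarith
    have hm : max 1 (1 / r) = 1 / r := max_eq_right h1
    rw [hm]
    have hsub : ∀ s : Finset (Fin 5), ∀ ω, (∑ i ∈ s, Z i ω) ^ r ≤ ∑ i ∈ s, Z i ω ^ r := by
      intro s ω
      induction s using Finset.induction_on with
      | empty => simp [hr]
      | insert a s ha ih =>
        simp only [Finset.sum_insert ha]
        refine (ENNReal.rpow_add_le_add_rpow _ _ hr.le h).trans ?_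
        gcongr
    calc (∫⁻ ω, (∑ i, Z i ω) ^ r ∂P) ^ (1 / r)
        ≤ (∫⁻ ω, ∑ i, Z i ω ^ r ∂P) ^ (1 / r) := by
          gcongr with ω
          exact hsub _ ω
      _ = (∑ i, ∫⁻ ω, Z i ω ^ r ∂P) ^ (1 / r) := by
          rw [lintegral_finsetSum _ (fun i _ => (hZ i).pow_const r)]
      _ ≤ _ := ENNReal.rpow_sum_le_const_mul_sum_rpow _ _ h1
      _ ≤ _ := by
          gcongr
          simp; norm_num

lemma lint_norm_pow {Ω : Type*} [MeasurableSpace Ω] (P : Measure Ω) {r a : ℝ} (hr : 0 < r) (ha : 0 < a)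
    (Y : Ω → ℝ≥0∞) :
    (∫⁻ ω, (Y ω ^ a) ^ r ∂P) ^ (1 / r) = ((∫⁻ ω, Y ω ^ (r * a) ∂P) ^ (1 / (r * a))) ^ a := by
  rw [← ENNReal.rpow_mul]
  congr 1
  · congr 1; ext ω; rw [← ENNReal.rpow_mul, mul_comm]
  · field_simp

lemma norm_const_mul {Ω : Type*} [MeasurableSpace Ω] (P : Measure Ω) {r : ℝ} (hr : 0 < r)
    (w : ℝ≥0∞) (Y : Ω → ℝ≥0∞) (hY : Measurable Y) :
    (∫⁻ ω, (w * Y ω) ^ r ∂P) ^ (1 / r) = w * (∫⁻ ω, Y ω ^ r ∂P) ^ (1 / r) := by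
  simp_rw [ENNReal.mul_rpow_of_nonneg _ _ hr.le]
  rw [lintegral_const_mul _ (hY.pow_const r), ENNReal.mul_rpow_of_nonneg _ _ (by positivity),
    ← ENNReal.rpow_mul, mul_one_div_cancel hr.ne', ENNReal.rpow_one]

lemma norm_const_mul' {Ω : Type*} [MeasurableSpace Ω] (P : Measure Ω) {r a : ℝ} (hr : 0 < r)
    (ha : 0 < a) (w : ℝ≥0∞) (Y : Ω → ℝ≥0∞) (hY : Measurable Y) :
    (∫⁻ ω, (w * Y ω ^ a) ^ r ∂P) ^ (1 / r) =
      w * ((∫⁻ ω, Y ω ^ (r * a) ∂P) ^ (1 / (r * a))) ^ a := by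
  rw [norm_const_mul P hr w _ (hY.pow_const a), lint_norm_pow P hr ha]

lemma holder_aux {Ω : Type*} [MeasurableSpace Ω] (P : Measure Ω) {q γ δ : ℝ} (hq : 0 < q)
    (hγ : 0 < γ) (hδ : 0 < δ) (D G : Ω → ℝ≥0∞) (hD : Measurable D) (hG : Measurable G) :
    (∫⁻ ω, (D ω ^ γ * G ω) ^ q ∂P) ^ (1 / q) ≤
      ((∫⁻ ω, D ω ^ (q * γ * (1 / δ + 1)) ∂P) ^ (1 / (q * γ * (1 / δ + 1)))) ^ γ *
        (∫⁻ ω, G ω ^ (q * (1 + δ)) ∂P) ^ (1 / (q * (1 + δ))) := by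
  have hpq : (1 / δ + 1).HolderConjugate (1 + δ) := by
    rw [Real.holderConjugate_iff]
    constructor
    · have : 0 < 1 / δ := by positivity
      linarith
    · field_simp; ring
  have hD' : Measurable (fun ω => (D ω ^ γ) ^ q) := (hD.pow_const _).pow_const _
  have hG' : Measurable (fun ω => G ω ^ q) := hG.pow_const _
  have h := ENNReal.lintegral_mul_le_Lp_mul_Lq P hpq hD'.aemeasurable hG'.aemeasurable
  simp only [Pi.mul_apply] at h
  have h2 := ENNReal.rpow_le_rpow h (z := 1 / q) (by positivity)
  simp_rw [ENNReal.mul_rpow_of_nonneg _ _ hq.le]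
  refine h2.trans (le_of_eq ?_)
  rw [ENNReal.mul_rpow_of_nonneg _ _ (by positivity)]
  simp_rw [← ENNReal.rpow_mul]
  have e1 : γ * (q * (1 / δ + 1)) = q * γ * (1 / δ + 1) := by ring
  have e2 : 1 / (1 / δ + 1) * (1 / q) = 1 / (q * γ * (1 / δ + 1)) * γ := by field_simp
  have e3 : 1 / (1 + δ) * (1 / q) = 1 / (q * (1 + δ)) := by field_simp
  rw [e2, e3, mul_assoc γ q, e1]

lemma seven_aux {S a₁ a₂ b₁ b₂ : ℝ≥0∞} {η : ℝ} (hη0 : 0 ≤ η) (hη1 : η ≤ 1/2)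
    (h1 : 1 + a₁ + b₁ ≤ S) (h2 : 1 + a₂ + b₂ ≤ S) :
    3 + ENNReal.ofReal (9/4 - η) * a₁ + ENNReal.ofReal (9/4 - η) * a₂ +
      ENNReal.ofReal (5/4 + η) * b₁ + ENNReal.ofReal (5/4 + η) * b₂ ≤ 7 * S := by
  rcases eq_or_ne S ⊤ with hS | hS
  · rw [hS, ENNReal.mul_top (by norm_num)]; exact le_top
  have f1 := ne_top_of_le_ne_top hS h1
  have f2 := ne_top_of_le_ne_top hS h2
  simp only [ENNReal.add_ne_top] at f1 f2
  obtain ⟨⟨-, fa1⟩, fb1⟩ := f1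
  obtain ⟨⟨-, fa2⟩, fb2⟩ := f2
  lift S to ℝ≥0 using hS
  lift a₁ to ℝ≥0 using fa1
  lift a₂ to ℝ≥0 using fa2
  lift b₁ to ℝ≥0 using fb1
  lift b₂ to ℝ≥0 using fb2
  have h1' : (1:ℝ) + a₁ + b₁ ≤ S := by exact_mod_cast h1
  have h2' : (1:ℝ) + a₂ + b₂ ≤ S := by exact_mod_cast h2
  obtain ⟨w₁, hw₁⟩ : ∃ w : ℝ≥0, (w : ℝ) = 9/4 - η := ⟨NNReal.mk (9/4 - η) (by linarith), rfl⟩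
  obtain ⟨w₂, hw₂⟩ : ∃ w : ℝ≥0, (w : ℝ) = 5/4 + η := ⟨NNReal.mk (5/4 + η) (by linarith), rfl⟩
  rw [← hw₁, ← hw₂, ENNReal.ofReal_coe_nnreal, ENNReal.ofReal_coe_nnreal]
  norm_cast
  rw [← NNReal.coe_le_coe]
  push_cast
  rw [hw₁, hw₂]
  show (3:ℝ) + (9/4 - η) * a₁ + (9/4 - η) * a₂ + (5/4 + η) * b₁ + (5/4 + η) * b₂ ≤ 7 * S
  have p1 := a₁.coe_nonneg
  have p2 := a₂.coe_nonneg
  have p3 := b₁.coe_nonneg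
  have p4 := b₂.coe_nonneg
  have q1 := mul_le_mul_of_nonneg_left (show (a₁:ℝ) ≤ S - 1 - b₁ by linarith)
    (show 0 ≤ 9/4 - η by linarith)
  have q2 := mul_le_mul_of_nonneg_left (show (a₂:ℝ) ≤ S - 1 - b₂ by linarith)
    (show 0 ≤ 9/4 - η by linarith)
  have q3 := mul_le_mul_of_nonneg_left (show (b₁:ℝ) ≤ S - 1 by linarith)
    (show 0 ≤ 5/4 + η by linarith)
  have q4 := mul_le_mul_of_nonneg_left (show (b₂:ℝ) ≤ S - 1 by linarith)
    (show 0 ≤ 5/4 + η by linarith)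
  have r1 : 0 ≤ (9/4 - η) * (b₁:ℝ) := mul_nonneg (by linarith) p3
  have r2 : 0 ≤ (9/4 - η) * (b₂:ℝ) := mul_nonneg (by linarith) p4
  nlinarith

lemma pointwise_ennreal {x y c γ : ℝ} (hx : 0 < x) (hy : 0 < y) (hc : 0 < c) (hγ : 0 < γ)
    (hγ1 : γ ≤ 1) {d : ℝ}
    (hd : |d| ≤ c * |x - y| * (1 / x + 1 / y + 1 / (x * y) + x ^ c + y ^ c)) :
    ‖d‖ₑ ≤ ENNReal.ofReal c * (‖x - y‖ₑ ^ γ *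
      (∑ i : Fin 5, ![3, ENNReal.ofReal (9/4 - γ / (1 + γ)) * (ENNReal.ofReal x)⁻¹ ^ (1 + γ),
        ENNReal.ofReal (9/4 - γ / (1 + γ)) * (ENNReal.ofReal y)⁻¹ ^ (1 + γ),
        ENNReal.ofReal (5/4 + γ / (1 + γ)) * ‖x‖ₑ ^ (max (1 / γ) (c + 1) - γ),
        ENNReal.ofReal (5/4 + γ / (1 + γ)) * ‖y‖ₑ ^ (max (1 / γ) (c + 1) - γ)] i)) := by
  have h := pointwise_real hx hy hc hγ hγ1
  set p := max (1 / γ) (c + 1) - γ with hp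
  have hp0 : 0 < p := by
    have := le_max_right (1/γ) (c+1); rw [hp]; linarith
  set η := γ / (1 + γ) with hη
  have hη0 : 0 ≤ η := by positivity
  have hη1 : η ≤ 1/2 := by rw [hη, div_le_div_iff₀ (by positivity) (by positivity)]; linarith
  have w1 : 0 ≤ 9/4 - η := by linarith
  have w2 : 0 ≤ 5/4 + η := by linarith
  have inv : ∀ z : ℝ, 0 < z → (ENNReal.ofReal z)⁻¹ ^ (1 + γ) = ENNReal.ofReal (z ^ (-(1 + γ))) := by
    intro z hz
    rw [ENNReal.inv_rpow, ← ENNReal.rpow_neg, ENNReal.ofReal_rpow_of_pos hz]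
  have pw : ∀ z : ℝ, 0 < z → ‖z‖ₑ ^ p = ENNReal.ofReal (z ^ p) := by
    intro z hz
    rw [Real.enorm_eq_ofReal hz.le, ENNReal.ofReal_rpow_of_pos hz]
  have dd : ‖x - y‖ₑ ^ γ = ENNReal.ofReal (|x - y| ^ γ) := by
    rw [Real.enorm_eq_ofReal_abs, ENNReal.ofReal_rpow_of_nonneg (abs_nonneg _) hγ.le]
  have x1 : 0 < x ^ (-(1 + γ)) := Real.rpow_pos_of_pos hx _
  have y1 : 0 < y ^ (-(1 + γ)) := Real.rpow_pos_of_pos hy _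
  have x2 : 0 < x ^ p := Real.rpow_pos_of_pos hx _
  have y2 : 0 < y ^ p := Real.rpow_pos_of_pos hy _
  have three : (3 : ℝ≥0∞) = ENNReal.ofReal 3 := by simp
  simp only [Fin.sum_univ_five]
  simp only [Matrix.cons_val]
  rw [inv x hx, inv y hy, pw x hx, pw y hy, dd, three, Real.enorm_eq_ofReal_abs,
    ← ENNReal.ofReal_mul w1, ← ENNReal.ofReal_mul w1, ← ENNReal.ofReal_mul w2,
    ← ENNReal.ofReal_mul w2, ← ENNReal.ofReal_add (by positivity) (by positivity),
    ← ENNReal.ofReal_add (by positivity) (by positivity),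
    ← ENNReal.ofReal_add (by positivity) (by positivity),
    ← ENNReal.ofReal_add (by positivity) (by positivity),
    ← ENNReal.ofReal_mul (by positivity), ← ENNReal.ofReal_mul hc.le]
  apply ENNReal.ofReal_le_ofReal
  refine hd.trans ?_
  rw [mul_assoc]
  refine mul_le_mul_of_nonneg_left (h.trans (le_of_eq ?_)) hc.le
  ring

lemma increment_bound
    {Ω : Type*} [MeasurableSpace Ω] (P : Measure Ω) [IsProbabilityMeasure P]
    (c : ℝ) (hc : 0 < c) (f : ℝ → ℝ) (X Y : Ω → ℝ)
    (hX : ∀ᵐ ω ∂P, 0 < X ω) (hY : ∀ᵐ ω ∂P, 0 < Y ω) (hXm : Measurable X) (hYm : Measurable Y)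
    (hf : ∀ x y : ℝ, 0 < x → 0 < y →
      |f x - f y| ≤ c * |x - y| * (1 / x + 1 / y + 1 / (x * y) + x ^ c + y ^ c))
    (δ q γ : ℝ) (hδ : 0 < δ) (hq : 0 < q) (hγ : 0 < γ) (hγ1 : γ ≤ 1) (S : ℝ≥0∞)
    (hS : ∀ Z ∈ ({X, Y} : Set (Ω → ℝ)), (1
                + ((∫⁻ ω, ((ENNReal.ofReal (Z ω))⁻¹) ^ (q * (1 + γ) * (1 + δ)) ∂P)
                      ^ (1 / (q * (1 + γ) * (1 + δ)))) ^ (1 + γ)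
                + (eLpNorm (fun ω => Z ω)
                      (ENNReal.ofReal (q * (1 + δ) * (max (1 / γ) (c + 1) - γ))) P)
                    ^ (max (1 / γ) (c + 1) - γ)) ≤ S) :
    eLpNorm (fun ω => f (X ω) - f (Y ω)) (ENNReal.ofReal q) P ≤
      ENNReal.ofReal (c * (7:ℝ) ^ (max 1 (1 / (q * (1 + δ))))) *
        (eLpNorm (fun ω => X ω - Y ω) (ENNReal.ofReal (q * γ * (1 / δ + 1))) P) ^ γ * S := by
  have key : ∀ (Z : Ω → ℝ) (s : ℝ), 0 < s → eLpNorm Z (ENNReal.ofReal s) P =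
      (∫⁻ ω, ‖Z ω‖ₑ ^ s ∂P) ^ (1 / s) := by
    intro Z s hs
    rw [eLpNorm_eq_lintegral_rpow_enorm_toReal (by simpa using hs) ENNReal.ofReal_ne_top,
      ENNReal.toReal_ofReal hs.le]
  have hS1 := hS X (by simp)
  have hS2 := hS Y (by simp)
  have hpw := fun (ω : Ω) (h1 : 0 < X ω) (h2 : 0 < Y ω) =>
    pointwise_ennreal h1 h2 hc hγ hγ1 (hf _ _ h1 h2)
  set p := max (1 / γ) (c + 1) - γ with hp
  have hp0 : 0 < p := by
    have := le_max_right (1/γ) (c+1); rw [hp]; linarith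
  set η := γ / (1 + γ) with hη
  have hη0 : 0 ≤ η := by positivity
  have hη1 : η ≤ 1/2 := by rw [hη, div_le_div_iff₀ (by positivity) (by positivity)]; linarith
  have hr : 0 < q * (1 + δ) := by positivity
  rw [key _ _ (by positivity)] at hS1 hS2
  rw [key _ _ hq, key _ _ (by positivity)]
  rw [show q * (1 + γ) * (1 + δ) = q * (1 + δ) * (1 + γ) by ring] at hS1 hS2
  set r := q * (1 + δ) with hrdef
  let Z : Fin 5 → Ω → ℝ≥0∞ := ![fun _ => 3,
    fun ω => ENNReal.ofReal (9/4 - η) * (ENNReal.ofReal (X ω))⁻¹ ^ (1 + γ),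
    fun ω => ENNReal.ofReal (9/4 - η) * (ENNReal.ofReal (Y ω))⁻¹ ^ (1 + γ),
    fun ω => ENNReal.ofReal (5/4 + η) * ‖X ω‖ₑ ^ p,
    fun ω => ENNReal.ofReal (5/4 + η) * ‖Y ω‖ₑ ^ p]
  have hXi : Measurable (fun ω => (ENNReal.ofReal (X ω))⁻¹) := hXm.ennreal_ofReal.inv
  have hYi : Measurable (fun ω => (ENNReal.ofReal (Y ω))⁻¹) := hYm.ennreal_ofReal.inv
  have hXe : Measurable (fun ω => ‖X ω‖ₑ) := hXm.enorm
  have hYe : Measurable (fun ω => ‖Y ω‖ₑ) := hYm.enorm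
  have hZ : ∀ i, Measurable (Z i) := by
    intro i
    fin_cases i
    · exact measurable_const
    · exact (hXi.pow_const _).const_mul _
    · exact (hYi.pow_const _).const_mul _
    · exact (hXe.pow_const _).const_mul _
    · exact (hYe.pow_const _).const_mul _
  have hG : Measurable (fun ω => ∑ i, Z i ω) := Finset.measurable_fun_sum _ (fun i _ => hZ i)
  have hD : Measurable (fun ω => ‖X ω - Y ω‖ₑ) := (hXm.sub hYm).enorm
  have hGn : (∫⁻ ω, (∑ i, Z i ω) ^ r ∂P) ^ (1 / r) ≤ (7 : ℝ≥0∞) ^ (max 1 (1 / r)) * S := by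
    refine (quasi_minkowski P hr Z hZ).trans ?_
    have e7 : (7 : ℝ≥0∞) ^ (max 1 (1 / r)) = 7 ^ (max 1 (1 / r) - 1) * 7 := by
      conv_rhs => rw [← ENNReal.rpow_one 7, ← ENNReal.rpow_mul, one_mul,
        ← ENNReal.rpow_add _ _ (by norm_num) (by norm_num)]
      simp
    rw [e7, mul_assoc]
    gcongr
    refine le_trans (le_of_eq ?_) (seven_aux hη0 hη1 hS1 hS2)
    rw [Fin.sum_univ_five]
    have hg1 : 0 < 1 + γ := by linarith
    congr 1
    · congr 1
      · congr 1
        · congr 1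
          · show (∫⁻ ω, (3:ℝ≥0∞) ^ r ∂P) ^ (1 / r) = 3
            rw [lintegral_const, measure_univ, mul_one, ← ENNReal.rpow_mul,
              mul_one_div_cancel hr.ne', ENNReal.rpow_one]
          · exact norm_const_mul' P hr hg1 _ _ hXi
        · exact norm_const_mul' P hr hg1 _ _ hYi
      · exact norm_const_mul' P hr hp0 _ _ hXe
    · exact norm_const_mul' P hr hp0 _ _ hYe
  have hmeas : Measurable (fun ω => ‖X ω - Y ω‖ₑ ^ γ * ∑ i, Z i ω) := (hD.pow_const _).mul hG
  calc (∫⁻ ω, ‖f (X ω) - f (Y ω)‖ₑ ^ q ∂P) ^ (1 / q)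
      ≤ (∫⁻ ω, (ENNReal.ofReal c * (‖X ω - Y ω‖ₑ ^ γ * ∑ i, Z i ω)) ^ q ∂P) ^ (1 / q) := by
        gcongr ?_ ^ (1 / q)
        apply lintegral_mono_ae
        filter_upwards [hX, hY] with ω h1 h2
        gcongr
        refine (hpw ω h1 h2).trans (le_of_eq ?_)
        simp only [Fin.sum_univ_five]
        rfl
    _ = ENNReal.ofReal c * (∫⁻ ω, (‖X ω - Y ω‖ₑ ^ γ * ∑ i, Z i ω) ^ q ∂P) ^ (1 / q) :=
        norm_const_mul P hq _ _ hmeas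
    _ ≤ ENNReal.ofReal c * (_ * ((7 : ℝ≥0∞) ^ (max 1 (1 / r)) * S)) := by
        gcongr
        exact (holder_aux P hq hγ hδ _ _ hD hG).trans (mul_le_mul_right hGn _)
    _ = _ := by
        rw [ENNReal.ofReal_mul hc.le, ← ENNReal.ofReal_rpow_of_pos (by norm_num)]
        simp only [ENNReal.ofReal_ofNat]
        ring

theorem Holder_regularity_transfer_under_singular_Lipschitz_condition
    {Ω : Type*} [MeasurableSpace Ω] (P : Measure Ω) [IsProbabilityMeasure P]
    (T : ℝ) (hT : 0 ≤ T) (c : ℝ) (hc : 0 < c)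
    (f : ℝ → ℝ) (hfmeas : Measurable f)
    (X : ℝ → Ω → ℝ) (hXnonneg : ∀ t ω, 0 ≤ X t ω)
    (hXmeas : ∀ t, Measurable (X t))
    (hXzero : ∀ t ∈ Set.Icc (0:ℝ) T, P {ω | X t ω = 0} = 0)
    (hf : ∀ x y : ℝ, 0 < x → 0 < y →
      |f x - f y| ≤ c * |x - y| * (1 / x + 1 / y + 1 / (x * y) + x ^ c + y ^ c)) :
    ∀ θ δ q γ : ℝ, 0 < θ → 0 < δ → 0 < q → 0 < γ → γ ≤ 1 →
      (⨆ s ∈ Set.Icc (0:ℝ) T, ⨆ t ∈ Set.Icc (0:ℝ) T, ⨆ _ : s ≠ t,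
          eLpNorm (fun ω => f (X t ω) - f (X s ω)) (ENNReal.ofReal q) P
            / ENNReal.ofReal (|t - s| ^ (γ * θ)))
        ≤ ENNReal.ofReal (c * (7:ℝ) ^ (max 1 (1 / (q * (1 + δ)))))
          * (⨆ s ∈ Set.Icc (0:ℝ) T, ⨆ t ∈ Set.Icc (0:ℝ) T, ⨆ _ : s ≠ t,
              eLpNorm (fun ω => X t ω - X s ω) (ENNReal.ofReal (q * γ * (1 / δ + 1))) P
                / ENNReal.ofReal (|t - s| ^ θ)) ^ γ
          * ⨆ u ∈ Set.Icc (0:ℝ) T,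
              (1
                + ((∫⁻ ω, ((ENNReal.ofReal (X u ω))⁻¹) ^ (q * (1 + γ) * (1 + δ)) ∂P)
                      ^ (1 / (q * (1 + γ) * (1 + δ)))) ^ (1 + γ)
                + (eLpNorm (fun ω => X u ω)
                      (ENNReal.ofReal (q * (1 + δ) * (max (1 / γ) (c + 1) - γ))) P)
                    ^ (max (1 / γ) (c + 1) - γ)) := by
  intro θ δ q γ hθ hδ hq hγ hγ1
  refine iSup₂_le fun s hs => iSup₂_le fun t ht => iSup_le fun hst => ?_
  have hpos : ∀ u ∈ Set.Icc (0:ℝ) T, ∀ᵐ ω ∂P, 0 < X u ω := by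
    intro u hu
    have : ∀ᵐ ω ∂P, ¬ (X u ω = 0) := by
      rw [ae_iff]; simpa using hXzero u hu
    filter_upwards [this] with ω hω
    exact lt_of_le_of_ne (hXnonneg u ω) (Ne.symm hω)
  set S := ⨆ u ∈ Set.Icc (0:ℝ) T,
              (1
                + ((∫⁻ ω, ((ENNReal.ofReal (X u ω))⁻¹) ^ (q * (1 + γ) * (1 + δ)) ∂P)
                      ^ (1 / (q * (1 + γ) * (1 + δ)))) ^ (1 + γ)
                + (eLpNorm (fun ω => X u ω)
                      (ENNReal.ofReal (q * (1 + δ) * (max (1 / γ) (c + 1) - γ))) P)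
                    ^ (max (1 / γ) (c + 1) - γ)) with hS
  set K := ⨆ s ∈ Set.Icc (0:ℝ) T, ⨆ t ∈ Set.Icc (0:ℝ) T, ⨆ _ : s ≠ t,
              eLpNorm (fun ω => X t ω - X s ω) (ENNReal.ofReal (q * γ * (1 / δ + 1))) P
                / ENNReal.ofReal (|t - s| ^ θ) with hK
  have hb := increment_bound P c hc f (X t) (X s) (hpos t ht) (hpos s hs) (hXmeas t) (hXmeas s)
    hf δ q γ hδ hq hγ hγ1 S (by
      rintro Z (rfl | rfl)
      · rw [hS]; exact le_iSup_of_le t (le_iSup_of_le ht le_rfl)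
      · rw [hS]; exact le_iSup_of_le s (le_iSup_of_le hs le_rfl))
  have hN : eLpNorm (fun ω => X t ω - X s ω) (ENNReal.ofReal (q * γ * (1 / δ + 1))) P
                / ENNReal.ofReal (|t - s| ^ θ) ≤ K := by
    rw [hK]
    exact le_iSup_of_le s (le_iSup_of_le hs (le_iSup_of_le t (le_iSup_of_le ht
      (le_iSup_of_le hst le_rfl))))
  have hd : 0 < |t - s| := abs_pos.2 (sub_ne_zero.2 (Ne.symm hst))
  have hdp : 0 < |t - s| ^ θ := Real.rpow_pos_of_pos hd _
  have e : ENNReal.ofReal (|t - s| ^ (γ * θ)) = ENNReal.ofReal (|t - s| ^ θ) ^ γ := by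
    rw [ENNReal.ofReal_rpow_of_pos hdp, ← Real.rpow_mul hd.le, mul_comm]
  have h0 : ENNReal.ofReal (|t - s| ^ θ) ≠ 0 := by simpa using hdp
  rw [e]
  have hN2 := ENNReal.rpow_le_rpow hN hγ.le
  rw [ENNReal.div_rpow_of_nonneg _ _ hγ.le] at hN2
  calc _ ≤ _ := ENNReal.div_le_div_right hb _
    _ = ENNReal.ofReal (c * (7:ℝ) ^ (max 1 (1 / (q * (1 + δ))))) *
        ((eLpNorm (fun ω => X t ω - X s ω) (ENNReal.ofReal (q * γ * (1 / δ + 1))) P) ^ γ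
          / ENNReal.ofReal (|t - s| ^ θ) ^ γ) * S := by
        simp only [div_eq_mul_inv]; ring
    _ ≤ _ := by gcongr

end
end

section
/- Let T ∈ [0,∞), c₁, c₂, c₃ ∈ [0,∞), let σ : [0,∞) → [0,∞) be Borel measurable with σ(z) ≥ c₁√z / (1 + c₃·z^{c₂}) for all z ∈ [0,∞), let (Ω, 𝓕, ℙ) be a probability space, and let X, Y : Ω → [0,∞) be random variables. Then for all p ∈ (0,∞] and r ∈ [0,∞] it holds that ‖ ∫_Y^X 1/σ(z) dz ‖_{L^p(Ω;ℝ)} ≤ (2/c₁) · ‖ 1 + c₃·X^{c₂} + c₃·Y^{c₂} ‖_{L^{p(1+1/r)}(Ω;ℝ)} · min{ ‖ |Y−X|^{1/2} ‖_{L^{p(1+r)}(Ω;ℝ)}, ‖ |Y−X|/(√Y + √X) ‖_{L^{p(1+r)}(Ω;ℝ)} }, where ∫_Y^X 1/σ(z) dz denotes ∫_{Y(ω)}^{X(ω)} 1/σ(z) dz (a signed Lebesgue integral, with value computed in the extended reals when σ vanishes). -/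
open MeasureTheory ProbabilityTheory Filter Set
open scoped ENNReal NNReal

noncomputable section

/-- pointwise bound for ordered endpoints -/
theorem aux_ordered (c₁ c₂ c₃ : ℝ) (hc₁ : 0 < c₁) (hc₂ : 0 ≤ c₂) (hc₃ : 0 ≤ c₃)
    (σ : ℝ → ℝ)
    (hσlow : ∀ z : ℝ, 0 ≤ z → c₁ * Real.sqrt z / (1 + c₃ * z ^ c₂) ≤ σ z)
    (a b : ℝ) (ha : 0 ≤ a) (hab : a ≤ b) :
    ‖∫ z in a..b, (σ z)⁻¹‖ ≤ (2 / c₁) * (1 + c₃ * b ^ c₂) * (Real.sqrt b - Real.sqrt a) := by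
  have hb : 0 ≤ b := ha.trans hab
  have hK : 0 ≤ c₃ * b ^ c₂ := by positivity
  have key : ‖∫ z in a..b, (σ z)⁻¹‖
      ≤ ∫ z in a..b, ((1 + c₃ * b ^ c₂) / c₁) * z ^ (-(1/2) : ℝ) := by
    apply intervalIntegral.norm_integral_le_of_norm_le hab
    · refine Eventually.of_forall fun z hz => ?_
      have hz0 : 0 < z := lt_of_le_of_lt ha hz.1
      have hs : 0 < Real.sqrt z := Real.sqrt_pos.2 hz0
      have hD : 0 < 1 + c₃ * z ^ c₂ := by positivity
      have hle : 1 + c₃ * z ^ c₂ ≤ 1 + c₃ * b ^ c₂ := by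
        gcongr
        exact hz.2
      have hlow := hσlow z hz0.le
      have hpos : 0 < c₁ * Real.sqrt z / (1 + c₃ * z ^ c₂) := by positivity
      have hσ : 0 < σ z := hpos.trans_le hlow
      rw [Real.norm_of_nonneg (inv_nonneg.2 hσ.le), Real.rpow_neg hz0.le, ← Real.sqrt_eq_rpow]
      calc (σ z)⁻¹ ≤ (c₁ * Real.sqrt z / (1 + c₃ * z ^ c₂))⁻¹ := inv_anti₀ hpos hlow
        _ = (1 + c₃ * z ^ c₂) / c₁ * (Real.sqrt z)⁻¹ := by field_simp
        _ ≤ _ := by gcongr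
    · exact (intervalIntegral.intervalIntegrable_rpow' (by norm_num)).const_mul _
  refine key.trans (le_of_eq ?_)
  rw [intervalIntegral.integral_const_mul, integral_rpow (Or.inl (by norm_num))]
  have h : (-(1/2) : ℝ) + 1 = 1 / 2 := by norm_num
  rw [h, ← Real.sqrt_eq_rpow, ← Real.sqrt_eq_rpow]
  field_simp

theorem aux_sqrt (a b : ℝ) (ha : 0 ≤ a) (hab : a ≤ b) :
    Real.sqrt b - Real.sqrt a = (b - a) / (Real.sqrt b + Real.sqrt a) := by
  have hb : 0 ≤ b := ha.trans hab
  rcases hb.eq_or_lt with h | h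
  · have : a = 0 := by linarith
    subst this; subst h; simp
  · have := Real.sqrt_pos.2 h
    have h2 := Real.sqrt_nonneg a
    rw [eq_div_iff (by positivity)]
    nlinarith [Real.sq_sqrt ha, Real.sq_sqrt hb]

theorem aux_pointwise (c₁ c₂ c₃ : ℝ) (hc₁ : 0 < c₁) (hc₂ : 0 ≤ c₂) (hc₃ : 0 ≤ c₃)
    (σ : ℝ → ℝ)
    (hσlow : ∀ z : ℝ, 0 ≤ z → c₁ * Real.sqrt z / (1 + c₃ * z ^ c₂) ≤ σ z)
    (x y : ℝ) (hx : 0 ≤ x) (hy : 0 ≤ y) :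
    ‖∫ z in y..x, (σ z)⁻¹‖ ≤ (2 / c₁) * ((1 + c₃ * x ^ c₂ + c₃ * y ^ c₂) *
      (|y - x| / (Real.sqrt y + Real.sqrt x))) := by
  have hX : 0 ≤ c₃ * x ^ c₂ := by positivity
  have hY : 0 ≤ c₃ * y ^ c₂ := by positivity
  rcases le_total y x with h | h
  · refine (aux_ordered c₁ c₂ c₃ hc₁ hc₂ hc₃ σ hσlow y x hy h).trans ?_
    rw [aux_sqrt y x hy h, abs_sub_comm, abs_of_nonneg (sub_nonneg.2 h),
      add_comm (Real.sqrt x), mul_assoc]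
    have : 0 ≤ (x - y) / (Real.sqrt y + Real.sqrt x) :=
      div_nonneg (sub_nonneg.2 h) (by positivity)
    exact mul_le_mul_of_nonneg_left
      (mul_le_mul_of_nonneg_right (by linarith) this) (by positivity)
  · rw [intervalIntegral.integral_symm, norm_neg]
    refine (aux_ordered c₁ c₂ c₃ hc₁ hc₂ hc₃ σ hσlow x y hx h).trans ?_
    rw [aux_sqrt x y hx h, abs_of_nonneg (sub_nonneg.2 h), mul_assoc]
    have : 0 ≤ (y - x) / (Real.sqrt y + Real.sqrt x) :=
      div_nonneg (sub_nonneg.2 h) (by positivity)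
    exact mul_le_mul_of_nonneg_left
      (mul_le_mul_of_nonneg_right (by linarith) this) (by positivity)

theorem aux_min (x y : ℝ) (hx : 0 ≤ x) (hy : 0 ≤ y) :
    |y - x| / (Real.sqrt y + Real.sqrt x) ≤ |y - x| ^ ((1:ℝ) / 2) := by
  rw [← Real.sqrt_eq_rpow]
  have h1 := Real.sqrt_nonneg x
  have h2 := Real.sqrt_nonneg y
  apply div_le_of_le_mul₀ (by positivity) (by positivity)
  have h3 : Real.sqrt |y - x| ≤ Real.sqrt y + Real.sqrt x := by
    apply Real.sqrt_le_iff.2 ⟨by positivity, ?_⟩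
    rw [abs_le]
    constructor <;> nlinarith [Real.sq_sqrt hx, Real.sq_sqrt hy, mul_nonneg h1 h2]
  calc |y - x| = Real.sqrt |y - x| * Real.sqrt |y - x| :=
        (Real.mul_self_sqrt (abs_nonneg _)).symm
    _ ≤ _ := by gcongr

theorem aux_holder (p r : ℝ≥0∞) (hp : 0 < p) :
    ENNReal.HolderTriple (p * (1 + r⁻¹)) (p * (1 + r)) p := by
  constructor
  have key : (1 + r⁻¹)⁻¹ + (1 + r)⁻¹ = 1 := by
    rcases eq_or_ne r 0 with rfl | h0
    · simp
    rcases eq_or_ne r ⊤ with rfl | ht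
    · simp
    have e : (1 + r⁻¹)⁻¹ = r * (1 + r)⁻¹ := by
      have : (1 + r⁻¹) = (1 + r) * r⁻¹ := by
        rw [add_mul, one_mul, ENNReal.mul_inv_cancel h0 ht, add_comm]
      rw [this, ENNReal.mul_inv (Or.inr (by simpa using h0)) (Or.inr (by simpa using ht)),
        inv_inv, mul_comm]
    rw [e, ← add_one_mul, add_comm r]
    exact ENNReal.mul_inv_cancel (by simp) (by simp [ht])
  rcases eq_or_ne p ⊤ with rfl | ht
  · rw [ENNReal.top_mul (by simp), ENNReal.top_mul (by simp)]; simp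
  rw [ENNReal.mul_inv (Or.inl hp.ne') (Or.inl ht), ENNReal.mul_inv (Or.inl hp.ne') (Or.inl ht),
    ← mul_add, key, mul_one]

theorem Lp_bound_for_integral_of_inverse_diffusion_coefficient
    {Ω : Type*} [MeasurableSpace Ω] (P : Measure Ω) [IsProbabilityMeasure P]
    (T : ℝ) (hT : 0 ≤ T) (c₁ c₂ c₃ : ℝ) (hc₁ : 0 ≤ c₁) (hc₂ : 0 ≤ c₂) (hc₃ : 0 ≤ c₃)
    (σ : ℝ → ℝ) (hσmeas : Measurable σ) (hσnonneg : ∀ z : ℝ, 0 ≤ z → 0 ≤ σ z)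
    (hσlow : ∀ z : ℝ, 0 ≤ z → c₁ * Real.sqrt z / (1 + c₃ * z ^ c₂) ≤ σ z)
    (X Y : Ω → ℝ) (hXmeas : Measurable X) (hYmeas : Measurable Y)
    (hXnonneg : ∀ ω, 0 ≤ X ω) (hYnonneg : ∀ ω, 0 ≤ Y ω) :
    ∀ p r : ℝ≥0∞, 0 < p →
      eLpNorm (fun ω => ∫ z in Y ω..X ω, (σ z)⁻¹) p P
        ≤ (2 / ENNReal.ofReal c₁)
          * eLpNorm (fun ω => 1 + c₃ * (X ω) ^ c₂ + c₃ * (Y ω) ^ c₂) (p * (1 + r⁻¹)) P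
          * min
              (eLpNorm (fun ω => |Y ω - X ω| ^ ((1:ℝ) / 2)) (p * (1 + r)) P)
              (eLpNorm (fun ω => |Y ω - X ω| / (Real.sqrt (Y ω) + Real.sqrt (X ω)))
                (p * (1 + r)) P) := by
  intro p r hp
  have hmin : eLpNorm (fun ω => |Y ω - X ω| / (Real.sqrt (Y ω) + Real.sqrt (X ω)))
      (p * (1 + r)) P ≤ eLpNorm (fun ω => |Y ω - X ω| ^ ((1:ℝ) / 2)) (p * (1 + r)) P := by
    refine eLpNorm_mono_real fun ω => ?_
    rw [Real.norm_of_nonneg (by positivity)]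
    exact aux_min _ _ (hXnonneg ω) (hYnonneg ω)
  rw [min_eq_right hmin]
  have hAm : Measurable (fun ω => 1 + c₃ * (X ω) ^ c₂ + c₃ * (Y ω) ^ c₂) := by fun_prop
  have hBm : Measurable (fun ω => |Y ω - X ω| / (Real.sqrt (Y ω) + Real.sqrt (X ω))) := by
    have : Measurable (fun ω => |Y ω - X ω|) := (hYmeas.sub hXmeas).abs
    exact this.div (hYmeas.sqrt.add hXmeas.sqrt)
  rcases hc₁.eq_or_lt with h0 | hpos
  · by_cases hB : eLpNorm (fun ω => |Y ω - X ω| / (Real.sqrt (Y ω) + Real.sqrt (X ω)))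
      (p * (1 + r)) P = 0
    · rw [eLpNorm_eq_zero_iff hBm.aestronglyMeasurable (mul_ne_zero hp.ne' (by simp))] at hB
      have : (fun ω => ∫ z in Y ω..X ω, (σ z)⁻¹) =ᵐ[P] 0 := by
        filter_upwards [hB] with ω hω
        have hXY : Y ω = X ω := by
          rcases div_eq_zero_iff.1 hω with h | h
          · exact sub_eq_zero.1 (abs_eq_zero.1 h)
          · have h1 := Real.sqrt_nonneg (X ω)
            have h2 := Real.sqrt_nonneg (Y ω)
            rw [(Real.sqrt_eq_zero (hYnonneg ω)).1 (by linarith),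
              (Real.sqrt_eq_zero (hXnonneg ω)).1 (by linarith)]
        simp [hXY]
      rw [eLpNorm_congr_ae this]
      simp
    · have hA : eLpNorm (fun ω => 1 + c₃ * (X ω) ^ c₂ + c₃ * (Y ω) ^ c₂) (p * (1 + r⁻¹)) P ≠ 0 := by
        rw [Ne, eLpNorm_eq_zero_iff hAm.aestronglyMeasurable (mul_ne_zero hp.ne' (by simp))]
        intro h
        obtain ⟨ω, hω⟩ := h.exists
        have h1 : 0 ≤ c₃ * (X ω) ^ c₂ := mul_nonneg hc₃ (Real.rpow_nonneg (hXnonneg ω) _)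
        have h2 : 0 ≤ c₃ * (Y ω) ^ c₂ := mul_nonneg hc₃ (Real.rpow_nonneg (hYnonneg ω) _)
        simp only [Pi.zero_apply] at hω
        linarith
      rw [← h0, ENNReal.ofReal_zero, ENNReal.div_zero (by simp), ENNReal.top_mul hA,
        ENNReal.top_mul hB]
      exact le_top
  · have := aux_holder p r hp
    calc eLpNorm (fun ω => ∫ z in Y ω..X ω, (σ z)⁻¹) p P
        ≤ eLpNorm (fun ω => (2 / c₁) * ((1 + c₃ * (X ω) ^ c₂ + c₃ * (Y ω) ^ c₂) *
            (|Y ω - X ω| / (Real.sqrt (Y ω) + Real.sqrt (X ω))))) p P :=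
          eLpNorm_mono_real fun ω => aux_pointwise c₁ c₂ c₃ hpos hc₂ hc₃ σ hσlow _ _
            (hXnonneg ω) (hYnonneg ω)
      _ = ‖(2 / c₁ : ℝ)‖ₑ * eLpNorm (fun ω => ((1 + c₃ * (X ω) ^ c₂ + c₃ * (Y ω) ^ c₂) *
            (|Y ω - X ω| / (Real.sqrt (Y ω) + Real.sqrt (X ω))))) p P :=
          eLpNorm_const_smul (2 / c₁ : ℝ) _ p P
      _ ≤ _ := by
          rw [mul_assoc]
          have e : ‖(2 / c₁ : ℝ)‖ₑ = 2 / ENNReal.ofReal c₁ := by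
            rw [Real.enorm_of_nonneg (by positivity), ENNReal.ofReal_div_of_pos hpos]
            simp
          rw [e]
          refine mul_le_mul_right ?_ _
          have H := eLpNorm_le_eLpNorm_mul_eLpNorm'_of_norm (μ := P) (p := p * (1 + r⁻¹))
            (q := p * (1 + r)) (r := p) hAm.aestronglyMeasurable hBm.aestronglyMeasurable
            (fun a b : ℝ => a * b) 1
            (Eventually.of_forall fun ω => by rw [norm_mul, NNReal.coe_one, one_mul])
          rw [ENNReal.coe_one, one_mul] at H
          exact H

end
end

section
/- Let (H, ⟨·,·⟩_H, ‖·‖_H) be a real Hilbert space, let I ⊆ H be a non-empty set, let L ∈ [0,∞), let μ : I → H satisfy ⟨x−y, μ(x)−μ(y)⟩_H ≤ L‖x−y‖_H² for all x, y ∈ I, and for t ∈ (0,∞) with tL < 1 define F_t : I → H by F_t(x) := x − t·μ(x). Then for every t ∈ (0,∞) with tL < 1 the map F_t is injective, and for all such t and all x, y ∈ F_t(I) it holds that ‖F_t^{−1}(x) − F_t^{−1}(y)‖_H ≤ (1/(1−tL))·‖x−y‖_H, where F_t^{−1} : F_t(I) → I denotes the inverse of F_t onto its image. -/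
open MeasureTheory Filter Set
open scoped RealInnerProductSpace

noncomputable section

theorem injectivity_and_Lipschitz_inverse_of_implicit_Euler_map
    {H : Type*} [NormedAddCommGroup H] [InnerProductSpace ℝ H] [CompleteSpace H]
    (I : Set H) (hI : I.Nonempty) (L : ℝ) (hL : 0 ≤ L)
    (μ : H → H)
    (hμ : ∀ x ∈ I, ∀ y ∈ I, ⟪x - y, μ x - μ y⟫ ≤ L * ‖x - y‖ ^ 2) :
    ∀ t : ℝ, 0 < t → t * L < 1 →
      Set.InjOn (fun x => x - t • μ x) I ∧
      ∀ x ∈ (fun x => x - t • μ x) '' I, ∀ y ∈ (fun x => x - t • μ x) '' I,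
        haveI : Nonempty H := ⟨0⟩
        ‖Function.invFunOn (fun x => x - t • μ x) I x
            - Function.invFunOn (fun x => x - t • μ x) I y‖
          ≤ (1 / (1 - t * L)) * ‖x - y‖ := by
  intro t ht htL
  have key : ∀ a ∈ I, ∀ b ∈ I,
      (1 - t * L) * ‖a - b‖ ≤ ‖(a - t • μ a) - (b - t • μ b)‖ := by
    intro a ha b hb
    rcases (norm_nonneg (a - b)).eq_or_lt with h0 | h0
    · rw [← h0, mul_zero]
      exact norm_nonneg _
    · have h1 := hμ a ha b hb
      have h2 : ⟪a - b, (a - t • μ a) - (b - t • μ b)⟫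
          = ‖a - b‖ ^ 2 - t * ⟪a - b, μ a - μ b⟫ := by
        have : (a - t • μ a) - (b - t • μ b) = (a - b) - t • (μ a - μ b) := by
          rw [smul_sub]; abel
        rw [this, inner_sub_right, inner_smul_right, real_inner_self_eq_norm_sq]
      have h3 := real_inner_le_norm (a - b) ((a - t • μ a) - (b - t • μ b))
      have h4 := mul_le_mul_of_nonneg_left h1 ht.le
      refine le_of_mul_le_mul_left ?_ h0
      nlinarith
  have hpos : 0 < 1 - t * L := by linarith
  refine ⟨?_, ?_⟩
  · intro a ha b hb hab
    have h := key a ha b hb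
    have hab' : a - t • μ a = b - t • μ b := hab
    rw [hab', sub_self, norm_zero] at h
    have h5 : ‖a - b‖ ≤ 0 := by
      by_contra hc
      push Not at hc
      have := mul_pos hpos hc
      linarith
    exact sub_eq_zero.mp (norm_le_zero_iff.mp h5)
  · intro x hx y hy
    haveI : Nonempty H := ⟨0⟩
    have h := key _ (Function.invFunOn_mem hx) _ (Function.invFunOn_mem hy)
    have ex := Function.invFunOn_eq hx
    have ey := Function.invFunOn_eq hy
    rw [ex, ey] at h
    rw [one_div, ← div_eq_inv_mul, le_div_iff₀ hpos, mul_comm]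
    exact h

end
end
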